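/- arXiv:2110.11675 — 4 statements merged into one kernel-verified Lean document; each statement's English description precedes it below -/
import Mathlib

section
/- Let φ_1, …, φ_N be contractive similitudes on ℝ^d, let C = C_1 ∪ ⋯ ∪ C_m (m ≥ 2) be a union of pairwise disjoint nonempty compact connected sets C_j, and let K be the attractor of the IFS with condensation {C; φ_1, …, φ_N}. Suppose there exist points a, b ∈ K and a_j, b_j ∈ C_j (1 ≤ j ≤ m) such that (K,{a,b}) = A_1 + A_2 + ⋯ + A_{m+N} is a zipper decomposition, where A_1, …, A_{m+N} is a rearrangement (bijective relabeling) of the buttons (C_1,{a_1,b_1}), …, (C_m,{a_m,b_m}), (φ_1(K),{φ_1(a),φ_1(b)}), …, (φ_N(K),{φ_N(a),φ_N(b)}). If (i) both A_1 and A_{m+N} belong to {(C_1,{a_1,b_1}), …, (C_m,{a_m,b_m})}, and (ii) dim_H E > 1, where E is the attractor of {φ_1, …, φ_N} and dim_H denotes Hausdorff dimension, then K is a Whitney set. -/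
open Set MeasureTheory

noncomputable section

/-- A compact connected set `E ⊆ ℝ^d` is a Whitney set if there is a `C¹` function
`f : ℝ^d → ℝ` whose derivative vanishes on `E` but which is not constant on `E`. -/
def IsWhitneySet {d : ℕ} (E : Set (EuclideanSpace ℝ (Fin d))) : Prop :=
  IsCompact E ∧ IsConnected E ∧
    ∃ f : EuclideanSpace ℝ (Fin d) → ℝ,
      ContDiff ℝ 1 f ∧ (∀ x ∈ E, fderiv ℝ f x = 0) ∧
        ¬ ∀ x ∈ E, ∀ y ∈ E, f x = f y

/-- A zipper decomposition of the button `(K, {a,b})` into the sub-buttons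
`(A ℓ, {p ℓ, q ℓ})`, `ℓ = 0, …, k-1`:  `K = ⋃ A ℓ`, each `A ℓ` is a compact subset of `K`
containing its endpoints `p ℓ, q ℓ`; the chain of endpoints starts at `a`, ends at `b`,
consecutive buttons share exactly the common endpoint (`q ℓ = p (ℓ+1)` and the
intersection is a singleton), and non-consecutive buttons are disjoint. -/
def IsZipperDecomp {d : ℕ} (K : Set (EuclideanSpace ℝ (Fin d)))
    (a b : EuclideanSpace ℝ (Fin d)) {k : ℕ}
    (A : Fin k → Set (EuclideanSpace ℝ (Fin d)))
    (p q : Fin k → EuclideanSpace ℝ (Fin d)) : Prop :=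
  K = (⋃ ℓ, A ℓ) ∧
  (∀ ℓ, IsCompact (A ℓ) ∧ A ℓ ⊆ K ∧ p ℓ ∈ A ℓ ∧ q ℓ ∈ A ℓ) ∧
  (∀ ℓ : Fin k, (ℓ : ℕ) = 0 → p ℓ = a) ∧
  (∀ ℓ : Fin k, (ℓ : ℕ) = k - 1 → q ℓ = b) ∧
  (∀ ℓ ℓ' : Fin k, (ℓ : ℕ) + 1 = (ℓ' : ℕ) →
    q ℓ = p ℓ' ∧ ∃ x, A ℓ ∩ A ℓ' = {x}) ∧
  (∀ ℓ ℓ' : Fin k, (ℓ : ℕ) + 1 < (ℓ' : ℕ) → A ℓ ∩ A ℓ' = ∅)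

namespace WhitneyAux

/-- Inverse of a similitude of Euclidean space. -/
theorem exists_inverse {d : ℕ} (f : EuclideanSpace ℝ (Fin d) → EuclideanSpace ℝ (Fin d)) (r : ℝ)
    (hr : 0 < r) (hf : ∀ x y, dist (f x) (f y) = r * dist x y) :
    ∃ g : EuclideanSpace ℝ (Fin d) → EuclideanSpace ℝ (Fin d),
      ContDiff ℝ 1 g ∧ (∀ x, g (f x) = x) ∧ (∀ x y, dist (g x) (g y) = r⁻¹ * dist x y) := by
  have hiso : Isometry (fun x => r⁻¹ • f x) := by
    refine Isometry.of_dist_eq fun x y => ?_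
    rw [dist_smul₀, hf, Real.norm_eq_abs, abs_of_pos (inv_pos.2 hr)]
    field_simp
  let T := hiso.affineIsometryOfStrictConvexSpace
  have hT : ∀ x, T x = r⁻¹ • f x := fun x => rfl
  let e := T.toAffineIsometryEquiv rfl
  have he : ∀ x, e x = r⁻¹ • f x := fun x => rfl
  refine ⟨fun y => e.symm (r⁻¹ • y), ?_, ?_, ?_⟩
  · have h1 : ContDiff ℝ 1 (e.symm : EuclideanSpace ℝ (Fin d) → EuclideanSpace ℝ (Fin d)) :=
      (⟨e.symm.toAffineEquiv.toAffineMap, e.symm.continuous⟩ :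
        EuclideanSpace ℝ (Fin d) →ᴬ[ℝ] EuclideanSpace ℝ (Fin d)).contDiff
    exact h1.comp (contDiff_const_smul _)
  · intro x
    simp [← he]
  · intro x y
    rw [e.symm.dist_map, dist_smul₀, Real.norm_eq_abs, abs_of_pos (inv_pos.2 hr)]

open scoped ENNReal in
theorem exists_exponent {X : Type*} [MetricSpace X] {N : ℕ} (φ : Fin N → X → X)
    (ρ : Fin N → ℝ) (hρ : ∀ i, ρ i ∈ Set.Ioo (0 : ℝ) 1)
    (hsim : ∀ i x y, dist (φ i x) (φ i y) = ρ i * dist x y)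
    (E : Set X) (hEcomp : IsCompact E) (hE : E = ⋃ i, φ i '' E) (hdim : 1 < dimH E) :
    ∃ s : ℝ, 1 < s ∧ 1 < ∑ i, ρ i ^ s := by
  let _ : MeasurableSpace X := borel X
  have : BorelSpace X := ⟨rfl⟩
  obtain ⟨s', hs1, hs2⟩ := ENNReal.lt_iff_exists_nnreal_btwn.1 hdim
  have hs1' : 1 < (s' : ℝ) := by exact_mod_cast hs1
  refine ⟨s', hs1', ?_⟩
  by_contra hcon
  rw [not_lt] at hcon
  have htop := hausdorffMeasure_of_lt_dimH hs2
  set D := Metric.ediam E with hD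
  have hDfin : D ≠ ⊤ := hEcomp.isBounded.ediam_ne_top
  -- uniform ratio bound
  obtain ⟨θ, hθ0, hθ1, hθ⟩ : ∃ θ : ℝ, 0 ≤ θ ∧ θ < 1 ∧ ∀ i, ρ i ≤ θ := by
    rcases isEmpty_or_nonempty (Fin N) with h | h
    · exact ⟨0, le_rfl, one_pos, fun i => (h.false i).elim⟩
    · obtain ⟨i0, hi0⟩ := Finite.exists_max ρ
      exact ⟨ρ i0, (hρ i0).1.le, (hρ i0).2, hi0⟩
  have hed : ∀ i (s : Set X), Metric.ediam (φ i '' s) ≤ ENNReal.ofReal (ρ i) * Metric.ediam s := by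
    intro i s
    have hl : LipschitzWith (Real.toNNReal (ρ i)) (φ i) := by
      refine LipschitzWith.of_dist_le_mul fun x y => ?_
      rw [hsim, Real.coe_toNNReal _ (hρ i).1.le]
    exact hl.ediam_image_le s
  have hcov : ∀ n : ℕ, ∃ (ι : Type) (_ : Fintype ι) (t : ι → Set X),
      E ⊆ (⋃ j, t j) ∧ (∀ j, Metric.ediam (t j) ≤ ENNReal.ofReal θ ^ n * D) ∧
      ∑ j, Metric.ediam (t j) ^ (s' : ℝ) ≤ D ^ (s' : ℝ) := by
    intro n
    induction n with
    | zero =>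
      refine ⟨Unit, inferInstance, fun _ => E, ?_, ?_, ?_⟩
      · intro x hx; exact mem_iUnion.2 ⟨(), hx⟩
      · intro j; simp [hD]
      · simp [hD]
    | succ n ih =>
      obtain ⟨ι, hι, t, h1, h2, h3⟩ := ih
      refine ⟨Fin N × ι, inferInstance, fun j => φ j.1 '' t j.2, ?_, ?_, ?_⟩
      · intro x hx
        rw [hE] at hx
        obtain ⟨i, y, hy, rfl⟩ := mem_iUnion.1 hx
        obtain ⟨j, hj⟩ := mem_iUnion.1 (h1 hy)
        exact mem_iUnion.2 ⟨(i, j), y, hj, rfl⟩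
      · rintro ⟨i, j⟩
        refine (hed i _).trans ?_
        rw [pow_succ', mul_assoc]
        exact mul_le_mul' (ENNReal.ofReal_le_ofReal (hθ i)) (h2 j)
      · rw [Fintype.sum_prod_type]
        calc ∑ i, ∑ j, Metric.ediam (φ i '' t j) ^ (s' : ℝ)
            ≤ ∑ i, ∑ j, ENNReal.ofReal (ρ i ^ (s' : ℝ)) * Metric.ediam (t j) ^ (s' : ℝ) := by
              refine Finset.sum_le_sum fun i _ => Finset.sum_le_sum fun j _ => ?_
              refine (ENNReal.rpow_le_rpow (hed i _) (by positivity)).trans ?_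
              rw [ENNReal.mul_rpow_of_nonneg _ _ (by positivity),
                ENNReal.ofReal_rpow_of_pos (hρ i).1]
          _ = (∑ i, ENNReal.ofReal (ρ i ^ (s' : ℝ))) * ∑ j, Metric.ediam (t j) ^ (s' : ℝ) := by
              rw [Finset.sum_mul]
              exact Finset.sum_congr rfl fun i _ => by rw [Finset.mul_sum]
          _ ≤ 1 * D ^ (s' : ℝ) := by
              refine mul_le_mul' ?_ h3
              rw [← ENNReal.ofReal_sum_of_nonneg
                (fun i _ => Real.rpow_nonneg (hρ i).1.le _)]
              exact (ENNReal.ofReal_le_ofReal hcon).trans (by simp)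
          _ = D ^ (s' : ℝ) := one_mul _
  choose ι hι t h1 h2 h3 using hcov
  have hr : Filter.Tendsto (fun n : ℕ => ENNReal.ofReal θ ^ n * D) Filter.atTop (nhds 0) := by
    have := ENNReal.tendsto_pow_atTop_nhds_zero_of_lt_one (r := ENNReal.ofReal θ) (by simpa using hθ1)
    simpa using ENNReal.Tendsto.mul_const this (Or.inr hDfin)
  have hle := Measure.hausdorffMeasure_le_liminf_sum (s' : ℝ) E
    (fun n : ℕ => ENNReal.ofReal θ ^ n * D) hr t (Filter.Eventually.of_forall h2)
    (Filter.Eventually.of_forall h1)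
  have hle2 : Filter.liminf (fun n => ∑ i, Metric.ediam (t n i) ^ (s' : ℝ)) Filter.atTop
      ≤ D ^ (s' : ℝ) := by
    refine Filter.liminf_le_of_frequently_le' ?_
    exact (Filter.Eventually.of_forall h3).frequently
  have : D ^ (s' : ℝ) = ⊤ := top_le_iff.1 (htop ▸ hle.trans hle2)
  exact (ENNReal.rpow_ne_top_of_nonneg (by positivity) hDfin) this

/-- `Bd φ a b e w`: the word `w` is an address of the end point `e` through end points. -/
def Bd {X : Type*} {N : ℕ} (φ : Fin N → X → X) (a b : X) : X → List (Fin N) → Prop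
  | _, [] => True
  | e, i :: w => ∃ e', (e' = a ∨ e' = b) ∧ φ i e' = e ∧ Bd φ a b e' w

theorem Bd.pre {X : Type*} {N : ℕ} {φ : Fin N → X → X} {a b : X} :
    ∀ {e : X} {w v : List (Fin N)}, Bd φ a b e (w ++ v) → Bd φ a b e w
  | _, [], _, _ => trivial
  | _, _ :: _, _, ⟨e', h1, h2, h3⟩ => ⟨e', h1, h2, Bd.pre h3⟩

theorem Bd.unique {X : Type*} {N : ℕ} {φ : Fin N → X → X} {a b : X}
    (hinj : ∀ i, Function.Injective (φ i))
    (huniq : ∀ e e1 e2 i j, (e = a ∨ e = b) → (e1 = a ∨ e1 = b) → (e2 = a ∨ e2 = b) →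
      φ i e1 = e → φ j e2 = e → i = j) :
    ∀ (w : List (Fin N)) {e : X} {i j : Fin N}, (e = a ∨ e = b) →
      Bd φ a b e (w ++ [i]) → Bd φ a b e (w ++ [j]) → i = j
  | [], e, i, j, he, ⟨e1, h1, h2, _⟩, ⟨e2, h1', h2', _⟩ => huniq e e1 e2 i j he h1 h1' h2 h2'
  | l :: w, e, i, j, _, ⟨e1, h1, h2, h3⟩, ⟨e2, _, h2', h3'⟩ => by
      have h : e1 = e2 := hinj l (h2.trans h2'.symm)
      subst h
      exact Bd.unique hinj huniq w h1 h3 h3'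

/-- Sum of `ω` over all extensions of a word by `j` letters. -/
def vsum {N : ℕ} (ω : List (Fin N) → ℝ) : ℕ → List (Fin N) → ℝ
  | 0, c => ω c
  | j + 1, c => ∑ i, vsum ω j (c ++ [i])

theorem vsum_mono {N : ℕ} {ω ω' : List (Fin N) → ℝ} (h : ∀ w, ω w ≤ ω' w) (j : ℕ) :
    ∀ c, vsum ω j c ≤ vsum ω' j c := by
  induction j with
  | zero => exact h
  | succ j ih => intro c; exact Finset.sum_le_sum fun i _ => ih _

theorem vsum_add {N : ℕ} (ω ω' : List (Fin N) → ℝ) (j : ℕ) :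
    ∀ c, vsum (fun w => ω w + ω' w) j c = vsum ω j c + vsum ω' j c := by
  induction j with
  | zero => intro c; rfl
  | succ j ih => intro c; simp only [vsum, ih, Finset.sum_add_distrib]

theorem vsum_smul {N : ℕ} (ω : List (Fin N) → ℝ) (t : ℝ) (j : ℕ) :
    ∀ c, vsum (fun w => t * ω w) j c = t * vsum ω j c := by
  induction j with
  | zero => intro c; rfl
  | succ j ih => intro c; simp only [vsum, ih, Finset.mul_sum]

theorem vsum_nonneg {N : ℕ} {ω : List (Fin N) → ℝ} (h : ∀ w, 0 ≤ ω w) (j : ℕ) :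
    ∀ c, 0 ≤ vsum ω j c := by
  induction j with
  | zero => exact h
  | succ j ih => intro c; exact Finset.sum_nonneg fun i _ => ih _

/-- The product weight of a word. -/
def wprod {N : ℕ} (τ : Fin N → ℝ) (w : List (Fin N)) : ℝ := (w.map τ).prod

theorem wprod_nonneg {N : ℕ} {τ : Fin N → ℝ} (h : ∀ i, 0 ≤ τ i) (w : List (Fin N)) :
    0 ≤ wprod τ w := by
  refine List.prod_nonneg ?_
  intro x hx
  obtain ⟨i, _, rfl⟩ := List.mem_map.1 hx
  exact h i

theorem wprod_le_one {N : ℕ} {τ : Fin N → ℝ} (h : ∀ i, 0 ≤ τ i) (h1 : ∀ i, τ i ≤ 1) :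
    ∀ (w : List (Fin N)), wprod τ w ≤ 1
  | [] => by simp [wprod]
  | i :: w => by
      have := wprod_le_one h h1 w
      have h0 := wprod_nonneg h w
      simp only [wprod, List.map_cons, List.prod_cons] at *
      exact mul_le_one₀ (h1 i) h0 this

theorem vsum_wprod {N : ℕ} (τ : Fin N → ℝ) (j : ℕ) :
    ∀ c, vsum (wprod τ) j c = wprod τ c * (∑ i, τ i) ^ j := by
  induction j with
  | zero => intro c; simp [vsum]
  | succ j ih =>
    intro c
    simp only [vsum, ih]
    rw [← Finset.sum_mul]
    simp only [wprod, List.map_append, List.prod_append, List.map_cons, List.map_nil,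
      List.prod_cons, List.prod_nil, mul_one]
    rw [← Finset.mul_sum, pow_succ]
    ring

/-- The consistent weights built from block weights `ω` of blocks of length `n`. -/
def wt {N : ℕ} (n : ℕ) (ω : List (Fin N) → ℝ) : List (Fin N) → ℕ → List (Fin N) → ℝ
  | c, j, [] => vsum ω j c
  | c, 0, i :: u => ω c * wt n ω [i] (n - 1) u
  | c, j + 1, i :: u => wt n ω (c ++ [i]) j u

theorem wt_consistent {N : ℕ} {n : ℕ} (hn : 1 ≤ n) {ω : List (Fin N) → ℝ}
    (hω : vsum ω n [] = 1) :
    ∀ (u c : List (Fin N)) (j : ℕ), wt n ω c j u = ∑ i, wt n ω c j (u ++ [i])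
  | [], c, 0 => by
      obtain ⟨n, rfl⟩ : ∃ n', n = n' + 1 := ⟨n - 1, by omega⟩
      simp only [wt, vsum, List.nil_append, Nat.add_sub_cancel]
      simp only [vsum, List.nil_append] at hω
      rw [← Finset.mul_sum, hω, mul_one]
  | [], c, j + 1 => by simp [wt, vsum]
  | i :: u, c, 0 => by
      simp only [wt, List.cons_append]
      rw [← Finset.mul_sum, ← wt_consistent hn hω u]
  | i :: u, c, j + 1 => by
      simp only [wt, List.cons_append]
      exact wt_consistent hn hω u _ _

theorem wt_nonneg {N : ℕ} {n : ℕ} {ω : List (Fin N) → ℝ} (h : ∀ w, 0 ≤ ω w) :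
    ∀ (u c : List (Fin N)) (j : ℕ), 0 ≤ wt n ω c j u
  | [], c, j => by simpa only [wt] using vsum_nonneg h j c
  | i :: u, c, 0 => by
      simp only [wt]
      exact mul_nonneg (h _) (wt_nonneg h u _ _)
  | i :: u, c, j + 1 => by
      simp only [wt]
      exact wt_nonneg h u _ _

theorem wt_le {N : ℕ} {n : ℕ} {ω : List (Fin N) → ℝ} {τ : Fin N → ℝ}
    (hn : 1 ≤ n)
    (hτ : ∀ i, 0 ≤ τ i) (hS : 1 ≤ ∑ i, τ i)
    (h0 : ∀ w, 0 ≤ ω w) (h : ∀ w, ω w ≤ wprod τ w) :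
    ∀ (u c : List (Fin N)) (j : ℕ), j ≤ n →
      wt n ω c j u ≤ (∑ i, τ i) ^ n * (wprod τ c * wprod τ u)
  | [], c, j, hj => by
      have h1 := vsum_mono h j c
      rw [vsum_wprod] at h1
      have h2 : (∑ i, τ i) ^ j ≤ (∑ i, τ i) ^ n := pow_le_pow_right₀ hS hj
      have h3 := wprod_nonneg hτ c
      have : wprod τ ([] : List (Fin N)) = 1 := by simp [wprod]
      rw [this]
      simp only [wt]
      nlinarith
  | i :: u, c, 0, _ => by
      have h1 := wt_le hn hτ hS h0 h u [i] (n - 1) (by omega)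
      have h2 := wt_nonneg (n := n) h0 u [i] (n - 1)
      have h3 := wprod_nonneg hτ c
      have e : wprod τ (i :: u) = wprod τ [i] * wprod τ u := by simp [wprod]
      simp only [wt]
      rw [e]
      calc ω c * wt n ω [i] (n - 1) u
          ≤ wprod τ c * ((∑ i, τ i) ^ n * (wprod τ [i] * wprod τ u)) :=
            mul_le_mul (h c) h1 h2 h3
        _ = _ := by ring
  | i :: u, c, j + 1, hj => by
      have h1 := wt_le hn hτ hS h0 h u (c ++ [i]) j (by omega)
      have e : wprod τ (i :: u) = τ i * wprod τ u := by simp [wprod]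
      have e' : wprod τ (c ++ [i]) = wprod τ c * τ i := by simp [wprod]
      simp only [wt]
      rw [e]
      rw [e'] at h1
      linarith

theorem wt_zero_aux {X : Type*} {N : ℕ} {φ : Fin N → X → X} {a b : X} {n : ℕ}
    {ω : List (Fin N) → ℝ}
    (hz : ∀ e w, (e = a ∨ e = b) → Bd φ a b e w → w.length = n → ω w = 0) :
    ∀ (v c : List (Fin N)) (j : ℕ) (e : X), (e = a ∨ e = b) → Bd φ a b e (c ++ v) →
      j ≤ v.length → c.length + j = n → wt n ω c j v = 0
  | [], c, j, e, he, hB, hj, hc => by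
      have : j = 0 := by simpa using hj
      subst this
      simp only [wt, vsum]
      exact hz e c he (by simpa using hB) (by simpa using hc)
  | i :: v, c, 0, e, he, hB, hj, hc => by
      simp only [wt]
      rw [hz e c he hB.pre (by simpa using hc), zero_mul]
  | i :: v, c, j + 1, e, he, hB, hj, hc => by
      simp only [wt]
      refine wt_zero_aux hz v (c ++ [i]) j e he (by simpa using hB) (by simpa using hj) ?_
      simp; omega

theorem wt_zero {X : Type*} {N : ℕ} {φ : Fin N → X → X} {a b : X} {n : ℕ} (hn : 1 ≤ n)
    {ω : List (Fin N) → ℝ}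
    (hz : ∀ e w, (e = a ∨ e = b) → Bd φ a b e w → w.length = n → ω w = 0) :
    ∀ (v c : List (Fin N)) (j : ℕ) (e : X), (e = a ∨ e = b) → Bd φ a b e v →
      j + n + 1 ≤ v.length → wt n ω c j v = 0
  | [], c, j, e, he, hB, hj => by simp at hj
  | i :: v, c, 0, e, he, hB, hj => by
      simp only [wt]
      rw [wt_zero_aux hz v [i] (n - 1) e he hB, mul_zero]
      · simp at hj; omega
      · simp; omega
  | i :: v, c, j + 1, e, he, hB, hj => by
      simp only [wt]
      obtain ⟨e', h1, h2, h3⟩ := hB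
      exact wt_zero hn hz v _ j e' h1 h3 (by simp at hj; omega)

theorem wt_zero_append {X : Type*} {N : ℕ} {φ : Fin N → X → X} {a b : X} {n : ℕ} (hn : 1 ≤ n)
    {ω : List (Fin N) → ℝ}
    (hz : ∀ e w, (e = a ∨ e = b) → Bd φ a b e w → w.length = n → ω w = 0) :
    ∀ (u v c : List (Fin N)) (j : ℕ) (e : X), j ≤ n → (e = a ∨ e = b) → Bd φ a b e v →
      2 * n + 1 ≤ v.length → wt n ω c j (u ++ v) = 0
  | [], v, c, j, e, hj, he, hB, hv => wt_zero hn hz v c j e he hB (by omega)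
  | i :: u, v, c, 0, e, hj, he, hB, hv => by
      simp only [wt, List.cons_append]
      rw [wt_zero_append hn hz u v _ _ e (by omega) he hB hv, mul_zero]
  | i :: u, v, c, j + 1, e, hj, he, hB, hv => by
      simp only [wt, List.cons_append]
      exact wt_zero_append hn hz u v _ _ e (by omega) he hB hv

/-- Admissible weights on the tree of words. -/
structure Good {X : Type*} {N : ℕ} (φ : Fin N → X → X) (a b : X) (L : ℕ) (τ : Fin N → ℝ)
    (M : ℝ) (R : List (Fin N) → ℝ) : Prop where
  nonneg : ∀ u, 0 ≤ R u
  cons : ∀ u, R u = ∑ i, R (u ++ [i])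
  le : ∀ u, R u ≤ M * wprod τ u
  zero : ∀ u v e, (e = a ∨ e = b) → Bd φ a b e v → L ≤ v.length → R (u ++ v) = 0

theorem Good.sub {X : Type*} {N : ℕ} {φ : Fin N → X → X} {a b : X} {L : ℕ} {τ : Fin N → ℝ}
    {M : ℝ} {R : List (Fin N) → ℝ} (h : Good φ a b L τ M R) (i : Fin N) :
    Good φ a b L τ (M * τ i) (fun u => R (i :: u)) where
  nonneg u := h.nonneg _
  cons u := h.cons (i :: u)
  le u := by
    refine (h.le _).trans (le_of_eq ?_)
    simp [wprod]; ring
  zero u v e he hB hL := h.zero (i :: u) v e he hB hL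

theorem exists_good {X : Type*} {N : ℕ} {φ : Fin N → X → X} {a b : X}
    (hinj : ∀ i, Function.Injective (φ i))
    (huniq : ∀ e e1 e2 i j, (e = a ∨ e = b) → (e1 = a ∨ e1 = b) → (e2 = a ∨ e2 = b) →
      φ i e1 = e → φ j e2 = e → i = j)
    {τ : Fin N → ℝ} (hτ : ∀ i, 0 ≤ τ i) (hτ1 : ∀ i, τ i ≤ 1) (hS : 1 < ∑ i, τ i) :
    ∃ L M R, Good φ a b L τ M R ∧ R [] = 1 := by
  classical
  obtain ⟨n, hn3⟩ := pow_unbounded_of_one_lt 3 hS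
  have hn : 1 ≤ n := by
    rcases Nat.eq_zero_or_pos n with rfl | h
    · norm_num at hn3
    · exact h
  let β : X → List (Fin N) → ℝ := fun e w => if Bd φ a b e w then 1 else 0
  have hβ0 : ∀ e w, 0 ≤ β e w := fun e w => by simp only [β]; split_ifs <;> norm_num
  have hβ : ∀ e, (e = a ∨ e = b) → ∀ j c, vsum (β e) j c ≤ β e c := by
    intro e he j
    induction j with
    | zero => intro c; exact le_rfl
    | succ j ih =>
      intro c
      simp only [vsum]
      refine (Finset.sum_le_sum fun i _ => ih (c ++ [i])).trans ?_
      by_cases hex : ∃ i, Bd φ a b e (c ++ [i])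
      · obtain ⟨i, hi⟩ := hex
        rw [Finset.sum_eq_single i]
        · simp [β, hi, hi.pre]
        · intro j _ hj
          have : ¬ Bd φ a b e (c ++ [j]) := fun h => hj (Bd.unique hinj huniq c he h hi)
          simp [β, this]
        · simp
      · push Not at hex
        rw [Finset.sum_eq_zero]
        · exact hβ0 _ _
        · intro i _
          simp [β, hex i]
  let ω0 : List (Fin N) → ℝ := fun w => if Bd φ a b a w ∨ Bd φ a b b w then 0 else wprod τ w
  have hω00 : ∀ w, 0 ≤ ω0 w := fun w => by
    simp only [ω0]; split_ifs
    · exact le_rfl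
    · exact wprod_nonneg hτ w
  have hω0le : ∀ w, ω0 w ≤ wprod τ w := fun w => by
    simp only [ω0]; split_ifs
    · exact wprod_nonneg hτ w
    · exact le_rfl
  have hge : ∀ w, wprod τ w ≤ ω0 w + (β a w + β b w) := by
    intro w
    have h1 := wprod_le_one hτ hτ1 w
    have h2 := hβ0 a w
    have h3 := hβ0 b w
    by_cases ha : Bd φ a b a w
    · have : β a w = 1 := by simp [β, ha]
      have := hω00 w
      linarith
    · by_cases hb : Bd φ a b b w
      · have : β b w = 1 := by simp [β, hb]
        have := hω00 w
        linarith
      · have : ω0 w = wprod τ w := by simp [ω0, ha, hb]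
        linarith
  have hV : 1 ≤ vsum ω0 n [] := by
    have h1 := vsum_mono hge n []
    rw [vsum_wprod, vsum_add, vsum_add] at h1
    have h2 := hβ a (Or.inl rfl) n []
    have h3 := hβ b (Or.inr rfl) n []
    have h4 : β a [] = 1 := by simp [β, Bd]
    have h5 : β b [] = 1 := by simp [β, Bd]
    have h6 : wprod τ ([] : List (Fin N)) = 1 := by simp [wprod]
    rw [h6] at h1
    linarith
  set T := vsum ω0 n [] with hT
  have hT0 : 0 < T := by linarith
  let ω : List (Fin N) → ℝ := fun w => T⁻¹ * ω0 w
  have hω1 : vsum ω n [] = 1 := by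
    rw [vsum_smul, ← hT, inv_mul_cancel₀ hT0.ne']
  have hωn : ∀ w, 0 ≤ ω w := fun w => mul_nonneg (inv_nonneg.2 hT0.le) (hω00 w)
  have hωle : ∀ w, ω w ≤ wprod τ w := fun w => by
    have : T⁻¹ ≤ 1 := inv_le_one_of_one_le₀ hV
    have h1 := hω00 w
    have h2 := hω0le w
    simp only [ω]
    nlinarith
  have hz : ∀ e w, (e = a ∨ e = b) → Bd φ a b e w → w.length = n → ω w = 0 := by
    intro e w he hB _
    have : ω0 w = 0 := by
      rcases he with rfl | rfl <;> simp [ω0, hB]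
    simp [ω, this]
  refine ⟨2 * n + 1, (∑ i, τ i) ^ n, fun u => wt n ω [] n u, ⟨?_, ?_, ?_, ?_⟩, ?_⟩
  · intro u; exact wt_nonneg hωn _ _ _
  · intro u; exact wt_consistent hn hω1 u _ _
  · intro u
    have := wt_le hn hτ hS.le hωn hωle u [] n le_rfl
    have h6 : wprod τ ([] : List (Fin N)) = 1 := by simp [wprod]
    rwa [h6, one_mul] at this
  · intro u v e he hB hL
    exact wt_zero_append hn hz u v [] n e le_rfl he hB hL
  · simp only [wt]; exact hω1

/-- The combinatorial and geometric data of the zipper decomposition. -/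
structure Zip (d N k : ℕ) where
  φ : Fin N → EuclideanSpace ℝ (Fin d) → EuclideanSpace ℝ (Fin d)
  ψ : Fin N → EuclideanSpace ℝ (Fin d) → EuclideanSpace ℝ (Fin d)
  ρ : Fin N → ℝ
  ρ_pos : ∀ i, 0 < ρ i
  ρ_lt : ∀ i, ρ i < 1
  ψ_dist : ∀ i x y, dist (ψ i x) (ψ i y) = (ρ i)⁻¹ * dist x y
  ψ_smooth : ∀ i, ContDiff ℝ 1 (ψ i)
  ψφ : ∀ i x, ψ i (φ i x) = x
  K : Set (EuclideanSpace ℝ (Fin d))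
  K_comp : IsCompact K
  a : EuclideanSpace ℝ (Fin d)
  b : EuclideanSpace ℝ (Fin d)
  hab : a ≠ b
  A : Fin k → Set (EuclideanSpace ℝ (Fin d))
  p : Fin k → EuclideanSpace ℝ (Fin d)
  q : Fin k → EuclideanSpace ℝ (Fin d)
  κ : Fin k → Option (Fin N)
  κ_sum : ∀ g : Fin N → ℝ, ∑ l, (κ l).elim 0 g = ∑ i, g i
  K_eq : K = ⋃ l, A l
  A_comp : ∀ l, IsCompact (A l)
  A_img : ∀ l i, κ l = some i → A l = φ i '' K
  p_mem : ∀ l, p l ∈ A l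
  q_mem : ∀ l, q l ∈ A l
  fl : Fin k → Bool
  fl_true : ∀ l i, κ l = some i → fl l = true → p l = φ i a ∧ q l = φ i b
  fl_false : ∀ l i, κ l = some i → fl l = false → p l = φ i b ∧ q l = φ i a
  first : Fin k
  last : Fin k
  first_val : (first : ℕ) = 0
  last_val : (last : ℕ) = k - 1
  p_first : p first = a
  q_last : q last = b
  κ_first : κ first = none
  κ_last : κ last = none
  qp : ∀ l l' : Fin k, (l : ℕ) + 1 = l' → q l = p l'
  inter : ∀ l l' : Fin k, (l : ℕ) + 1 = l' → ∀ x, x ∈ A l → x ∈ A l' → x = q l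
  disj : ∀ l l' : Fin k, (l : ℕ) + 1 < l' → ∀ x, x ∈ A l → x ∉ A l'

theorem exists_thickening_aux {X : Type*} [MetricSpace X] [ProperSpace X] {P Q O : Set X}
    (hP : IsCompact P) (hQ : IsCompact Q) (hPn : P.Nonempty) (hQn : Q.Nonempty) (hO : IsOpen O)
    (h : ∀ x, x ∈ P → x ∈ Q → x ∈ O) :
    ∀ᶠ δ in nhdsWithin (0 : ℝ) (Ioi 0), ∀ x, x ∈ Metric.thickening δ P →
      x ∈ Metric.thickening δ Q → x ∈ O := by
  have hZ : IsCompact (Metric.cthickening 1 P ∩ Oᶜ) :=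
    (hP.cthickening).inter_right hO.isClosed_compl
  suffices ∃ δ0 > 0, ∀ δ ∈ Ioc (0 : ℝ) δ0, ∀ x, x ∈ Metric.thickening δ P →
      x ∈ Metric.thickening δ Q → x ∈ O by
    obtain ⟨δ0, h0, h1⟩ := this
    filter_upwards [Ioc_mem_nhdsGT h0] with δ hδ using h1 δ hδ
  rcases (Metric.cthickening 1 P ∩ Oᶜ).eq_empty_or_nonempty with he | hne
  · refine ⟨1, one_pos, fun δ hδ x hx _ => ?_⟩
    by_contra hxO
    have : x ∈ Metric.cthickening 1 P ∩ Oᶜ :=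
      ⟨Metric.thickening_subset_cthickening _ _ (Metric.thickening_mono hδ.2 _ hx), hxO⟩
    rw [he] at this
    exact this
  · obtain ⟨x0, hx0, hmin⟩ := hZ.exists_isMinOn hne
      (f := fun x => Metric.infDist x P + Metric.infDist x Q)
      ((Metric.continuous_infDist_pt P).add (Metric.continuous_infDist_pt Q)).continuousOn
    set c := Metric.infDist x0 P + Metric.infDist x0 Q with hc
    have hc0 : 0 < c := by
      have h1 : 0 ≤ Metric.infDist x0 P := Metric.infDist_nonneg
      have h2 : 0 ≤ Metric.infDist x0 Q := Metric.infDist_nonneg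
      rcases (add_nonneg h1 h2).lt_or_eq with h3 | h3
      · exact h3
      · exfalso
        have e1 : Metric.infDist x0 P = 0 := by linarith
        have e2 : Metric.infDist x0 Q = 0 := by linarith
        exact hx0.2 (h x0 ((hP.isClosed.mem_iff_infDist_zero hPn).2 e1)
          ((hQ.isClosed.mem_iff_infDist_zero hQn).2 e2))
    refine ⟨min 1 (c / 2), by positivity, fun δ hδ x hx hx' => ?_⟩
    by_contra hxO
    have hxZ : x ∈ Metric.cthickening 1 P ∩ Oᶜ :=
      ⟨Metric.thickening_subset_cthickening _ _
        (Metric.thickening_mono (hδ.2.trans (min_le_left _ _)) _ hx), hxO⟩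
    have h1 : c ≤ Metric.infDist x P + Metric.infDist x Q := hmin hxZ
    have h2 : Metric.infDist x P < δ := by
      obtain ⟨y, hy, hd⟩ := Metric.mem_thickening_iff.1 hx
      exact (Metric.infDist_le_dist_of_mem hy).trans_lt hd
    have h3 : Metric.infDist x Q < δ := by
      obtain ⟨y, hy, hd⟩ := Metric.mem_thickening_iff.1 hx'
      exact (Metric.infDist_le_dist_of_mem hy).trans_lt hd
    have h4 : δ ≤ c / 2 := hδ.2.trans (min_le_right _ _)
    linarith

/-- Cut-off functions adapted to a zipper. -/
structure Part {d N k : ℕ} (S : Zip d N k) (η0 η' : ℝ) where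
  χ : Fin k → EuclideanSpace ℝ (Fin d) → ℝ
  h0 : EuclideanSpace ℝ (Fin d) → ℝ
  h0_smooth : ContDiff ℝ 1 h0
  h0_nonneg : ∀ x, 0 ≤ h0 x
  h0_le : ∀ x, h0 x ≤ 1
  h0_a : ∀ x, dist x S.a < η0 → h0 x = 0
  h0_b : ∀ x, dist x S.b < η0 → h0 x = 1
  G0 : ℝ
  h0_bd : ∀ x, ‖fderiv ℝ h0 x‖ ≤ G0
  χ_smooth : ∀ l, ContDiff ℝ 1 (χ l)
  χ_nonneg : ∀ l x, 0 ≤ χ l x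
  χ_sum : ∀ x, ∑ l, χ l x = 1
  Λ : ℝ
  χ_bd : ∀ x, ∑ l, ‖fderiv ℝ (χ l) x‖ ≤ Λ
  χ_a : ∀ l x, dist x S.a < η0 → χ l x ≠ 0 → S.a ∈ S.A l
  χ_b : ∀ l x, dist x S.b < η0 → χ l x ≠ 0 → S.b ∈ S.A l
  Nb : Fin k → Set (EuclideanSpace ℝ (Fin d))
  A_Nb : ∀ l, S.A l ⊆ Nb l
  χ_K : ∀ l x, x ∈ S.K → x ∈ tsupport (χ l) → x ∈ Nb l
  act : ∀ l l' : Fin k, l < l' → ∀ x, x ∈ Nb l → x ∈ Nb l' →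
    (l : ℕ) + 1 = l' ∧ dist x (S.q l) < η'

theorem Zip.mem_a {d N k : ℕ} (S : Zip d N k) : S.a ∈ S.A S.first := by
  have := S.p_mem S.first; rwa [S.p_first] at this

theorem Zip.mem_b {d N k : ℕ} (S : Zip d N k) : S.b ∈ S.A S.last := by
  have := S.q_mem S.last; rwa [S.q_last] at this

open scoped Manifold ContDiff in
theorem exists_part {d N k : ℕ} (S : Zip d N k) :
    ∃ η0 > 0, ∀ η' > 0, Nonempty (Part S η0 η') := by
  classical
  have hsep : ∀ e : EuclideanSpace ℝ (Fin d), ∀ᶠ η in nhdsWithin (0 : ℝ) (Ioi 0),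
      ∀ l, e ∉ S.A l → 2 * η < Metric.infDist e (S.A l) := by
    intro e
    rw [Filter.eventually_all]
    intro l
    by_cases hl : e ∈ S.A l
    · exact Filter.Eventually.of_forall fun _ h => (h hl).elim
    · have hpos : 0 < Metric.infDist e (S.A l) :=
        ((S.A_comp l).isClosed.notMem_iff_infDist_pos ⟨_, S.p_mem l⟩).1 hl
      filter_upwards [Ioo_mem_nhdsGT (half_pos hpos)] with η hη _
      linarith [hη.2]
  have hdab : 0 < dist S.a S.b := dist_pos.2 S.hab
  obtain ⟨η0, ⟨hA, hBs⟩, hη0, hη3⟩ := (((hsep S.a).and (hsep S.b)).and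
    (Ioo_mem_nhdsGT (show (0 : ℝ) < dist S.a S.b / 3 by positivity))).exists
  refine ⟨η0, hη0, fun η' hη' => ?_⟩
  have hact : ∀ᶠ δ in nhdsWithin (0 : ℝ) (Ioi 0), ∀ l l' : Fin k, l < l' →
      ∀ x, x ∈ Metric.thickening δ (S.A l) → x ∈ Metric.thickening δ (S.A l') →
      (l : ℕ) + 1 = l' ∧ dist x (S.q l) < η' := by
    rw [Filter.eventually_all]
    intro l
    rw [Filter.eventually_all]
    intro l'
    by_cases hc : (l : ℕ) + 1 = l'
    · filter_upwards [exists_thickening_aux (S.A_comp l) (S.A_comp l') ⟨_, S.p_mem l⟩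
        ⟨_, S.p_mem l'⟩ (Metric.isOpen_ball (x := S.q l) (ε := η')) (fun x hx hx' => by
          rw [S.inter l l' hc x hx hx']; exact Metric.mem_ball_self hη')] with δ hδ _ x h1 h2
      exact ⟨hc, hδ x h1 h2⟩
    · by_cases hlt : l < l'
      · have hlt' : (l : ℕ) + 1 < l' := by
          have : (l : ℕ) < l' := hlt
          omega
        filter_upwards [exists_thickening_aux (S.A_comp l) (S.A_comp l') ⟨_, S.p_mem l⟩
          ⟨_, S.p_mem l'⟩ isOpen_empty (fun x hx hx' => (S.disj l l' hlt' x hx hx').elim)]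
          with δ hδ _ x h1 h2
        exact (hδ x h1 h2).elim
      · exact Filter.Eventually.of_forall fun _ h => (hlt h).elim
  obtain ⟨δ, hact, hδ0, hδη⟩ := (hact.and (Ioo_mem_nhdsGT hη0)).exists
  have hδ0 : 0 < δ := hδ0
  have hδη : δ < η0 := hδη
  let U : Fin k → Set (EuclideanSpace ℝ (Fin d)) := fun l =>
    Metric.thickening δ (S.A l) ∪
    ((if l = S.first then (Metric.cthickening (δ / 2) S.K ∪ Metric.closedBall S.b η0)ᶜ else ∅) ∪
    (if l = S.last then Metric.ball S.b (2 * η0) ∩ (Metric.cthickening (δ / 2) S.K)ᶜ else ∅))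
  have hUo : ∀ l, IsOpen (U l) := by
    intro l
    refine Metric.isOpen_thickening.union (IsOpen.union ?_ ?_)
    · split_ifs
      · exact (Metric.isClosed_cthickening.union Metric.isClosed_closedBall).isOpen_compl
      · exact isOpen_empty
    · split_ifs
      · exact Metric.isOpen_ball.inter Metric.isClosed_cthickening.isOpen_compl
      · exact isOpen_empty
  have hUcov : (univ : Set (EuclideanSpace ℝ (Fin d))) ⊆ ⋃ l, U l := by
    intro x _
    by_cases hx : x ∈ Metric.cthickening (δ / 2) S.K
    · have hx' := Metric.cthickening_subset_thickening' hδ0 (half_lt_self hδ0) S.K hx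
      obtain ⟨y, hy, hd⟩ := Metric.mem_thickening_iff.1 hx'
      rw [S.K_eq] at hy
      obtain ⟨l, hl⟩ := mem_iUnion.1 hy
      exact mem_iUnion.2 ⟨l, Or.inl (Metric.mem_thickening_iff.2 ⟨y, hl, hd⟩)⟩
    · by_cases hxb : x ∈ Metric.ball S.b (2 * η0)
      · refine mem_iUnion.2 ⟨S.last, Or.inr (Or.inr ?_)⟩
        rw [if_pos rfl]; exact ⟨hxb, hx⟩
      · refine mem_iUnion.2 ⟨S.first, Or.inr (Or.inl ?_)⟩
        rw [if_pos rfl]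
        rintro (h | h)
        · exact hx h
        · apply hxb
          rw [Metric.mem_closedBall] at h
          rw [Metric.mem_ball]
          linarith
  obtain ⟨f, hf⟩ := SmoothPartitionOfUnity.exists_isSubordinate 𝓘(ℝ, EuclideanSpace ℝ (Fin d))
    isClosed_univ U hUo hUcov
  have hsm : ∀ l, ContDiff ℝ 1 (f l : EuclideanSpace ℝ (Fin d) → ℝ) := fun l =>
    ((f l).contMDiff.contDiff).of_le (by exact_mod_cast le_top)
  have hsum : ∀ x, ∑ l, f l x = 1 := by
    intro x
    have := f.sum_eq_one (mem_univ x)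
    rwa [finsum_eq_sum_of_fintype] at this
  have hmemU : ∀ l x, f l x ≠ 0 → x ∈ U l := fun l x hx => hf l (subset_tsupport _ hx)
  have hbd1 : ∀ l, l ≠ S.first → ∃ B, ∀ x, ‖fderiv ℝ (f l) x‖ ≤ B := by
    intro l hl
    have hUb : Bornology.IsBounded (U l) := by
      refine Bornology.IsBounded.union (S.A_comp l).isBounded.thickening ?_
      rw [if_neg hl, empty_union]
      split_ifs
      · exact Metric.isBounded_ball.subset inter_subset_left
      · exact Bornology.isBounded_empty
    have hcs : HasCompactSupport (f l : EuclideanSpace ℝ (Fin d) → ℝ) :=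
      Metric.isCompact_of_isClosed_isBounded (isClosed_tsupport _) (hUb.subset (hf l))
    exact (hcs.fderiv ℝ).exists_bound_of_continuous ((hsm l).continuous_fderiv one_ne_zero)
  have hdsum : ∀ x, ∑ l, fderiv ℝ (f l) x = 0 := by
    intro x
    have h1 : fderiv ℝ (fun y => ∑ l, f l y) x = ∑ l, fderiv ℝ (f l) x :=
      fderiv_fun_sum fun l _ => (hsm l).differentiable one_ne_zero x
    rw [← h1]
    have : (fun y => ∑ l, f l y) = fun _ => (1 : ℝ) := funext hsum
    rw [this]; simp
  have hbd2 : ∀ l, ∃ B, ∀ x, ‖fderiv ℝ (f l) x‖ ≤ B := by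
    intro l
    by_cases hl : l = S.first
    · have : ∀ l', ∃ B, l' ≠ S.first → ∀ x, ‖fderiv ℝ (f l') x‖ ≤ B := by
        intro l'
        by_cases h : l' = S.first
        · exact ⟨0, fun h' => (h' h).elim⟩
        · obtain ⟨B, hB⟩ := hbd1 l' h
          exact ⟨B, fun _ => hB⟩
      choose B hB using this
      refine ⟨∑ l' ∈ Finset.univ.erase S.first, B l', fun x => ?_⟩
      have h1 := hdsum x
      rw [← Finset.add_sum_erase _ _ (Finset.mem_univ S.first)] at h1
      rw [hl, eq_neg_of_add_eq_zero_left h1, norm_neg]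
      refine (norm_sum_le _ _).trans (Finset.sum_le_sum fun l' hl' => ?_)
      exact hB l' (Finset.ne_of_mem_erase hl') x
    · exact hbd1 l hl
  choose B hB using hbd2
  let hb : ContDiffBump S.b := ⟨η0, 2 * η0, hη0, by linarith⟩
  have hhb : ContDiff ℝ 1 (hb : EuclideanSpace ℝ (Fin d) → ℝ) := hb.contDiff
  obtain ⟨G0, hG0⟩ := (hb.hasCompactSupport.fderiv ℝ).exists_bound_of_continuous
    (hhb.continuous_fderiv one_ne_zero)
  have hclose : ∀ (e : EuclideanSpace ℝ (Fin d)) l x,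
      (e ∉ S.A l → 2 * η0 < Metric.infDist e (S.A l)) → dist x e < η0 →
      x ∈ Metric.thickening δ (S.A l) → e ∈ S.A l := by
    intro e l x h hx hxt
    by_contra hne
    have h1 := h hne
    obtain ⟨y, hy, hd⟩ := Metric.mem_thickening_iff.1 hxt
    have h2 := Metric.infDist_le_dist_of_mem (x := e) hy
    have h3 := dist_triangle e x y
    rw [dist_comm e x] at h3
    linarith
  refine ⟨{ χ := fun l => f l, h0 := hb, h0_smooth := hhb, h0_nonneg := fun x => hb.nonneg,
            h0_le := fun x => hb.le_one, h0_a := ?_, h0_b := ?_, G0 := G0, h0_bd := hG0,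
            χ_smooth := hsm, χ_nonneg := fun l x => f.nonneg l x, χ_sum := hsum,
            Λ := ∑ l, B l, χ_bd := fun x => Finset.sum_le_sum fun l _ => hB l x,
            χ_a := ?_, χ_b := ?_, Nb := fun l => Metric.thickening δ (S.A l),
            A_Nb := fun l => Metric.self_subset_thickening hδ0 _,
            χ_K := ?_, act := hact }⟩
  · intro x hx
    refine hb.zero_of_le_dist ?_
    have := dist_triangle S.a x S.b
    rw [dist_comm S.a x] at this
    change 2 * η0 ≤ dist x S.b
    linarith
  · intro x hx
    exact hb.one_of_mem_closedBall (Metric.mem_closedBall.2 hx.le)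
  · intro l x hx hχ
    rcases hmemU l x hχ with h | h | h
    · exact hclose _ l x (hA l) hx h
    · split_ifs at h with hl
      · rw [hl]; exact S.mem_a
      · exact h.elim
    · split_ifs at h with hl
      · exfalso
        have h1 := Metric.mem_ball.1 h.1
        have := dist_triangle S.a x S.b
        rw [dist_comm S.a x] at this
        linarith
      · exact h.elim
  · intro l x hx hχ
    rcases hmemU l x hχ with h | h | h
    · exact hclose _ l x (hBs l) hx h
    · split_ifs at h with hl
      · exact (h (Or.inr (Metric.mem_closedBall.2 hx.le))).elim
      · exact h.elim
    · split_ifs at h with hl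
      · rw [hl]; exact S.mem_b
      · exact h.elim
  · intro l x hxK hxt
    have hxc : x ∈ Metric.cthickening (δ / 2) S.K := Metric.self_subset_cthickening _ hxK
    rcases hf l hxt with h | h | h
    · exact h
    · split_ifs at h with hl
      · exact (h (Or.inl hxc)).elim
      · exact h.elim
    · split_ifs at h with hl
      · exact (h.2 hxc).elim
      · exact h.elim

/-- Weight of a button. -/
def Zip.w {d N k : ℕ} (S : Zip d N k) (R : List (Fin N) → ℝ) (l : Fin k) : ℝ :=
  (S.κ l).elim 0 (fun i => R [i])

/-- Total weight of the buttons before `l`. -/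
def Zip.c {d N k : ℕ} (S : Zip d N k) (R : List (Fin N) → ℝ) (l : Fin k) : ℝ :=
  ∑ j ∈ Finset.Iio l, S.w R j

/-- Orientation sign. -/
def Zip.sg {d N k : ℕ} (S : Zip d N k) (l : Fin k) : ℝ := if S.fl l = true then 1 else -1

/-- Orientation offset. -/
def Zip.off {d N k : ℕ} (S : Zip d N k) (l : Fin k) : ℝ := if S.fl l = true then 0 else 1

/-- The function on one button. -/
def Zip.pc {d N k : ℕ} (S : Zip d N k) (l : Fin k) (R : List (Fin N) → ℝ)
    (g : Fin N → EuclideanSpace ℝ (Fin d) → ℝ) (x : EuclideanSpace ℝ (Fin d)) : ℝ :=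
  S.c R l + (S.κ l).elim 0 (fun i => S.off l * R [i] + S.sg l * g i (S.ψ i x))

open Classical in
/-- The expected value at an end point. -/
def Zip.val {d N k : ℕ} (S : Zip d N k) (e : EuclideanSpace ℝ (Fin d))
    (R : List (Fin N) → ℝ) : ℝ := if e = S.a then 0 else R []

theorem Zip.val_a {d N k : ℕ} (S : Zip d N k) (R : List (Fin N) → ℝ) : S.val S.a R = 0 := by
  simp [Zip.val]

theorem Zip.val_b {d N k : ℕ} (S : Zip d N k) (R : List (Fin N) → ℝ) : S.val S.b R = R [] := by
  simp [Zip.val, S.hab.symm]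

theorem Zip.abs_sg {d N k : ℕ} (S : Zip d N k) (l : Fin k) : |S.sg l| = 1 := by
  unfold Zip.sg; split_ifs <;> simp

theorem Zip.w_nonneg {d N k : ℕ} (S : Zip d N k) {R : List (Fin N) → ℝ} (hR : ∀ u, 0 ≤ R u)
    (l : Fin k) : 0 ≤ S.w R l := by
  unfold Zip.w
  cases S.κ l with
  | none => exact le_rfl
  | some i => exact hR _

theorem Zip.c_nonneg {d N k : ℕ} (S : Zip d N k) {R : List (Fin N) → ℝ} (hR : ∀ u, 0 ≤ R u)
    (l : Fin k) : 0 ≤ S.c R l := Finset.sum_nonneg fun j _ => S.w_nonneg hR j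

theorem Zip.c_succ {d N k : ℕ} (S : Zip d N k) (R : List (Fin N) → ℝ)
    (l l' : Fin k) (h : (l : ℕ) + 1 = l') : S.c R l' = S.c R l + S.w R l := by
  have : Finset.Iio l' = insert l (Finset.Iio l) := by
    ext j
    simp only [Finset.mem_Iio, Finset.mem_insert, Fin.lt_def, Fin.ext_iff]
    omega
  unfold Zip.c
  rw [this, Finset.sum_insert (by simp)]
  ring

theorem Zip.c_first {d N k : ℕ} (S : Zip d N k) (R : List (Fin N) → ℝ) :
    S.c R S.first = 0 := by
  have : Finset.Iio S.first = ∅ := by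
    ext j
    simp [Fin.lt_def, S.first_val]
  unfold Zip.c
  rw [this, Finset.sum_empty]

theorem Zip.w_sum {d N k : ℕ} (S : Zip d N k) {R : List (Fin N) → ℝ}
    (hR : ∀ u, R u = ∑ i, R (u ++ [i])) : ∑ l, S.w R l = R [] := by
  unfold Zip.w
  rw [S.κ_sum, hR []]
  simp

theorem Zip.c_add_w {d N k : ℕ} (S : Zip d N k) (R : List (Fin N) → ℝ) (l : Fin k) :
    S.c R l + S.w R l = ∑ j ∈ Finset.Iic l, S.w R j := by
  have : Finset.Iic l = insert l (Finset.Iio l) := by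
    ext j
    simp only [Finset.mem_Iio, Finset.mem_Iic, Finset.mem_insert, Fin.lt_def, Fin.le_def,
      Fin.ext_iff]
    omega
  rw [this, Finset.sum_insert (by simp), Zip.c]
  ring

theorem Zip.c_last {d N k : ℕ} (S : Zip d N k) {R : List (Fin N) → ℝ}
    (hR : ∀ u, R u = ∑ i, R (u ++ [i])) : S.c R S.last + S.w R S.last = R [] := by
  rw [S.c_add_w, ← S.w_sum hR]
  congr 1
  ext j
  have := S.last_val
  simp only [Finset.mem_Iic, Fin.le_def, Finset.mem_univ, iff_true]
  omega

theorem Zip.c_w_le {d N k : ℕ} (S : Zip d N k) {R : List (Fin N) → ℝ}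
    (hR : ∀ u, R u = ∑ i, R (u ++ [i])) (h0 : ∀ u, 0 ≤ R u) (l : Fin k) :
    S.c R l + S.w R l ≤ R [] := by
  rw [S.c_add_w, ← S.w_sum hR]
  exact Finset.sum_le_sum_of_subset_of_nonneg (Finset.subset_univ _)
    fun j _ _ => S.w_nonneg h0 j

theorem Zip.w_none {d N k : ℕ} (S : Zip d N k) (R : List (Fin N) → ℝ) {l : Fin k}
    (h : S.κ l = none) : S.w R l = 0 := by
  simp [Zip.w, h]

theorem Zip.w_some {d N k : ℕ} (S : Zip d N k) (R : List (Fin N) → ℝ) {l : Fin k} {i : Fin N}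
    (h : S.κ l = some i) : S.w R l = R [i] := by
  simp [Zip.w, h]

theorem Zip.pc_none {d N k : ℕ} (S : Zip d N k) (R : List (Fin N) → ℝ) {l : Fin k}
    (h : S.κ l = none) (g : Fin N → EuclideanSpace ℝ (Fin d) → ℝ) (x : EuclideanSpace ℝ (Fin d)) :
    S.pc l R g x = S.c R l := by
  simp [Zip.pc, h]

theorem Zip.pc_some {d N k : ℕ} (S : Zip d N k) (R : List (Fin N) → ℝ) {l : Fin k} {i : Fin N}
    (h : S.κ l = some i) (g : Fin N → EuclideanSpace ℝ (Fin d) → ℝ)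
    (x : EuclideanSpace ℝ (Fin d)) :
    S.pc l R g x = S.c R l + (S.off l * R [i] + S.sg l * g i (S.ψ i x)) := by
  simp [Zip.pc, h]

theorem Zip.a_mem {d N k : ℕ} (S : Zip d N k) (l : Fin k) (h : S.a ∈ S.A l) :
    S.p l = S.a ∧ ∀ R, S.c R l = 0 := by
  have hf := S.first_val
  rcases Nat.lt_trichotomy (l : ℕ) 1 with h1 | h1 | h1
  · have : l = S.first := Fin.ext (by omega)
    rw [this]
    exact ⟨S.p_first, fun R => S.c_first R⟩
  · have h2 : (S.first : ℕ) + 1 = l := by omega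
    refine ⟨?_, fun R => ?_⟩
    · rw [← S.qp _ _ h2]
      exact (S.inter _ _ h2 _ S.mem_a h).symm
    · rw [S.c_succ R _ _ h2, S.c_first, S.w_none R S.κ_first, add_zero]
  · exact (S.disj S.first l (by omega) _ S.mem_a h).elim

theorem Zip.b_mem {d N k : ℕ} (S : Zip d N k) (l : Fin k) (h : S.b ∈ S.A l) :
    S.q l = S.b ∧ ∀ R, (∀ u, R u = ∑ i, R (u ++ [i])) → S.c R l + S.w R l = R [] := by
  have hf := S.last_val
  have hlt := l.isLt
  rcases Nat.lt_trichotomy ((l : ℕ) + 1) S.last with h1 | h1 | h1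
  · exact (S.disj l S.last h1 _ h S.mem_b).elim
  · refine ⟨(S.inter _ _ h1 _ h S.mem_b).symm, fun R hR => ?_⟩
    rw [← S.c_succ R _ _ h1, ← S.c_last hR, S.w_none R S.κ_last, add_zero]
  · have : l = S.last := Fin.ext (by omega)
    rw [this]
    exact ⟨S.q_last, fun R hR => S.c_last hR⟩

theorem Zip.pc_p {d N k : ℕ} (S : Zip d N k) {l : Fin k} {i : Fin N} (h : S.κ l = some i) :
    ∃ e', (e' = S.a ∨ e' = S.b) ∧ S.φ i e' = S.p l ∧
      ∀ (R : List (Fin N) → ℝ) (g : Fin N → EuclideanSpace ℝ (Fin d) → ℝ) x,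
        g i (S.ψ i x) = S.val e' (fun u => R (i :: u)) → S.pc l R g x = S.c R l := by
  cases hfl : S.fl l with
  | true =>
    refine ⟨S.a, Or.inl rfl, (S.fl_true l i h hfl).1.symm, fun R g x hg => ?_⟩
    rw [S.pc_some R h, hg, S.val_a]
    simp [Zip.off, hfl]
  | false =>
    refine ⟨S.b, Or.inr rfl, (S.fl_false l i h hfl).1.symm, fun R g x hg => ?_⟩
    rw [S.pc_some R h, hg, S.val_b]
    simp [Zip.off, Zip.sg, hfl]

theorem Zip.pc_q {d N k : ℕ} (S : Zip d N k) {l : Fin k} {i : Fin N} (h : S.κ l = some i) :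
    ∃ e', (e' = S.a ∨ e' = S.b) ∧ S.φ i e' = S.q l ∧
      ∀ (R : List (Fin N) → ℝ) (g : Fin N → EuclideanSpace ℝ (Fin d) → ℝ) x,
        g i (S.ψ i x) = S.val e' (fun u => R (i :: u)) → S.pc l R g x = S.c R l + S.w R l := by
  cases hfl : S.fl l with
  | true =>
    refine ⟨S.b, Or.inr rfl, (S.fl_true l i h hfl).2.symm, fun R g x hg => ?_⟩
    rw [S.pc_some R h, hg, S.val_b, S.w_some R h]
    simp [Zip.off, Zip.sg, hfl]
  | false =>
    refine ⟨S.a, Or.inl rfl, (S.fl_false l i h hfl).2.symm, fun R g x hg => ?_⟩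
    rw [S.pc_some R h, hg, S.val_a, S.w_some R h]
    simp [Zip.off, hfl]

/-- If two end points are images of end points under `φ i`, `φ j` then `i = j`. -/
theorem Zip.uniq {d N k : ℕ} (S : Zip d N k)
    (hsurj : ∀ i, ∃ l, S.κ l = some i) (haK : S.a ∈ S.K) (hbK : S.b ∈ S.K)
    (e e1 e2 : EuclideanSpace ℝ (Fin d)) (i j : Fin N) (he : e = S.a ∨ e = S.b)
    (h1 : e1 = S.a ∨ e1 = S.b) (h2 : e2 = S.a ∨ e2 = S.b)
    (hi : S.φ i e1 = e) (hj : S.φ j e2 = e) : i = j := by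
  obtain ⟨l, hl⟩ := hsurj i
  obtain ⟨l', hl'⟩ := hsurj j
  have m1 : e1 ∈ S.K := by rcases h1 with rfl | rfl <;> assumption
  have m2 : e2 ∈ S.K := by rcases h2 with rfl | rfl <;> assumption
  have hel : e ∈ S.A l := by rw [S.A_img l i hl]; exact ⟨e1, m1, hi⟩
  have hel' : e ∈ S.A l' := by rw [S.A_img l' j hl']; exact ⟨e2, m2, hj⟩
  have hf := S.first_val
  have hla := S.last_val
  suffices l = l' by
    rw [this, hl'] at hl
    exact (Option.some.inj hl).symm
  rcases he with rfl | rfl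
  · have key : ∀ l i, S.κ l = some i → S.a ∈ S.A l → (l : ℕ) = 1 := by
      intro l i hl hm
      have hne : l ≠ S.first := by rintro rfl; rw [S.κ_first] at hl; cases hl
      have hne' : (l : ℕ) ≠ S.first := fun h => hne (Fin.ext h)
      by_contra h
      exact S.disj S.first l (by omega) _ S.mem_a hm
    exact Fin.ext ((key l i hl hel).trans (key l' j hl' hel').symm)
  · have key : ∀ l i, S.κ l = some i → S.b ∈ S.A l → (l : ℕ) + 1 = S.last := by
      intro l i hl hm
      have hne : l ≠ S.last := by rintro rfl; rw [S.κ_last] at hl; cases hl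
      have hne' : (l : ℕ) ≠ S.last := fun h => hne (Fin.ext h)
      have := l.isLt
      by_contra h
      exact S.disj l S.last (by omega) _ hm S.mem_b
    have e1 := key l i hl hel
    have e2 := key l' j hl' hel'
    exact Fin.ext (by omega)

/-- The approximating functions. -/
def Part.F {d N k : ℕ} {S : Zip d N k} {η0 η' : ℝ} (P : Part S η0 η') :
    ℕ → (List (Fin N) → ℝ) → EuclideanSpace ℝ (Fin d) → ℝ
  | 0, R, x => R [] * P.h0 x
  | t + 1, R, x => ∑ l, P.χ l x * S.pc l R (fun i => P.F t (fun u => R (i :: u))) x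

theorem convex_norm_le {ι V : Type*} [Fintype ι] [NormedAddCommGroup V] [NormedSpace ℝ V]
    {χ : ι → ℝ} (h0 : ∀ i, 0 ≤ χ i) (h1 : ∑ i, χ i = 1) {v : ι → V} {B : ℝ}
    (hB : ∀ i, χ i ≠ 0 → ‖v i‖ ≤ B) : ‖∑ i, χ i • v i‖ ≤ B := by
  calc ‖∑ i, χ i • v i‖ ≤ ∑ i, ‖χ i • v i‖ := norm_sum_le _ _
    _ ≤ ∑ i, χ i * B := by
        refine Finset.sum_le_sum fun i _ => ?_
        rw [norm_smul, Real.norm_eq_abs, abs_of_nonneg (h0 i)]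
        by_cases h : χ i = 0
        · simp [h]
        · exact mul_le_mul_of_nonneg_left (hB i h) (h0 i)
    _ = B := by rw [← Finset.sum_mul, h1, one_mul]

theorem convex_eq {ι : Type*} [Fintype ι]
    {χ : ι → ℝ} (h1 : ∑ i, χ i = 1) {v : ι → ℝ} {B : ℝ}
    (hB : ∀ i, χ i ≠ 0 → v i = B) : ∑ i, χ i * v i = B := by
  calc ∑ i, χ i * v i = ∑ i, χ i * B := by
        refine Finset.sum_congr rfl fun i _ => ?_
        by_cases h : χ i = 0
        · simp [h]
        · rw [hB i h]
    _ = B := by rw [← Finset.sum_mul, h1, one_mul]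

theorem Zip.pc_bounds {d N k : ℕ} (S : Zip d N k) {R : List (Fin N) → ℝ}
    (h0 : ∀ u, 0 ≤ R u) (hR : ∀ u, R u = ∑ i, R (u ++ [i])) (l : Fin k)
    (g : Fin N → EuclideanSpace ℝ (Fin d) → ℝ)
    (hg : ∀ i x, 0 ≤ g i x ∧ g i x ≤ R [i]) (x : EuclideanSpace ℝ (Fin d)) :
    0 ≤ S.pc l R g x ∧ S.pc l R g x ≤ R [] := by
  have h1 := S.c_nonneg h0 l
  have h2 := S.c_w_le hR h0 l
  cases hκ : S.κ l with
  | none =>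
    rw [S.pc_none R hκ]
    rw [S.w_none R hκ] at h2
    exact ⟨h1, by linarith⟩
  | some i =>
    rw [S.pc_some R hκ]
    rw [S.w_some R hκ] at h2
    obtain ⟨h3, h4⟩ := hg i (S.ψ i x)
    unfold Zip.off Zip.sg
    split_ifs <;> constructor <;> linarith

theorem Part.F_bounds {d N k : ℕ} {S : Zip d N k} {η0 η' : ℝ} (P : Part S η0 η') (t : ℕ) :
    ∀ (R : List (Fin N) → ℝ), (∀ u, 0 ≤ R u) → (∀ u, R u = ∑ i, R (u ++ [i])) →
      ∀ x, 0 ≤ P.F t R x ∧ P.F t R x ≤ R [] := by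
  induction t with
  | zero =>
    intro R h0 hR x
    simp only [Part.F]
    have h1 := P.h0_nonneg x
    have h2 := P.h0_le x
    have h3 := h0 []
    exact ⟨by positivity, by nlinarith⟩
  | succ t ih =>
    intro R h0 hR x
    simp only [Part.F]
    have hb : ∀ l, _ := fun l => S.pc_bounds h0 hR l
      (fun i => P.F t (fun u => R (i :: u)))
      (fun i x => ih (fun u => R (i :: u)) (fun u => h0 _) (fun u => hR (i :: u)) x) x
    constructor
    · exact Finset.sum_nonneg fun l _ => mul_nonneg (P.χ_nonneg l x) (hb l).1
    · calc _ ≤ ∑ l, P.χ l x * R [] :=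
            Finset.sum_le_sum fun l _ => mul_le_mul_of_nonneg_left (hb l).2 (P.χ_nonneg l x)
        _ = R [] := by rw [← Finset.sum_mul, P.χ_sum, one_mul]

theorem Zip.ψ_near {d N k : ℕ} (S : Zip d N k) {r : ℝ} (hr : ∀ i, r ≤ S.ρ i) (i : Fin N)
    {η : ℝ} (hη : 0 ≤ η) {x e z : EuclideanSpace ℝ (Fin d)} (hz : S.φ i e = z)
    (hx : dist x z < η * r) : dist (S.ψ i x) e < η := by
  have h1 : dist (S.ψ i x) e = (S.ρ i)⁻¹ * dist x z := by
    rw [← hz, ← S.ψ_dist, S.ψφ]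
  rw [h1, inv_mul_lt_iff₀ (S.ρ_pos i)]
  have := mul_le_mul_of_nonneg_left (hr i) hη
  linarith

theorem Part.F_near {d N k : ℕ} {S : Zip d N k} {η0 η' : ℝ} (P : Part S η0 η') (hη0 : 0 < η0)
    {r : ℝ} (hr0 : 0 < r) (hr1 : r ≤ 1) (hr : ∀ i, r ≤ S.ρ i) (n : ℕ) :
    ∀ (t : ℕ) (R : List (Fin N) → ℝ) (e : EuclideanSpace ℝ (Fin d)),
      (∀ u, 0 ≤ R u) → (∀ u, R u = ∑ i, R (u ++ [i])) → (e = S.a ∨ e = S.b) →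
      (∀ v, Bd S.φ S.a S.b e v → n ≤ v.length → R v = 0) →
      ∀ x, dist x e < η0 * r ^ n → P.F t R x = S.val e R := by
  induction n with
  | zero =>
    intro t R e h0 hR he hz x _
    have hR0 : R [] = 0 := hz [] trivial le_rfl
    have h1 := P.F_bounds t R h0 hR x
    rw [hR0] at h1
    have h2 : S.val e R = 0 := by
      rcases he with rfl | rfl
      · exact S.val_a R
      · rw [S.val_b, hR0]
    rw [h2]
    exact le_antisymm h1.2 h1.1
  | succ n ih =>
    intro t R e h0 hR he hz x hx
    have hx0 : dist x e < η0 := by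
      have : r ^ (n + 1) ≤ 1 := pow_le_one₀ hr0.le hr1
      nlinarith
    cases t with
    | zero =>
      simp only [Part.F]
      rcases he with rfl | rfl
      · rw [P.h0_a x hx0, S.val_a, mul_zero]
      · rw [P.h0_b x hx0, S.val_b, mul_one]
    | succ t =>
      simp only [Part.F]
      have hx' : dist x e < (η0 * r ^ n) * r := by rw [pow_succ] at hx; linarith
      refine convex_eq (P.χ_sum x) fun l hl => ?_
      have hstep : ∀ i e', (e' = S.a ∨ e' = S.b) → S.φ i e' = e →
          P.F t (fun u => R (i :: u)) (S.ψ i x) = S.val e' (fun u => R (i :: u)) := by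
        intro i e' he' hφ
        refine ih t _ e' (fun u => h0 _) (fun u => hR (i :: u)) he' ?_ _ ?_
        · intro v hv hn
          exact hz (i :: v) ⟨e', he', hφ, hv⟩ (by simpa using hn)
        · exact S.ψ_near hr i (by positivity) hφ hx'
      rcases he with rfl | rfl
      · obtain ⟨hp, hc⟩ := S.a_mem l (P.χ_a l x hx0 hl)
        rw [S.val_a]
        cases hκ : S.κ l with
        | none => rw [S.pc_none R hκ, hc]
        | some i =>
          obtain ⟨e', he', hφ, hpc⟩ := S.pc_p hκ
          rw [hpc R _ x (hstep i e' he' (hφ.trans hp)), hc]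
      · obtain ⟨hp, hc⟩ := S.b_mem l (P.χ_b l x hx0 hl)
        rw [S.val_b, ← hc R hR]
        cases hκ : S.κ l with
        | none => rw [S.pc_none R hκ, S.w_none R hκ, add_zero]
        | some i =>
          obtain ⟨e', he', hφ, hpc⟩ := S.pc_q hκ
          rw [hpc R _ x (hstep i e' he' (hφ.trans hp))]

theorem Part.pc_const {d N k : ℕ} {S : Zip d N k} {η0 η' : ℝ} (P : Part S η0 η') (hη0 : 0 < η0)
    {r : ℝ} (hr0 : 0 < r) (hr1 : r ≤ 1) (hr : ∀ i, r ≤ S.ρ i) {L : ℕ} {τ : Fin N → ℝ}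
    (hη' : η' ≤ (η0 * r ^ L) * r)
    {M : ℝ} {R : List (Fin N) → ℝ} (hG : Good S.φ S.a S.b L τ M R) (t : ℕ) (l : Fin k)
    (x : EuclideanSpace ℝ (Fin d)) :
    (dist x (S.p l) < η' →
      S.pc l R (fun i => P.F t (fun u => R (i :: u))) x = S.c R l) ∧
    (dist x (S.q l) < η' →
      S.pc l R (fun i => P.F t (fun u => R (i :: u))) x = S.c R l + S.w R l) := by
  cases hκ : S.κ l with
  | none =>
    rw [S.pc_none R hκ, S.w_none R hκ, add_zero]
    exact ⟨fun _ => rfl, fun _ => rfl⟩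
  | some i =>
    have hstep : ∀ e' z, (e' = S.a ∨ e' = S.b) → S.φ i e' = z → dist x z < η' →
        P.F t (fun u => R (i :: u)) (S.ψ i x) = S.val e' (fun u => R (i :: u)) := by
      intro e' z he' hφ hx
      refine P.F_near hη0 hr0 hr1 hr L t _ e' (fun u => hG.nonneg _)
        (fun u => hG.cons (i :: u)) he' ?_ _ ?_
      · intro v hv hn
        exact hG.zero [i] v e' he' hv hn
      · exact S.ψ_near hr i (by positivity) hφ (hx.trans_le hη')
    constructor
    · intro hx
      obtain ⟨e', he', hφ, hpc⟩ := S.pc_p hκ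
      exact hpc R _ x (hstep e' _ he' hφ hx)
    · intro hx
      obtain ⟨e', he', hφ, hpc⟩ := S.pc_q hκ
      exact hpc R _ x (hstep e' _ he' hφ hx)

theorem Zip.pc_smooth {d N k : ℕ} (S : Zip d N k) (l : Fin k) (R : List (Fin N) → ℝ)
    {g : Fin N → EuclideanSpace ℝ (Fin d) → ℝ} (hg : ∀ i, ContDiff ℝ 1 (g i)) :
    ContDiff ℝ 1 (S.pc l R g) := by
  cases hκ : S.κ l with
  | none =>
    rw [show S.pc l R g = fun _ => S.c R l from funext fun x => S.pc_none R hκ g x]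
    exact contDiff_const
  | some i =>
    rw [show S.pc l R g = fun x => S.c R l + (S.off l * R [i] + S.sg l * g i (S.ψ i x)) from
      funext fun x => S.pc_some R hκ g x]
    exact contDiff_const.add (contDiff_const.add
      (contDiff_const.mul ((hg i).comp (S.ψ_smooth i))))

theorem Part.F_smooth {d N k : ℕ} {S : Zip d N k} {η0 η' : ℝ} (P : Part S η0 η') (t : ℕ) :
    ∀ R : List (Fin N) → ℝ, ContDiff ℝ 1 (P.F t R) := by
  induction t with
  | zero =>
    intro R
    exact contDiff_const.mul P.h0_smooth
  | succ t ih =>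
    intro R
    exact ContDiff.sum fun l _ => (P.χ_smooth l).mul (S.pc_smooth l R fun i => ih _)

theorem Zip.ψ_fderiv {d N k : ℕ} (S : Zip d N k) (i : Fin N) (x : EuclideanSpace ℝ (Fin d)) :
    ‖fderiv ℝ (S.ψ i) x‖ ≤ (S.ρ i)⁻¹ := by
  have hpos : 0 ≤ (S.ρ i)⁻¹ := inv_nonneg.2 (S.ρ_pos i).le
  have h : LipschitzWith (Real.toNNReal (S.ρ i)⁻¹) (S.ψ i) :=
    LipschitzWith.of_dist_le_mul fun x y => by
      rw [S.ψ_dist, Real.coe_toNNReal _ hpos]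
  have := norm_fderiv_le_of_lipschitz ℝ h (x₀ := x)
  rwa [Real.coe_toNNReal _ hpos] at this

theorem Zip.pc_fderiv_none {d N k : ℕ} (S : Zip d N k) {l : Fin k} (R : List (Fin N) → ℝ)
    (g : Fin N → EuclideanSpace ℝ (Fin d) → ℝ) (h : S.κ l = none)
    (x : EuclideanSpace ℝ (Fin d)) : fderiv ℝ (S.pc l R g) x = 0 := by
  rw [show S.pc l R g = fun _ => S.c R l from funext fun x => S.pc_none R h g x]
  exact fderiv_const_apply _

theorem Zip.pc_fderiv_some {d N k : ℕ} (S : Zip d N k) {l : Fin k} (R : List (Fin N) → ℝ)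
    {g : Fin N → EuclideanSpace ℝ (Fin d) → ℝ} (hg : ∀ i, ContDiff ℝ 1 (g i))
    {i : Fin N} (h : S.κ l = some i) (x : EuclideanSpace ℝ (Fin d)) :
    fderiv ℝ (S.pc l R g) x =
      S.sg l • (fderiv ℝ (g i) (S.ψ i x)).comp (fderiv ℝ (S.ψ i) x) := by
  rw [show S.pc l R g = fun x => S.c R l + (S.off l * R [i] + S.sg l * g i (S.ψ i x)) from
      funext fun x => S.pc_some R h g x]
  have h1 : HasFDerivAt (fun x => g i (S.ψ i x))
      ((fderiv ℝ (g i) (S.ψ i x)).comp (fderiv ℝ (S.ψ i) x)) x :=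
    HasFDerivAt.comp x (((hg i).differentiable one_ne_zero) _).hasFDerivAt
      (((S.ψ_smooth i).differentiable one_ne_zero) _).hasFDerivAt
  exact (((h1.const_mul (S.sg l)).const_add _).const_add _).fderiv

theorem Zip.pc_fderiv_le {d N k : ℕ} (S : Zip d N k) {l : Fin k} (R : List (Fin N) → ℝ)
    {g : Fin N → EuclideanSpace ℝ (Fin d) → ℝ} (hg : ∀ i, ContDiff ℝ 1 (g i))
    {i : Fin N} (h : S.κ l = some i) (x : EuclideanSpace ℝ (Fin d)) {B : ℝ}
    (hB : ‖fderiv ℝ (g i) (S.ψ i x)‖ ≤ B) :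
    ‖fderiv ℝ (S.pc l R g) x‖ ≤ B * (S.ρ i)⁻¹ := by
  rw [S.pc_fderiv_some R hg h, norm_smul, Real.norm_eq_abs, S.abs_sg, one_mul]
  refine (ContinuousLinearMap.opNorm_comp_le _ _).trans ?_
  exact mul_le_mul hB (S.ψ_fderiv i x) (norm_nonneg _) ((norm_nonneg _).trans hB)

theorem Zip.pc_fderiv_sub_le {d N k : ℕ} (S : Zip d N k) {l : Fin k} (R : List (Fin N) → ℝ)
    {g g' : Fin N → EuclideanSpace ℝ (Fin d) → ℝ} (hg : ∀ i, ContDiff ℝ 1 (g i))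
    (hg' : ∀ i, ContDiff ℝ 1 (g' i))
    {i : Fin N} (h : S.κ l = some i) (x : EuclideanSpace ℝ (Fin d)) {B : ℝ}
    (hB : ‖fderiv ℝ (g i) (S.ψ i x) - fderiv ℝ (g' i) (S.ψ i x)‖ ≤ B) :
    ‖fderiv ℝ (S.pc l R g) x - fderiv ℝ (S.pc l R g') x‖ ≤ B * (S.ρ i)⁻¹ := by
  rw [S.pc_fderiv_some R hg h, S.pc_fderiv_some R hg' h, ← smul_sub,
    ← ContinuousLinearMap.sub_comp, norm_smul, Real.norm_eq_abs, S.abs_sg, one_mul]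
  refine (ContinuousLinearMap.opNorm_comp_le _ _).trans ?_
  exact mul_le_mul hB (S.ψ_fderiv i x) (norm_nonneg _) ((norm_nonneg _).trans hB)

theorem Part.F_fderiv {d N k : ℕ} {S : Zip d N k} {η0 η' : ℝ} (P : Part S η0 η') (t : ℕ)
    (R : List (Fin N) → ℝ) (x : EuclideanSpace ℝ (Fin d)) :
    fderiv ℝ (P.F (t + 1) R) x =
      ∑ l, P.χ l x • fderiv ℝ (S.pc l R (fun i => P.F t (fun u => R (i :: u)))) x +
      ∑ l, S.pc l R (fun i => P.F t (fun u => R (i :: u))) x • fderiv ℝ (P.χ l) x := by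
  rw [← Finset.sum_add_distrib]
  have : P.F (t + 1) R =
      fun x => ∑ l, P.χ l x * S.pc l R (fun i => P.F t (fun u => R (i :: u))) x := rfl
  rw [this]
  refine (HasFDerivAt.fun_sum fun l _ => ?_).fderiv
  exact HasFDerivAt.mul (((P.χ_smooth l).differentiable one_ne_zero) x).hasFDerivAt
    (((S.pc_smooth l R fun i => P.F_smooth t _).differentiable one_ne_zero) x).hasFDerivAt

theorem Good.sub_bound {X : Type*} {N : ℕ} {φ : Fin N → X → X} {a b : X} {L : ℕ} {τ : Fin N → ℝ}
    {M : ℝ} {R : List (Fin N) → ℝ} (h : Good φ a b L τ M R) : R [] ≤ M := by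
  have := h.le []
  simpa [wprod] using this

theorem Good.M_nonneg {X : Type*} {N : ℕ} {φ : Fin N → X → X} {a b : X} {L : ℕ} {τ : Fin N → ℝ}
    {M : ℝ} {R : List (Fin N) → ℝ} (h : Good φ a b L τ M R) : 0 ≤ M :=
  (h.nonneg []).trans h.sub_bound

theorem Part.F_sup {d N k : ℕ} {S : Zip d N k} {η0 η' : ℝ} (P : Part S η0 η')
    {L : ℕ} {τ : Fin N → ℝ} {θ : ℝ} (hθ0 : 0 ≤ θ) (hτ : ∀ i, τ i ≤ θ) (t : ℕ) :
    ∀ (M : ℝ) (R : List (Fin N) → ℝ), Good S.φ S.a S.b L τ M R →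
      ∀ x, |P.F (t + 1) R x - P.F t R x| ≤ M * θ ^ t := by
  induction t with
  | zero =>
    intro M R hG x
    have h1 := P.F_bounds 0 R hG.nonneg hG.cons x
    have h2 := P.F_bounds 1 R hG.nonneg hG.cons x
    have := hG.sub_bound
    rw [pow_zero, mul_one, abs_le]
    constructor <;> simp only [zero_add] <;> linarith
  | succ t ih =>
    intro M R hG x
    have hM := hG.M_nonneg
    have : P.F (t + 1 + 1) R x - P.F (t + 1) R x = ∑ l, P.χ l x •
        (S.pc l R (fun i => P.F (t + 1) (fun u => R (i :: u))) x -
          S.pc l R (fun i => P.F t (fun u => R (i :: u))) x) := by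
      simp only [smul_eq_mul, mul_sub, Finset.sum_sub_distrib]
      rfl
    rw [this, ← Real.norm_eq_abs]
    refine convex_norm_le (fun l => P.χ_nonneg l x) (P.χ_sum x) fun l _ => ?_
    cases hκ : S.κ l with
    | none =>
      rw [S.pc_none R hκ, S.pc_none R hκ, sub_self, norm_zero]
      positivity
    | some i =>
      rw [S.pc_some R hκ, S.pc_some R hκ, Real.norm_eq_abs]
      have h1 := ih _ _ (hG.sub i) (S.ψ i x)
      have e : ∀ u v w z : ℝ, u + (v + S.sg l * w) - (u + (v + S.sg l * z)) = S.sg l * (w - z) := by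
        intros; ring
      rw [e, abs_mul, S.abs_sg, one_mul]
      refine h1.trans ?_
      calc M * τ i * θ ^ t ≤ M * θ * θ ^ t := by gcongr; exact hτ i
        _ = M * θ ^ (t + 1) := by ring

theorem Part.pc_sup {d N k : ℕ} {S : Zip d N k} {η0 η' : ℝ} (P : Part S η0 η')
    {L : ℕ} {τ : Fin N → ℝ} {θ : ℝ} (hθ0 : 0 ≤ θ) (hτ : ∀ i, τ i ≤ θ) (t : ℕ)
    {M : ℝ} {R : List (Fin N) → ℝ} (hG : Good S.φ S.a S.b L τ M R) (l : Fin k)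
    (x : EuclideanSpace ℝ (Fin d)) :
    ‖S.pc l R (fun i => P.F (t + 1) (fun u => R (i :: u))) x -
          S.pc l R (fun i => P.F t (fun u => R (i :: u))) x‖ ≤ M * θ ^ (t + 1) := by
  have hM := hG.M_nonneg
  cases hκ : S.κ l with
  | none =>
    rw [S.pc_none R hκ, S.pc_none R hκ, sub_self, norm_zero]
    positivity
  | some i =>
    rw [S.pc_some R hκ, S.pc_some R hκ, Real.norm_eq_abs]
    have h1 := P.F_sup hθ0 hτ t _ _ (hG.sub i) (S.ψ i x)
    have e : ∀ u v w z : ℝ, u + (v + S.sg l * w) - (u + (v + S.sg l * z)) = S.sg l * (w - z) := by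
      intros; ring
    rw [e, abs_mul, S.abs_sg, one_mul]
    refine h1.trans ?_
    calc M * τ i * θ ^ t ≤ M * θ * θ ^ t := by gcongr; exact hτ i
      _ = M * θ ^ (t + 1) := by ring

theorem Part.F_zero_fderiv {d N k : ℕ} {S : Zip d N k} {η0 η' : ℝ} (P : Part S η0 η')
    {L : ℕ} {τ : Fin N → ℝ} {M : ℝ} {R : List (Fin N) → ℝ} (hG : Good S.φ S.a S.b L τ M R)
    (x : EuclideanSpace ℝ (Fin d)) : ‖fderiv ℝ (P.F 0 R) x‖ ≤ M * P.G0 := by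
  have : fderiv ℝ (P.F 0 R) x = R [] • fderiv ℝ P.h0 x :=
    ((((P.h0_smooth.differentiable one_ne_zero) x).hasFDerivAt).const_mul (R [])).fderiv
  rw [this, norm_smul, Real.norm_eq_abs, abs_of_nonneg (hG.nonneg [])]
  exact mul_le_mul hG.sub_bound (P.h0_bd x) (norm_nonneg _) hG.M_nonneg

theorem Part.G0_nonneg {d N k : ℕ} {S : Zip d N k} {η0 η' : ℝ} (P : Part S η0 η') : 0 ≤ P.G0 :=
  (norm_nonneg _).trans (P.h0_bd 0)

theorem Part.Λ_nonneg {d N k : ℕ} {S : Zip d N k} {η0 η' : ℝ} (P : Part S η0 η') : 0 ≤ P.Λ :=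
  (Finset.sum_nonneg fun _ _ => norm_nonneg _).trans (P.χ_bd 0)

theorem sum_smul_le {ι V : Type*} [Fintype ι] [NormedAddCommGroup V] [NormedSpace ℝ V]
    {c : ι → ℝ} {v : ι → V} {B Λ : ℝ} (hB0 : 0 ≤ B) (hB : ∀ i, ‖c i‖ ≤ B)
    (hv : ∑ i, ‖v i‖ ≤ Λ) : ‖∑ i, c i • v i‖ ≤ B * Λ := by
  calc ‖∑ i, c i • v i‖ ≤ ∑ i, ‖c i • v i‖ := norm_sum_le _ _
    _ ≤ ∑ i, B * ‖v i‖ := Finset.sum_le_sum fun i _ => by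
        rw [norm_smul]; exact mul_le_mul_of_nonneg_right (hB i) (norm_nonneg _)
    _ = B * ∑ i, ‖v i‖ := by rw [Finset.mul_sum]
    _ ≤ B * Λ := mul_le_mul_of_nonneg_left hv hB0

theorem Zip.scale_le {d N k : ℕ} (S : Zip d N k) {τ : Fin N → ℝ} {θ : ℝ}
    (hτ : ∀ i, τ i ≤ θ * S.ρ i) (i : Fin N) {M B : ℝ} (hM : 0 ≤ M) (hB : 0 ≤ B) :
    M * τ i * B * (S.ρ i)⁻¹ ≤ M * θ * B := by
  have hp := S.ρ_pos i
  rw [← div_eq_mul_inv, div_le_iff₀ hp]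
  calc M * τ i * B = (M * B) * τ i := by ring
    _ ≤ (M * B) * (θ * S.ρ i) := mul_le_mul_of_nonneg_left (hτ i) (by positivity)
    _ = _ := by ring

theorem Part.F_grad {d N k : ℕ} {S : Zip d N k} {η0 η' : ℝ} (P : Part S η0 η')
    {L : ℕ} {τ : Fin N → ℝ} {θ : ℝ} (hθ0 : 0 ≤ θ) (hθ1 : θ ≤ 1)
    (hτ : ∀ i, τ i ≤ θ * S.ρ i) (t : ℕ) :
    ∀ (M : ℝ) (R : List (Fin N) → ℝ), Good S.φ S.a S.b L τ M R →
      ∀ x, ‖fderiv ℝ (P.F (t + 1) R) x - fderiv ℝ (P.F t R) x‖ ≤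
        M * θ ^ t * ((P.Λ + 2 * P.G0) * (t + 1)) := by
  have hG0 := P.G0_nonneg
  have hΛ := P.Λ_nonneg
  have hτ' : ∀ i, τ i ≤ θ := fun i => (hτ i).trans (by have := S.ρ_lt i; nlinarith)
  induction t with
  | zero =>
    intro M R hG x
    have hM := hG.M_nonneg
    have h0 := P.F_zero_fderiv hG x
    rw [P.F_fderiv]
    have h1 : ‖∑ l, P.χ l x • fderiv ℝ (S.pc l R (fun i => P.F 0 (fun u => R (i :: u)))) x‖
        ≤ M * P.G0 := by
      refine convex_norm_le (fun l => P.χ_nonneg l x) (P.χ_sum x) fun l _ => ?_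
      cases hκ : S.κ l with
      | none => rw [S.pc_fderiv_none R _ hκ, norm_zero]; positivity
      | some i =>
        refine (S.pc_fderiv_le R (fun j => P.F_smooth 0 (fun u => R (j :: u))) hκ x
          (P.F_zero_fderiv (hG.sub i) _)).trans ((S.scale_le hτ i hM hG0).trans ?_)
        exact mul_le_mul_of_nonneg_right (by nlinarith) hG0
    have h2 : ‖∑ l, S.pc l R (fun i => P.F 0 (fun u => R (i :: u))) x • fderiv ℝ (P.χ l) x‖
        ≤ M * P.Λ := by
      refine sum_smul_le hM (fun l => ?_) (P.χ_bd x)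
      have := S.pc_bounds hG.nonneg hG.cons l (fun i => P.F 0 (fun u => R (i :: u)))
        (fun i x => P.F_bounds 0 (fun u => R (i :: u)) (fun u => hG.nonneg _)
          (fun u => hG.cons (i :: u)) x) x
      rw [Real.norm_eq_abs, abs_of_nonneg this.1]
      exact this.2.trans hG.sub_bound
    refine (norm_sub_le _ _).trans ((add_le_add ((norm_add_le _ _).trans
      (add_le_add h1 h2)) h0).trans (le_of_eq ?_))
    push_cast
    ring
  | succ t ih =>
    intro M R hG x
    have hM := hG.M_nonneg
    rw [P.F_fderiv, P.F_fderiv, add_sub_add_comm, ← Finset.sum_sub_distrib,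
      ← Finset.sum_sub_distrib]
    simp only [← smul_sub, ← sub_smul]
    set B := θ ^ t * ((P.Λ + 2 * P.G0) * (t + 1)) with hB
    have hB0 : 0 ≤ B := by positivity
    have h1 : ‖∑ l, P.χ l x • (fderiv ℝ (S.pc l R (fun i => P.F (t + 1) (fun u => R (i :: u)))) x
        - fderiv ℝ (S.pc l R (fun i => P.F t (fun u => R (i :: u)))) x)‖ ≤ M * θ * B := by
      refine convex_norm_le (fun l => P.χ_nonneg l x) (P.χ_sum x) fun l _ => ?_
      cases hκ : S.κ l with
      | none =>
        rw [S.pc_fderiv_none R _ hκ, S.pc_fderiv_none R _ hκ, sub_self, norm_zero]; positivity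
      | some i =>
        refine (S.pc_fderiv_sub_le R (fun j => P.F_smooth (t + 1) (fun u => R (j :: u))) (fun j => P.F_smooth t (fun u => R (j :: u)))
          hκ x (ih _ _ (hG.sub i) _)).trans ?_
        rw [mul_assoc (M * τ i)]
        exact S.scale_le hτ i hM hB0
    have h2 : ‖∑ l, (S.pc l R (fun i => P.F (t + 1) (fun u => R (i :: u))) x -
        S.pc l R (fun i => P.F t (fun u => R (i :: u))) x) • fderiv ℝ (P.χ l) x‖
        ≤ M * θ ^ (t + 1) * P.Λ :=
      sum_smul_le (by positivity) (fun l => P.pc_sup hθ0 hτ' t hG l x) (P.χ_bd x)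
    refine (norm_add_le _ _).trans ((add_le_add h1 h2).trans ?_)
    have : 0 ≤ M * θ ^ (t + 1) * P.G0 := by positivity
    rw [hB]
    push_cast
    have e : M * θ * (θ ^ t * ((P.Λ + 2 * P.G0) * (t + 1))) =
      M * θ ^ (t + 1) * ((P.Λ + 2 * P.G0) * (t + 1)) := by ring
    rw [e]
    nlinarith

theorem Part.F_gradK {d N k : ℕ} {S : Zip d N k} {η0 η' : ℝ} (P : Part S η0 η') (hη0 : 0 < η0)
    {r : ℝ} (hr0 : 0 < r) (hr1 : r ≤ 1) (hr : ∀ i, r ≤ S.ρ i)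
    {L : ℕ} {τ : Fin N → ℝ} {θ : ℝ} (hη' : η' ≤ (η0 * r ^ L) * r) (hθ0 : 0 ≤ θ)
    (hτ : ∀ i, τ i ≤ θ * S.ρ i) (t : ℕ) :
    ∀ (M : ℝ) (R : List (Fin N) → ℝ), Good S.φ S.a S.b L τ M R →
      ∀ x ∈ S.K, ‖fderiv ℝ (P.F t R) x‖ ≤ M * θ ^ t * P.G0 := by
  have hG0 := P.G0_nonneg
  induction t with
  | zero =>
    intro M R hG x _
    rw [pow_zero, mul_one]
    exact P.F_zero_fderiv hG x
  | succ t ih =>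
    intro M R hG x hx
    have hM := hG.M_nonneg
    have hx' := hx
    rw [S.K_eq] at hx'
    obtain ⟨l0, hl0⟩ := mem_iUnion.1 hx'
    have key : ∀ l, x ∈ tsupport (P.χ l) → l ≠ l0 →
        S.pc l R (fun i => P.F t (fun u => R (i :: u))) x =
          S.pc l0 R (fun i => P.F t (fun u => R (i :: u))) x ∧
        fderiv ℝ (S.pc l R (fun i => P.F t (fun u => R (i :: u)))) x = 0 := by
      intro l hl hne
      have hN := P.χ_K l x hx hl
      have hN0 := P.A_Nb l0 hl0
      have hloc : ∀ z c, dist x z < η' → (∀ y, dist y z < η' →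
          S.pc l R (fun i => P.F t (fun u => R (i :: u))) y = c) →
          fderiv ℝ (S.pc l R (fun i => P.F t (fun u => R (i :: u)))) x = 0 := by
        intro z c hxz hc
        have : S.pc l R (fun i => P.F t (fun u => R (i :: u))) =ᶠ[nhds x] fun _ => c := by
          filter_upwards [Metric.isOpen_ball.mem_nhds (Metric.mem_ball.2 hxz)] with y hy
          exact hc y hy
        rw [this.fderiv_eq]
        exact fderiv_const_apply _
      rcases lt_or_gt_of_ne hne with h | h
      · obtain ⟨h1, h2⟩ := P.act l l0 h x hN hN0
        refine ⟨?_, hloc (S.q l) _ h2 fun y hy =>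
          (P.pc_const hη0 hr0 hr1 hr hη' hG t l y).2 hy⟩
        rw [(P.pc_const hη0 hr0 hr1 hr hη' hG t l x).2 h2,
          (P.pc_const hη0 hr0 hr1 hr hη' hG t l0 x).1 (S.qp _ _ h1 ▸ h2), S.c_succ R _ _ h1]
      · obtain ⟨h1, h2⟩ := P.act l0 l h x hN0 hN
        have h2' : dist x (S.p l) < η' := S.qp _ _ h1 ▸ h2
        refine ⟨?_, hloc (S.p l) _ h2' fun y hy =>
          (P.pc_const hη0 hr0 hr1 hr hη' hG t l y).1 hy⟩
        rw [(P.pc_const hη0 hr0 hr1 hr hη' hG t l x).1 h2',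
          (P.pc_const hη0 hr0 hr1 hr hη' hG t l0 x).2 h2, S.c_succ R _ _ h1]
    rw [P.F_fderiv]
    have hz : ∑ l, S.pc l R (fun i => P.F t (fun u => R (i :: u))) x • fderiv ℝ (P.χ l) x = 0 := by
      have h1 : ∑ l, fderiv ℝ (P.χ l) x = 0 := by
        have h2 : HasFDerivAt (fun x => ∑ l, P.χ l x) (∑ l, fderiv ℝ (P.χ l) x) x :=
          HasFDerivAt.fun_sum fun l _ =>
            (((P.χ_smooth l).differentiable one_ne_zero) x).hasFDerivAt
        rw [funext P.χ_sum] at h2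
        exact h2.unique (hasFDerivAt_const _ _)
      calc _ = ∑ l, S.pc l0 R (fun i => P.F t (fun u => R (i :: u))) x • fderiv ℝ (P.χ l) x := by
            refine Finset.sum_congr rfl fun l _ => ?_
            by_cases hl : x ∈ tsupport (P.χ l)
            · by_cases h : l = l0
              · rw [h]
              · rw [(key l hl h).1]
            · have : fderiv ℝ (P.χ l) x = 0 := by
                by_contra hne
                exact hl (support_fderiv_subset ℝ hne)
              rw [this, smul_zero, smul_zero]
        _ = 0 := by rw [← Finset.smul_sum, h1, smul_zero]
    rw [hz, add_zero]
    refine convex_norm_le (fun l => P.χ_nonneg l x) (P.χ_sum x) fun l hl => ?_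
    by_cases h : l = l0
    · cases hκ : S.κ l with
      | none => rw [S.pc_fderiv_none R _ hκ, norm_zero]; positivity
      | some i =>
        have hy : S.ψ i x ∈ S.K := by
          rw [← h, S.A_img l i hκ] at hl0
          obtain ⟨y, hy, rfl⟩ := hl0
          rw [S.ψφ]; exact hy
        refine (S.pc_fderiv_le R (fun j => P.F_smooth t (fun u => R (j :: u))) hκ x
          (ih _ _ (hG.sub i) _ hy)).trans ?_
        rw [mul_assoc (M * τ i)]
        refine (S.scale_le hτ i hM (by positivity)).trans (le_of_eq ?_)
        ring
    · rw [(key l (subset_tsupport _ hl) h).2, norm_zero]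
      positivity

theorem limit_lemma {V : Type*} [NormedAddCommGroup V] [NormedSpace ℝ V]
    (F : ℕ → V → ℝ) (hF : ∀ t, ContDiff ℝ 1 (F t)) {u : ℕ → ℝ} (hu : Summable u)
    (h0 : ∀ t x, ‖F (t + 1) x - F t x‖ ≤ u t)
    (h1 : ∀ t x, ‖fderiv ℝ (F (t + 1)) x - fderiv ℝ (F t) x‖ ≤ u t) :
    ∃ f : V → ℝ, ContDiff ℝ 1 f ∧
      (∀ x, Filter.Tendsto (fun t => F t x) Filter.atTop (nhds (f x))) ∧
      ∀ x, Filter.Tendsto (fun t => fderiv ℝ (F t) x) Filter.atTop (nhds (fderiv ℝ f x)) := by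
  set D : ℕ → V → ℝ := fun t x => F (t + 1) x - F t x with hD
  have hDs : ∀ t, ContDiff ℝ 1 (D t) := fun t => (hF (t + 1)).sub (hF t)
  have hdF : ∀ t x, DifferentiableAt ℝ (F t) x := fun t x => (hF t).differentiable one_ne_zero x
  have hDd : ∀ t x, fderiv ℝ (D t) x = fderiv ℝ (F (t + 1)) x - fderiv ℝ (F t) x :=
    fun t x => ((hdF (t + 1) x).hasFDerivAt.sub (hdF t x).hasFDerivAt).fderiv
  have hDb : ∀ t x, ‖fderiv ℝ (D t) x‖ ≤ u t := fun t x => by rw [hDd]; exact h1 t x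
  have hs : ContDiff ℝ 1 (fun x => ∑' t, D t x) := by
    have := contDiff_tsum (𝕜 := ℝ) (N := 1) (f := D) (v := fun _ => u) hDs (fun _ _ => hu) ?_
    · exact this
    · intro k t x hk
      have hk' : k ≤ 1 := by exact_mod_cast hk
      interval_cases k
      · rw [norm_iteratedFDeriv_zero]; exact h0 t x
      · rw [norm_iteratedFDeriv_one]; exact hDb t x
  have hsum : ∀ x, Summable fun t => D t x := fun x =>
    Summable.of_norm_bounded hu fun t => h0 t x
  have hsum' : ∀ x, Summable fun t => fderiv ℝ (D t) x := fun x =>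
    Summable.of_norm_bounded hu fun t => hDb t x
  refine ⟨fun x => F 0 x + ∑' t, D t x, (hF 0).add hs, fun x => ?_, fun x => ?_⟩
  · have := ((hsum x).hasSum.tendsto_sum_nat).const_add (F 0 x)
    refine this.congr fun n => ?_
    simp only [hD]
    rw [Finset.sum_range_sub (fun t => F t x)]
    ring
  · have hd : fderiv ℝ (fun x => F 0 x + ∑' t, D t x) x =
        fderiv ℝ (F 0) x + ∑' t, fderiv ℝ (D t) x :=
      ((hdF 0 x).hasFDerivAt.add (hasFDerivAt_tsum hu
        (fun t x => ((hDs t).differentiable one_ne_zero x).hasFDerivAt) hDb (hsum x) x)).fderiv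
    rw [hd]
    have := ((hsum' x).hasSum.tendsto_sum_nat).const_add (fderiv ℝ (F 0) x)
    refine this.congr fun n => ?_
    simp only [hDd]
    rw [Finset.sum_range_sub (fun t => fderiv ℝ (F t) x)]
    abel

theorem Zip.main {d N k : ℕ} (S : Zip d N k) {r : ℝ} (hr0 : 0 < r) (hr1 : r ≤ 1)
    (hr : ∀ i, r ≤ S.ρ i) {L : ℕ} {τ : Fin N → ℝ} {θ : ℝ} (hθ0 : 0 ≤ θ) (hθ1 : θ < 1)
    (hτ : ∀ i, τ i ≤ θ * S.ρ i) {M : ℝ} {R : List (Fin N) → ℝ}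
    (hG : Good S.φ S.a S.b L τ M R) (hR1 : R [] = 1) :
    ∃ f : EuclideanSpace ℝ (Fin d) → ℝ, ContDiff ℝ 1 f ∧ (∀ x ∈ S.K, fderiv ℝ f x = 0) ∧
      f S.a = 0 ∧ f S.b = 1 := by
  obtain ⟨η0, hη0, hp⟩ := exists_part S
  obtain ⟨P⟩ := hp ((η0 * r ^ L) * r) (by positivity)
  have hG0 := P.G0_nonneg
  have hΛ := P.Λ_nonneg
  have hM := hG.M_nonneg
  have hτ' : ∀ i, τ i ≤ θ := fun i => (hτ i).trans (by have := S.ρ_lt i; nlinarith)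
  set Q := P.Λ + 2 * P.G0 with hQ
  have hQ0 : 0 ≤ Q := by positivity
  have hθn : ‖θ‖ < 1 := by rwa [Real.norm_eq_abs, abs_of_nonneg hθ0]
  have hu : Summable fun t : ℕ => M * θ ^ t * ((Q + 1) * (t + 1)) := by
    have h1 := (summable_pow_mul_geometric_of_norm_lt_one 1 hθn).mul_left (M * (Q + 1))
    have h2 := (summable_geometric_of_norm_lt_one hθn).mul_left (M * (Q + 1))
    refine (h1.add h2).congr fun t => ?_
    ring
  obtain ⟨f, hf1, hf2, hf3⟩ := limit_lemma (fun t => P.F t R) (fun t => P.F_smooth t R) hu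
    (fun t x => by
      rw [Real.norm_eq_abs]
      refine (P.F_sup hθ0 hτ' t M R hG x).trans (le_mul_of_one_le_right (by positivity) ?_)
      have : (0 : ℝ) ≤ t := Nat.cast_nonneg t
      nlinarith)
    (fun t x => by
      refine (P.F_grad hθ0 hθ1.le hτ t M R hG x).trans ?_
      exact mul_le_mul_of_nonneg_left (mul_le_mul_of_nonneg_right (by linarith) (by positivity))
        (by positivity))
  refine ⟨f, hf1, fun x hx => ?_, ?_, ?_⟩
  · refine tendsto_nhds_unique (hf3 x) ?_
    refine squeeze_zero_norm
      (fun t => P.F_gradK hη0 hr0 hr1 hr le_rfl hθ0 hτ t M R hG x hx) ?_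
    have := ((tendsto_pow_atTop_nhds_zero_of_lt_one hθ0 hθ1).const_mul M).mul_const P.G0
    simpa using this
  · refine tendsto_nhds_unique (hf2 S.a) ?_
    refine tendsto_const_nhds.congr fun t => ?_
    rw [P.F_near hη0 hr0 hr1 hr L t R S.a hG.nonneg hG.cons (Or.inl rfl)
      (fun v hv hn => hG.zero [] v S.a (Or.inl rfl) hv hn) S.a (by rw [dist_self]; positivity),
      S.val_a]
  · refine tendsto_nhds_unique (hf2 S.b) ?_
    refine tendsto_const_nhds.congr fun t => ?_
    rw [P.F_near hη0 hr0 hr1 hr L t R S.b hG.nonneg hG.cons (Or.inr rfl)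
      (fun v hv hn => hG.zero [] v S.b (Or.inr rfl) hv hn) S.b (by rw [dist_self]; positivity),
      S.val_b, hR1]

theorem preconnected_aux {X : Type*} [MetricSpace X] {N k : ℕ} {φ : Fin N → X → X} {θ : ℝ}
    (hθ0 : 0 < θ) (hθ1 : θ < 1) (hφ : ∀ i x y, dist (φ i x) (φ i y) ≤ θ * dist x y)
    {K : Set X} (hK : IsCompact K) {A : Fin k → Set X} (hKA : K = ⋃ l, A l)
    (hA : ∀ l, IsPreconnected (A l) ∨ ∃ i, A l = φ i '' K) {p q : Fin k → X}
    (hp : ∀ l, p l ∈ A l) (hq : ∀ l, q l ∈ A l)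
    (hqp : ∀ l l' : Fin k, (l : ℕ) + 1 = l' → q l = p l') : IsPreconnected K := by
  have hAK : ∀ l, A l ⊆ K := fun l => by rw [hKA]; exact subset_iUnion A l
  obtain ⟨D, hD⟩ := Metric.isBounded_iff.1 hK.isBounded
  have key : ∀ n : ℕ, ∀ ε > 0, ∀ f : X → Bool, ContinuousOn f K →
      (∀ x ∈ K, ∀ y ∈ K, dist x y < ε → f x = f y) → D * θ ^ n < ε →
      ∀ x ∈ K, ∀ y ∈ K, f x = f y := by
    intro n
    induction n with
    | zero =>
      intro ε hε f _ hf hDε x hx y hy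
      exact hf x hx y hy ((hD hx hy).trans_lt (by simpa using hDε))
    | succ n ih =>
      intro ε hε f hc hf hDε
      have hconst : ∀ l, ∀ x ∈ A l, ∀ y ∈ A l, f x = f y := by
        intro l
        rcases hA l with h | ⟨i, hi⟩
        · exact fun x hx y hy => h.constant (hc.mono (hAK l)) hx hy
        · have hmaps : ∀ x ∈ K, φ i x ∈ K := fun x hx => hAK l (hi ▸ mem_image_of_mem _ hx)
          have hcφ : Continuous (φ i) :=
            (LipschitzWith.of_dist_le_mul (K := ⟨θ, hθ0.le⟩) (hφ i)).continuous
          have := ih (ε / θ) (by positivity) (f ∘ φ i)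
            (hc.comp hcφ.continuousOn hmaps)
            (fun x hx y hy hxy => hf _ (hmaps x hx) _ (hmaps y hy)
              ((hφ i x y).trans_lt (by rw [lt_div_iff₀ hθ0] at hxy; linarith)))
            (by rw [lt_div_iff₀ hθ0]; rw [pow_succ] at hDε; linarith)
          rw [hi]
          rintro _ ⟨x, hx, rfl⟩ _ ⟨y, hy, rfl⟩
          exact this x hx y hy
      have hchain : ∀ j (hj : j < k), ∀ x ∈ A ⟨j, hj⟩, f x = f (p ⟨0, by omega⟩) := by
        intro j
        induction j with
        | zero => exact fun hj x hx => hconst _ x hx _ (hp _)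
        | succ j ihj =>
          intro hj x hx
          rw [hconst _ x hx _ (hp _), ← hqp ⟨j, by omega⟩ ⟨j + 1, hj⟩ rfl]
          exact ihj (by omega) _ (hq _)
      intro x hx y hy
      rw [hKA] at hx hy
      obtain ⟨l, hl⟩ := mem_iUnion.1 hx
      obtain ⟨l', hl'⟩ := mem_iUnion.1 hy
      rw [hchain l l.isLt x hl, hchain l' l'.isLt y hl']
  refine isPreconnected_of_forall_constant fun f hf => ?_
  have hg : ContinuousOn (fun x => (if f x = true then 1 else 0 : ℝ)) K :=
    (continuous_of_discreteTopology (f := fun s : Bool => (if s = true then 1 else 0 : ℝ))).comp_continuousOn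
      hf
  obtain ⟨ε, hε, h⟩ := Metric.uniformContinuousOn_iff.1
    (hK.uniformContinuousOn_of_continuous hg) 1 one_pos
  have ht := (tendsto_pow_atTop_nhds_zero_of_lt_one hθ0.le hθ1).const_mul D
  rw [mul_zero] at ht
  obtain ⟨n, hn⟩ := (ht.eventually_lt_const hε).exists
  refine key n ε hε f hf (fun x hx y hy hxy => ?_) hn
  have := h x hx y hy hxy
  cases h1 : f x <;> cases h2 : f y <;> simp_all

theorem exists_upper {N : ℕ} (g : Fin N → ℝ) (h0 : ∀ i, 0 < g i) (h1 : ∀ i, g i < 1) :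
    ∃ θ : ℝ, 0 < θ ∧ θ < 1 ∧ ∀ i, g i ≤ θ := by
  rcases isEmpty_or_nonempty (Fin N) with h | h
  · exact ⟨1 / 2, by norm_num, by norm_num, fun i => h.elim i⟩
  · obtain ⟨i, hi⟩ := Finite.exists_max g
    exact ⟨g i, h0 i, h1 i, hi⟩

theorem exists_lower {N : ℕ} (g : Fin N → ℝ) (h0 : ∀ i, 0 < g i) (h1 : ∀ i, g i < 1) :
    ∃ θ : ℝ, 0 < θ ∧ θ ≤ 1 ∧ ∀ i, θ ≤ g i := by
  rcases isEmpty_or_nonempty (Fin N) with h | h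
  · exact ⟨1 / 2, by norm_num, by norm_num, fun i => h.elim i⟩
  · obtain ⟨i, hi⟩ := Finite.exists_min g
    exact ⟨g i, h0 i, (h1 i).le, hi⟩

theorem pair_cases {X : Type*} {p q x y : X} (h : ({p, q} : Set X) = {x, y}) :
    (p = x ∧ q = y) ∨ (p = y ∧ q = x) :=
  Set.pair_eq_pair_iff.1 h

end WhitneyAux

theorem whitney_of_linear_ifs_with_condensation
    (d N m : ℕ) (hm : 2 ≤ m)
    -- the contractive similitudes φ_1, …, φ_N
    (φ : Fin N → EuclideanSpace ℝ (Fin d) → EuclideanSpace ℝ (Fin d))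
    (ρ : Fin N → ℝ) (hρ : ∀ i, ρ i ∈ Set.Ioo (0 : ℝ) 1)
    (hsim : ∀ i x y, dist (φ i x) (φ i y) = ρ i * dist x y)
    -- the condensation set C = C_1 ∪ ⋯ ∪ C_m, a disjoint union of nonempty
    -- compact connected sets
    (C : Fin m → Set (EuclideanSpace ℝ (Fin d)))
    (hCcomp : ∀ j, IsCompact (C j)) (hCconn : ∀ j, IsConnected (C j))
    (hCdisj : Pairwise fun j j' => Disjoint (C j) (C j'))
    -- K is the attractor of the IFS with condensation {C; φ_1, …, φ_N}
    (K : Set (EuclideanSpace ℝ (Fin d)))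
    (hKne : K.Nonempty) (hKcomp : IsCompact K)
    (hK : K = (⋃ j, C j) ∪ ⋃ i, φ i '' K)
    -- the endpoints a, b ∈ K and a_j, b_j ∈ C_j
    (a b : EuclideanSpace ℝ (Fin d)) (ha : a ∈ K) (hb : b ∈ K)
    (ca cb : Fin m → EuclideanSpace ℝ (Fin d))
    (hca : ∀ j, ca j ∈ C j) (hcb : ∀ j, cb j ∈ C j)
    -- (K,{a,b}) = A_1 + ⋯ + A_{m+N} is a zipper decomposition, where the buttons
    -- A_ℓ are a rearrangement (via σ) of (C_j,{a_j,b_j}) and (φ_i(K),{φ_i(a),φ_i(b)})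
    (A : Fin (m + N) → Set (EuclideanSpace ℝ (Fin d)))
    (p q : Fin (m + N) → EuclideanSpace ℝ (Fin d))
    (σ : Fin (m + N) ≃ (Fin m ⊕ Fin N))
    (hrearr : ∀ ℓ : Fin (m + N),
      Sum.elim
        (fun j => A ℓ = C j ∧ ({p ℓ, q ℓ} : Set (EuclideanSpace ℝ (Fin d))) = {ca j, cb j})
        (fun i => A ℓ = φ i '' K ∧ ({p ℓ, q ℓ} : Set (EuclideanSpace ℝ (Fin d))) = {φ i a, φ i b})
        (σ ℓ))
    (hzip : IsZipperDecomp K a b A p q)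
    -- (i): the first and last buttons are among the (C_j,{a_j,b_j})
    (hfirst : (σ ⟨0, by omega⟩).isLeft = true)
    (hlast : (σ ⟨m + N - 1, by omega⟩).isLeft = true)
    -- (ii): the attractor E of {φ_1, …, φ_N} has Hausdorff dimension > 1
    (E : Set (EuclideanSpace ℝ (Fin d)))
    (hEne : E.Nonempty) (hEcomp : IsCompact E)
    (hE : E = ⋃ i, φ i '' E)
    (hdim : 1 < dimH E) :
    IsWhitneySet K := by
  have hρ0 : ∀ i, 0 < ρ i := fun i => (hρ i).1
  have hρ1 : ∀ i, ρ i < 1 := fun i => (hρ i).2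
  obtain ⟨s, hs1, hsS⟩ := WhitneyAux.exists_exponent φ ρ hρ hsim E hEcomp hE hdim
  obtain ⟨hz1, hz2, hz3, hz4, hz5, hz6⟩ := hzip
  choose ψ hψs hψφ hψd using fun i => WhitneyAux.exists_inverse (φ i) (ρ i) (hρ0 i) (hsim i)
  have hN : 1 ≤ N := by
    obtain ⟨x, hx⟩ := hEne
    rw [hE] at hx
    obtain ⟨i, _⟩ := mem_iUnion.1 hx
    exact i.pos
  have hab : a ≠ b := by
    intro h
    have h1 : a ∈ A ⟨0, by omega⟩ := by
      have := (hz2 ⟨0, by omega⟩).2.2.1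
      rwa [hz3 ⟨0, by omega⟩ rfl] at this
    have h2 : b ∈ A ⟨m + N - 1, by omega⟩ := by
      have := (hz2 ⟨m + N - 1, by omega⟩).2.2.2
      rwa [hz4 ⟨m + N - 1, by omega⟩ rfl] at this
    have h3 := hz6 ⟨0, by omega⟩ ⟨m + N - 1, by omega⟩ (by simp only; omega)
    rw [← h] at h2
    have : a ∈ A ⟨0, by omega⟩ ∩ A ⟨m + N - 1, by omega⟩ := ⟨h1, h2⟩
    rw [h3] at this
    exact this
  have hσ : ∀ l i, (σ l).getRight? = some i →
      A l = φ i '' K ∧ ({p l, q l} : Set (EuclideanSpace ℝ (Fin d))) = {φ i a, φ i b} := by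
    intro l i h
    have h1 : σ l = Sum.inr i := Sum.getRight?_eq_some_iff.1 h
    have := hrearr l
    rw [h1] at this
    exact this
  have hinj : ∀ i, Function.Injective (φ i) := fun i x y h => by
    rw [← hψφ i x, ← hψφ i y, h]
  classical
  let S : WhitneyAux.Zip d N (m + N) :=
    { φ := φ
      ψ := ψ
      ρ := ρ
      ρ_pos := hρ0
      ρ_lt := hρ1
      ψ_dist := hψd
      ψ_smooth := hψs
      ψφ := hψφ
      K := K
      K_comp := hKcomp
      a := a
      b := b
      hab := hab
      A := A
      p := p
      q := q
      κ := fun l => (σ l).getRight?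
      κ_sum := by
        intro g
        rw [Equiv.sum_comp σ (fun s => s.getRight?.elim 0 g), Fintype.sum_sum_type]
        simp
      K_eq := hz1
      A_comp := fun l => (hz2 l).1
      A_img := fun l i h => (hσ l i h).1
      p_mem := fun l => (hz2 l).2.2.1
      q_mem := fun l => (hz2 l).2.2.2
      fl := fun l => (σ l).elim (fun _ => true) (fun i => decide (p l = φ i a))
      fl_true := by
        intro l i h hf
        have h1 : σ l = Sum.inr i := Sum.getRight?_eq_some_iff.1 h
        rw [h1] at hf
        have hf' : p l = φ i a := by simpa using hf
        rcases WhitneyAux.pair_cases (hσ l i h).2 with h2 | h2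
        · exact h2
        · exact absurd (hinj i (hf'.symm.trans h2.1)) hab
      fl_false := by
        intro l i h hf
        have h1 : σ l = Sum.inr i := Sum.getRight?_eq_some_iff.1 h
        rw [h1] at hf
        have hf' : p l ≠ φ i a := by simpa using hf
        rcases WhitneyAux.pair_cases (hσ l i h).2 with h2 | h2
        · exact absurd h2.1 hf'
        · exact h2
      first := ⟨0, by omega⟩
      last := ⟨m + N - 1, by omega⟩
      first_val := rfl
      last_val := rfl
      p_first := hz3 _ rfl
      q_last := hz4 _ rfl
      κ_first := by
        obtain ⟨j, hj⟩ := Sum.isLeft_iff.1 hfirst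
        rw [hj]; rfl
      κ_last := by
        obtain ⟨j, hj⟩ := Sum.isLeft_iff.1 hlast
        rw [hj]; rfl
      qp := fun l l' h => (hz5 l l' h).1
      inter := by
        intro l l' h x hx hx'
        obtain ⟨h1, y, hy⟩ := hz5 l l' h
        have e1 : x ∈ A l ∩ A l' := ⟨hx, hx'⟩
        have e2 : q l ∈ A l ∩ A l' := ⟨(hz2 l).2.2.2, h1 ▸ (hz2 l').2.2.1⟩
        rw [hy] at e1 e2
        exact e1.trans e2.symm
      disj := by
        intro l l' h x hx hx'
        have e1 : x ∈ A l ∩ A l' := ⟨hx, hx'⟩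
        rw [hz6 l l' h] at e1
        exact e1 }
  have hsurj : ∀ i, ∃ l, S.κ l = some i := fun i => ⟨σ.symm (Sum.inr i), by
    change (σ (σ.symm (Sum.inr i))).getRight? = some i
    rw [Equiv.apply_symm_apply]; rfl⟩
  obtain ⟨L, M, R, hG, hR1⟩ := WhitneyAux.exists_good (φ := φ) (a := a) (b := b) hinj
    (S.uniq hsurj ha hb) (τ := fun i => ρ i ^ s) (fun i => Real.rpow_nonneg (hρ0 i).le s)
    (fun i => Real.rpow_le_one (hρ0 i).le (hρ1 i).le (by linarith)) hsS
  obtain ⟨r, hr0, hr1, hr⟩ := WhitneyAux.exists_lower ρ hρ0 hρ1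
  obtain ⟨θ, hθ0, hθ1, hθ⟩ := WhitneyAux.exists_upper (fun i => ρ i ^ (s - 1))
    (fun i => Real.rpow_pos_of_pos (hρ0 i) _)
    (fun i => Real.rpow_lt_one (hρ0 i).le (hρ1 i) (by linarith))
  obtain ⟨θ', hθ0', hθ1', hθ'⟩ := WhitneyAux.exists_upper ρ hρ0 hρ1
  have hτ : ∀ i, ρ i ^ s ≤ θ * ρ i := by
    intro i
    have : ρ i ^ s = ρ i ^ (s - 1) * ρ i := by
      conv_lhs => rw [show s = (s - 1) + 1 by ring]
      rw [Real.rpow_add (hρ0 i), Real.rpow_one]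
    rw [this]
    exact mul_le_mul_of_nonneg_right (hθ i) (hρ0 i).le
  obtain ⟨f, hf1, hf2, hfa, hfb⟩ := S.main hr0 hr1 hr hθ0.le hθ1 hτ hG hR1
  refine ⟨hKcomp, ⟨hKne, ?_⟩, f, hf1, hf2, ?_⟩
  · refine WhitneyAux.preconnected_aux hθ0' hθ1' (φ := φ) (fun i x y => ?_) hKcomp hz1 (fun l => ?_)
      (fun l => (hz2 l).2.2.1) (fun l => (hz2 l).2.2.2) (fun l l' h => (hz5 l l' h).1)
    · rw [hsim]
      exact mul_le_mul_of_nonneg_right (hθ' i) dist_nonneg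
    · have := hrearr l
      cases hl : σ l with
      | inl j =>
        rw [hl] at this
        exact Or.inl (this.1 ▸ (hCconn j).isPreconnected)
      | inr i =>
        rw [hl] at this
        exact Or.inr ⟨i, this.1⟩
  · intro h
    have := h a ha b hb
    rw [show f a = 0 from hfa, show f b = 1 from hfb] at this
    exact zero_ne_one this
end
end

section
/- Let γ ⊆ ℝ^d be a self-similar arc, i.e. γ is the attractor of contractive similitudes φ_1, …, φ_N with ratios ρ_1, …, ρ_N ∈ (0,1) such that φ_i(γ) ∩ φ_j(γ) is a singleton when |i − j| = 1 and empty when |i − j| > 1. Then the Hausdorff dimension of γ equals the similarity dimension of {φ_1, …, φ_N}, i.e. dim_H γ = s where s is the unique positive real with Σ_{i=1}^N ρ_i^s = 1. (No open set condition is assumed.) -/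
open Set MeasureTheory

noncomputable section

/-- An arc in `ℝ^d`: a subset homeomorphic to `[0,1]`, realized as the image of a
continuous injection of `[0,1]` (automatically a homeomorphism onto its image). -/
def IsArc {d : ℕ} (γ : Set (EuclideanSpace ℝ (Fin d))) : Prop :=
  ∃ h : ℝ → EuclideanSpace ℝ (Fin d), ContinuousOn h (Set.Icc 0 1) ∧
    Set.InjOn h (Set.Icc 0 1) ∧ h '' Set.Icc 0 1 = γ

theorem ssa_no_cover {X κ : Type*} [EMetricSpace X] [Fintype κ] [Nontrivial κ]
    (γ : Set X) (hne : γ.Nonempty) (ψ : κ → X → X) (r : κ → ENNReal)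
    (hr0 : ∀ k, r k ≠ 0) (hrt : ∀ k, r k ≠ ⊤)
    (hsim : ∀ k x y, edist (ψ k x) (ψ k y) = r k * edist x y)
    (hmaps : ∀ k, ∀ x ∈ γ, ψ k x ∈ γ) (t : ℝ) (ht : 0 < t)
    (hsum : 1 ≤ ∑ k, r k ^ t) (δ : ENNReal)
    (hδ : ∀ k k', k ≠ k' → ∀ x ∈ γ, ∀ y ∈ γ, δ ≤ edist (ψ k x) (ψ k' y)) :
    ∀ (F : Finset ℕ) (U : ℕ → Set X), γ ⊆ ⋃ i ∈ F, U i →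
      δ ^ t ≤ ∑ i ∈ F, Metric.ediam (U i) ^ t := by
  classical
  intro F
  induction F using Finset.strongInduction with
  | H F ih =>
  intro U hU
  by_contra! hS
  let G : κ → Finset ℕ := fun k => F.filter (fun i => ∃ x ∈ γ, ψ k x ∈ U i)
  have hdisj : ∀ k k', k ≠ k' → Disjoint (G k) (G k') := by
    intro k k' hk
    rw [Finset.disjoint_left]
    intro i hi hi'
    obtain ⟨hiF, x, hx, hxU⟩ := Finset.mem_filter.1 hi
    obtain ⟨-, y, hy, hyU⟩ := Finset.mem_filter.1 hi'
    have h1 : δ ≤ Metric.ediam (U i) :=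
      (hδ k k' hk x hx y hy).trans (Metric.edist_le_ediam_of_mem hxU hyU)
    have h2 : δ ^ t ≤ Metric.ediam (U i) ^ t := ENNReal.rpow_le_rpow h1 ht.le
    have h3 := Finset.single_le_sum (f := fun i => Metric.ediam (U i) ^ t)
      (fun _ _ => zero_le) hiF
    exact absurd (h2.trans h3) (not_le.2 hS)
  have hcov : ∀ k, γ ⊆ ⋃ i ∈ G k, (ψ k) ⁻¹' (U i) := by
    intro k x hx
    have := hU (hmaps k x hx)
    simp only [mem_iUnion, exists_prop] at this ⊢
    obtain ⟨i, hi, hxi⟩ := this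
    exact ⟨i, Finset.mem_filter.2 ⟨hi, x, hx, hxi⟩, hxi⟩
  have hGne : ∀ k, (G k).Nonempty := by
    intro k
    obtain ⟨x, hx⟩ := hne
    have := hcov k hx
    simp only [mem_iUnion, exists_prop] at this
    obtain ⟨i, hi, -⟩ := this
    exact ⟨i, hi⟩
  have hss : ∀ k, G k ⊂ F := by
    intro k
    refine (Finset.ssubset_iff_of_subset (Finset.filter_subset _ _)).2 ?_
    obtain ⟨k', hk'⟩ := exists_ne k
    obtain ⟨i, hi⟩ := hGne k'
    exact ⟨i, (Finset.mem_filter.1 hi).1, Finset.disjoint_left.1 (hdisj k' k hk') hi⟩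
  have hkey : ∀ k, r k ^ t * δ ^ t ≤ ∑ i ∈ G k, Metric.ediam (U i) ^ t := by
    intro k
    calc r k ^ t * δ ^ t ≤ r k ^ t * ∑ i ∈ G k, Metric.ediam (ψ k ⁻¹' U i) ^ t := by
          gcongr
          exact ih _ (hss k) _ (hcov k)
      _ = ∑ i ∈ G k, (r k * Metric.ediam (ψ k ⁻¹' U i)) ^ t := by
          rw [Finset.mul_sum]
          exact Finset.sum_congr rfl fun i _ => (ENNReal.mul_rpow_of_nonneg _ _ ht.le).symm
      _ ≤ _ := by
          refine Finset.sum_le_sum fun i _ => ENNReal.rpow_le_rpow ?_ ht.le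
          rw [mul_comm, ← ENNReal.le_div_iff_mul_le (Or.inl (hr0 k)) (Or.inl (hrt k))]
          refine Metric.ediam_le fun x hx y hy => ?_
          rw [ENNReal.le_div_iff_mul_le (Or.inl (hr0 k)) (Or.inl (hrt k)), mul_comm, ← hsim]
          exact Metric.edist_le_ediam_of_mem hx hy
  refine absurd ?_ (not_le.2 hS)
  calc δ ^ t ≤ (∑ k, r k ^ t) * δ ^ t := le_mul_of_one_le_left zero_le hsum
    _ = ∑ k, r k ^ t * δ ^ t := Finset.sum_mul _ _ _
    _ ≤ ∑ k, ∑ i ∈ G k, Metric.ediam (U i) ^ t := Finset.sum_le_sum fun k _ => hkey k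
    _ = ∑ i ∈ Finset.univ.biUnion G, Metric.ediam (U i) ^ t := by
        rw [Finset.sum_biUnion]
        exact fun k _ k' _ h => hdisj k k' h
    _ ≤ _ := Finset.sum_le_sum_of_subset (Finset.biUnion_subset.2 fun k _ => (hss k).1)

theorem ssa_oned (G : ℝ → ℝ) (hc : ContinuousOn G (Icc 0 1)) (hi : InjOn G (Icc 0 1))
    (hm : MapsTo G (Icc 0 1) (Icc 0 1)) (x : ℝ) (hx : x ∈ Ioo (0:ℝ) 1) :
    G x ∈ Ioo (0:ℝ) 1 ∧ G '' Icc 0 1 ∈ nhds (G x) := by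
  have h0 : (0:ℝ) ∈ Icc (0:ℝ) 1 := by simp
  have h1 : (1:ℝ) ∈ Icc (0:ℝ) 1 := by simp
  have hx' := Ioo_subset_Icc_self hx
  rcases hc.strictMonoOn_of_injOn_Icc' zero_le_one hi with h | h
  · have a := h h0 hx' hx.1
    have b := h hx' h1 hx.2
    exact ⟨⟨(hm h0).1.trans_lt a, b.trans_le (hm h1).2⟩,
      Filter.mem_of_superset (Icc_mem_nhds a b) (intermediate_value_Icc zero_le_one hc)⟩
  · have a := h h0 hx' hx.1
    have b := h hx' h1 hx.2
    exact ⟨⟨(hm h1).1.trans_lt b, a.trans_le (hm h0).2⟩,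
      Filter.mem_of_superset (Icc_mem_nhds b a) (intermediate_value_Icc' zero_le_one hc)⟩

theorem ssa_open_enlarge {X : Type*} [EMetricSpace X] (A : Set X) (t : ℝ) (ht : 0 < t)
    (ε : ENNReal) (hε : ε ≠ 0) :
    ∃ U : Set X, IsOpen U ∧ A ⊆ U ∧ Metric.ediam U ^ t ≤ Metric.ediam A ^ t + ε := by
  by_cases hA : Metric.ediam A = ⊤
  · exact ⟨univ, isOpen_univ, subset_univ _, by simp [hA, ENNReal.top_rpow_of_pos ht]⟩
  have hlim : Filter.Tendsto (fun η : ENNReal => (Metric.ediam A + 2 * η) ^ t) (nhds 0)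
      (nhds ((Metric.ediam A + 2 * 0) ^ t)) := by
    apply Filter.Tendsto.ennrpow_const
    refine tendsto_const_nhds.add ?_
    exact ENNReal.Tendsto.const_mul Filter.tendsto_id (Or.inr (by simp))
  simp only [mul_zero, add_zero] at hlim
  have hlt : Metric.ediam A ^ t < Metric.ediam A ^ t + ε :=
    ENNReal.lt_add_right (ENNReal.rpow_ne_top_of_nonneg ht.le hA) hε
  have hev := hlim.eventually (gt_mem_nhds hlt)
  obtain ⟨η, hη0, hη⟩ := ENNReal.nhds_zero_basis.eventually_iff.1 hev
  obtain ⟨η', h1, h2⟩ := exists_between hη0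
  have := hη h2
  refine ⟨⋃ x ∈ A, Metric.eball x η', isOpen_biUnion fun _ _ => Metric.isOpen_eball,
    fun x hx => mem_biUnion hx (Metric.mem_eball_self h1), ?_⟩
  refine le_trans (ENNReal.rpow_le_rpow ?_ ht.le) this.le
  refine Metric.ediam_le fun x hx y hy => ?_
  simp only [mem_iUnion, exists_prop] at hx hy
  obtain ⟨a, ha, hxa⟩ := hx
  obtain ⟨b, hb, hyb⟩ := hy
  have e1 : edist x a ≤ η' := le_of_lt hxa
  have e2 : edist y b ≤ η' := le_of_lt hyb
  calc edist x y ≤ edist x a + edist a b + edist b y := edist_triangle4 _ _ _ _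
    _ ≤ η' + Metric.ediam A + η' := by
        gcongr
        · exact Metric.edist_le_ediam_of_mem ha hb
        · rwa [edist_comm]
    _ = _ := by ring

theorem ssa_lower {X κ : Type*} [EMetricSpace X] [MeasurableSpace X] [BorelSpace X]
    [Fintype κ] [Nontrivial κ]
    (γ : Set X) (hne : γ.Nonempty) (hcomp : IsCompact γ) (ψ : κ → X → X) (r : κ → ENNReal)
    (hr0 : ∀ k, r k ≠ 0) (hrt : ∀ k, r k ≠ ⊤)
    (hsim : ∀ k x y, edist (ψ k x) (ψ k y) = r k * edist x y)
    (hcont : ∀ k, Continuous (ψ k))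
    (hmaps : ∀ k, ∀ x ∈ γ, ψ k x ∈ γ) (t : ℝ) (ht : 0 < t)
    (hsum : 1 ≤ ∑ k, r k ^ t)
    (hdis : ∀ k k', k ≠ k' → Disjoint (ψ k '' γ) (ψ k' '' γ)) :
    ENNReal.ofReal t ≤ dimH γ := by
  have hδ : ∃ δ : ENNReal, δ ≠ 0 ∧
      ∀ k k', k ≠ k' → ∀ x ∈ γ, ∀ y ∈ γ, δ ≤ edist (ψ k x) (ψ k' y) := by
    have : ∀ p : κ × κ, ∃ δ : ENNReal, δ ≠ 0 ∧
        (p.1 ≠ p.2 → ∀ x ∈ γ, ∀ y ∈ γ, δ ≤ edist (ψ p.1 x) (ψ p.2 y)) := by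
      intro p
      by_cases hp : p.1 = p.2
      · exact ⟨1, one_ne_zero, fun h => absurd hp h⟩
      · obtain ⟨δ, h0, h⟩ := Metric.exists_pos_forall_lt_edist (hcomp.image (hcont p.1))
          (hcomp.image (hcont p.2)).isClosed (hdis _ _ hp)
        exact ⟨δ, by exact_mod_cast h0.ne', fun _ x hx y hy =>
          (h _ (mem_image_of_mem _ hx) _ (mem_image_of_mem _ hy)).le⟩
    choose D hD0 hD using this
    obtain ⟨p, hp⟩ := Finite.exists_min D
    exact ⟨D p, hD0 p, fun k k' hk x hx y hy => (hp (k, k')).trans (hD (k, k') hk x hx y hy)⟩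
  obtain ⟨δ, hδ0, hδ⟩ := hδ
  have key := ssa_no_cover γ hne ψ r hr0 hrt hsim hmaps t ht hsum δ hδ
  have hδt : δ ^ t ≠ 0 := by simp [ENNReal.rpow_eq_zero_iff, hδ0, ht.le, ht.not_gt]
  suffices h : Measure.hausdorffMeasure t γ ≠ 0 by
    have := le_dimH_of_hausdorffMeasure_ne_zero (s := γ) (d := t.toNNReal)
      (by rwa [Real.coe_toNNReal t ht.le])
    exact this
  intro h0
  rw [Measure.hausdorffMeasure_apply] at h0
  have h1 := (ENNReal.iSup_eq_zero.1 (ENNReal.iSup_eq_zero.1 h0 1)) one_pos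
  have h2 : 0 < δ ^ t / 2 := ENNReal.div_pos hδt (by simp)
  rw [← h1] at h2
  simp only [iInf_lt_iff] at h2
  obtain ⟨A, hA, -, hlt⟩ := h2
  have h3 : δ ^ t / 2 ≠ 0 := (ENNReal.div_pos hδt (by simp)).ne'
  obtain ⟨ε, hε0, hε⟩ := ENNReal.exists_pos_sum_of_countable h3 ℕ
  have : ∀ n, ∃ U : Set X, IsOpen U ∧ A n ⊆ U ∧
      Metric.ediam U ^ t ≤ Metric.ediam (A n) ^ t + ε n := fun n =>
    ssa_open_enlarge (A n) t ht (ε n) (by exact_mod_cast (hε0 n).ne')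
  choose U hUo hAU hU using this
  obtain ⟨F, hF⟩ := hcomp.elim_finite_subcover U hUo (hA.trans (iUnion_mono hAU))
  refine absurd (key F U hF) (not_le.2 ?_)
  calc ∑ i ∈ F, Metric.ediam (U i) ^ t ≤ ∑' i, Metric.ediam (U i) ^ t := ENNReal.sum_le_tsum F
    _ ≤ ∑' i, (Metric.ediam (A i) ^ t + ε i) := ENNReal.tsum_le_tsum hU
    _ = ∑' i, Metric.ediam (A i) ^ t + ∑' i, (ε i : ENNReal) := ENNReal.tsum_add
    _ ≤ (∑' n, ⨆ _ : (A n).Nonempty, Metric.ediam (A n) ^ t) + ∑' i, (ε i : ENNReal) := by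
        gcongr with i
        rcases (A i).eq_empty_or_nonempty with h | h
        · simp [h, ht]
        · simp [h]
    _ < δ ^ t / 2 + δ ^ t / 2 := ENNReal.add_lt_add hlt hε
    _ = _ := ENNReal.add_halves _

theorem ssa_iterate {X ι : Type} [MetricSpace X] [Fintype ι] (φ : ι → X → X)
    (ρ : ι → ℝ) (hρ : ∀ i, 0 < ρ i) (R : ℝ) (hR : ∀ i, ρ i ≤ R)
    (hsim : ∀ i x y, dist (φ i x) (φ i y) = ρ i * dist x y)
    (γ γ0 : Set X) (hattr : γ = ⋃ i, φ i '' γ) (h1 : ∀ i, ∀ x ∈ γ0, φ i x ∈ γ0)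
    (h2 : ∀ i j, i ≠ j → ∀ x ∈ γ0, ∀ y ∈ γ0, φ i x ≠ φ j y)
    (s : ℝ) (hsum : ∑ i, ρ i ^ s = 1) (n : ℕ) :
    ∃ (κ : Type) (_ : Fintype κ) (ψ : κ → X → X) (r : κ → ℝ),
      (∀ k, 0 < r k) ∧ (∀ k, r k ≤ R ^ n) ∧
      (∀ k x y, dist (ψ k x) (ψ k y) = r k * dist x y) ∧
      (γ = ⋃ k, ψ k '' γ) ∧ ∑ k, r k ^ s = 1 ∧
      (∀ k k', k ≠ k' → ∀ x ∈ γ0, ∀ y ∈ γ0, ψ k x ≠ ψ k' y) := by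
  induction n with
  | zero =>
    refine ⟨Unit, inferInstance, fun _ x => x, fun _ => 1, ?_, ?_, ?_, ?_, ?_, ?_⟩
    · simp
    · simp
    · simp
    · ext z
      simp
    · simp
    · intro k k' h
      exact absurd (Subsingleton.elim k k') h
  | succ n ih =>
    obtain ⟨κ, _, ψ, r, hr0, hrR, hs, hc, hS, hd⟩ := ih
    refine ⟨κ × ι, inferInstance, fun p x => ψ p.1 (φ p.2 x), fun p => r p.1 * ρ p.2,
      fun p => mul_pos (hr0 _) (hρ _), ?_, ?_, ?_, ?_, ?_⟩
    · intro p
      rw [pow_succ]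
      exact mul_le_mul (hrR _) (hR _) (hρ _).le ((hr0 _).le.trans (hrR p.1))
    · intro p x y
      rw [hs, hsim]; ring
    · have step : ∀ z, z ∈ γ ↔ ∃ i, ∃ x ∈ γ, φ i x = z := by
        intro z
        conv_lhs => rw [hattr]
        simp
      have step2 : ∀ z, z ∈ γ ↔ ∃ k, ∃ x ∈ γ, ψ k x = z := by
        intro z
        conv_lhs => rw [hc]
        simp
      ext z
      simp only [mem_iUnion, mem_image, Prod.exists]
      rw [step2]
      constructor
      · rintro ⟨k, x, hx, rfl⟩
        obtain ⟨i, y, hy, rfl⟩ := (step x).1 hx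
        exact ⟨k, i, y, hy, rfl⟩
      · rintro ⟨k, i, y, hy, rfl⟩
        exact ⟨k, φ i y, (step _).2 ⟨i, y, hy, rfl⟩, rfl⟩
    · rw [Fintype.sum_prod_type]
      calc ∑ k, ∑ i, (r k * ρ i) ^ s = ∑ k, r k ^ s * ∑ i, ρ i ^ s := by
            refine Finset.sum_congr rfl fun k _ => ?_
            rw [Finset.mul_sum]
            exact Finset.sum_congr rfl fun i _ => Real.mul_rpow (hr0 k).le (hρ i).le
        _ = 1 := by rw [hsum]; simpa using hS
    · rintro ⟨k, i⟩ ⟨k', i'⟩ hne x hx y hy heq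
      by_cases hk : k = k'
      · subst hk
        have hii : i ≠ i' := fun h => hne (by rw [h])
        have h0 : dist (ψ k (φ i x)) (ψ k (φ i' y)) = 0 := by
          rw [dist_eq_zero]; exact heq
        rw [hs] at h0
        rcases mul_eq_zero.1 h0 with h | h
        · exact (hr0 k).ne' h
        · exact h2 i i' hii x hx y hy (dist_eq_zero.1 h)
      · exact hd k k' hk _ (h1 i x hx) _ (h1 i' y hy) heq

theorem ssa_edist {X : Type*} [MetricSpace X] (f : X → X) (r : ℝ) (hr : 0 < r)
    (h : ∀ x y, dist (f x) (f y) = r * dist x y) (x y : X) :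
    edist (f x) (f y) = ENNReal.ofReal r * edist x y := by
  rw [edist_dist, edist_dist, h, ENNReal.ofReal_mul hr.le]

theorem ssa_cont {X : Type*} [MetricSpace X] (f : X → X) (r : ℝ) (hr : 0 < r)
    (h : ∀ x y, dist (f x) (f y) = r * dist x y) : Continuous f :=
  (LipschitzWith.of_dist_le_mul (K := ⟨r, hr.le⟩) (fun x y => (h x y).le)).continuous

/-- Topology of the arc: the arc minus its endpoints is invariant and the images are disjoint. -/
theorem ssa_arc {X ι : Type} [MetricSpace X] (φ : ι → X → X)
    (ρ : ι → ℝ) (hρ : ∀ i, 0 < ρ i)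
    (hsim : ∀ i x y, dist (φ i x) (φ i y) = ρ i * dist x y)
    (γ : Set X) (hmaps : ∀ i, ∀ x ∈ γ, φ i x ∈ γ)
    (hsub : ∀ i j, i ≠ j → ((φ i '' γ) ∩ (φ j '' γ)).Subsingleton)
    (h : ℝ → X) (hc : ContinuousOn h (Icc 0 1)) (hi : InjOn h (Icc 0 1))
    (him : h '' Icc 0 1 = γ) :
    (∀ i, ∀ x ∈ h '' Ioo 0 1, φ i x ∈ h '' Ioo 0 1) ∧
    (∀ i j, i ≠ j → ∀ x ∈ h '' Ioo 0 1, ∀ y ∈ h '' Ioo 0 1, φ i x ≠ φ j y) := by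
  have hmem : ∀ x ∈ Icc (0:ℝ) 1, h x ∈ γ := fun x hx => him ▸ mem_image_of_mem h hx
  have hG : ∀ i, ∃ G : ℝ → ℝ, ∀ x ∈ Icc (0:ℝ) 1, G x ∈ Icc (0:ℝ) 1 ∧ h (G x) = φ i (h x) := by
    intro i
    have : ∀ x : ℝ, ∃ y : ℝ, x ∈ Icc (0:ℝ) 1 → y ∈ Icc (0:ℝ) 1 ∧ h y = φ i (h x) := by
      intro x
      by_cases hx : x ∈ Icc (0:ℝ) 1
      · have := hmaps i _ (hmem x hx)
        rw [← him] at this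
        obtain ⟨y, hy, hxy⟩ := this
        exact ⟨y, fun _ => ⟨hy, hxy⟩⟩
      · exact ⟨0, fun h => absurd h hx⟩
    choose G hG using this
    exact ⟨G, hG⟩
  choose G hG using hG
  have hφi : ∀ i, Function.Injective (φ i) := by
    intro i x y hxy
    have h0 := hsim i x y
    rw [hxy, dist_self] at h0
    rcases mul_eq_zero.1 h0.symm with h | h
    · exact absurd h (hρ i).ne'
    · exact dist_eq_zero.1 h
  have hGi : ∀ i, InjOn (G i) (Icc 0 1) := by
    intro i x hx y hy hxy
    have := congrArg h hxy
    rw [(hG i x hx).2, (hG i y hy).2] at this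
    exact hi hx hy (hφi i this)
  have hGm : ∀ i, MapsTo (G i) (Icc 0 1) (Icc 0 1) := fun i x hx => (hG i x hx).1
  have hemb : Topology.IsClosedEmbedding ((Icc (0:ℝ) 1).domRestrict h) :=
    (continuousOn_iff_continuous_domRestrict.1 hc).isClosedEmbedding (injOn_iff_injective.1 hi)
  have hGc : ∀ i, ContinuousOn (G i) (Icc 0 1) := by
    intro i
    rw [continuousOn_iff_continuous_domRestrict]
    have : Continuous ((hGm i).restrict (G i) _ _) := by
      rw [hemb.isEmbedding.continuous_iff]
      have e : (Icc (0:ℝ) 1).domRestrict h ∘ (hGm i).restrict (G i) _ _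
          = φ i ∘ (Icc (0:ℝ) 1).domRestrict h := by
        funext x
        exact (hG i x.1 x.2).2
      rw [e]
      exact (ssa_cont _ _ (hρ i) (hsim i)).comp (continuousOn_iff_continuous_domRestrict.1 hc)
    exact continuous_subtype_val.comp this
  constructor
  · rintro i _ ⟨x, hx, rfl⟩
    exact ⟨G i x, (ssa_oned (G i) (hGc i) (hGi i) (hGm i) x hx).1,
      (hG i x (Ioo_subset_Icc_self hx)).2⟩
  · rintro i j hij _ ⟨x, hx, rfl⟩ _ ⟨y, hy, rfl⟩ heq
    have hx' := Ioo_subset_Icc_self hx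
    have hy' := Ioo_subset_Icc_self hy
    have hGxy : G i x = G j y := by
      apply hi (hGm i hx') (hGm j hy')
      rw [(hG i x hx').2, (hG j y hy').2, heq]
    have hA := (ssa_oned (G i) (hGc i) (hGi i) (hGm i) x hx).2
    have hB := (ssa_oned (G j) (hGc j) (hGi j) (hGm j) y hy).2
    rw [hGxy] at hA
    have hAB := Filter.inter_mem hA hB
    have hone : ∀ z ∈ G i '' Icc 0 1 ∩ G j '' Icc 0 1, z = G j y := by
      rintro z ⟨⟨a, ha, rfl⟩, ⟨b, hb, hab⟩⟩
      have e1 := (hG i a ha).2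
      have e2 := (hG j b hb).2
      apply hi (hGm i ha) (hGm j hy')
      refine hsub i j hij ⟨?_, ?_⟩ ⟨?_, ?_⟩
      · exact ⟨h a, hmem a ha, e1.symm⟩
      · rw [← hab]; exact ⟨h b, hmem b hb, e2.symm⟩
      · rw [← hGxy]; exact ⟨h x, hmem x hx', (hG i x hx').2.symm⟩
      · exact ⟨h y, hmem y hy', (hG j y hy').2.symm⟩
    have hsing : ({G j y} : Set ℝ) ∈ nhds (G j y) :=
      Filter.mem_of_superset hAB fun z hz => hone z hz
    exact not_isOpen_singleton (G j y) (isOpen_singleton_iff_nhds_eq_pure _ |>.2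
      (le_antisymm (Filter.le_pure_iff.2 hsing) (pure_le_nhds _)))

theorem ssa_ediam_image {X : Type*} [MetricSpace X] (f : X → X) (r : ℝ) (hr : 0 < r)
    (h : ∀ x y, dist (f x) (f y) = r * dist x y) (A : Set X) :
    Metric.ediam (f '' A) ≤ ENNReal.ofReal r * Metric.ediam A := by
  refine Metric.ediam_le ?_
  rintro _ ⟨x, hx, rfl⟩ _ ⟨y, hy, rfl⟩
  rw [ssa_edist f r hr h]
  gcongr
  exact Metric.edist_le_ediam_of_mem hx hy

theorem ssa_main {X ι : Type} [MetricSpace X] [Fintype ι] (φ : ι → X → X)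
    (ρ : ι → ℝ) (hρ : ∀ i, ρ i ∈ Ioo (0:ℝ) 1)
    (hsim : ∀ i x y, dist (φ i x) (φ i y) = ρ i * dist x y)
    (γ : Set X) (hne : γ.Nonempty) (hcomp : IsCompact γ) (hattr : γ = ⋃ i, φ i '' γ)
    (hsub : ∀ i j, i ≠ j → ((φ i '' γ) ∩ (φ j '' γ)).Subsingleton)
    (h : ℝ → X) (hc : ContinuousOn h (Icc 0 1)) (hi : InjOn h (Icc 0 1))
    (him : h '' Icc 0 1 = γ)
    (s : ℝ) (hs : 0 < s) (hsum : ∑ i, ρ i ^ s = 1) :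
    dimH γ = ENNReal.ofReal s := by
  letI : MeasurableSpace X := borel X
  haveI : BorelSpace X := ⟨rfl⟩
  have hι : Nonempty ι := by
    by_contra hemp
    rw [not_nonempty_iff] at hemp
    simp at hsum
  obtain ⟨i0, hi0⟩ := Finite.exists_max ρ
  set R := ρ i0 with hRdef
  have hR0 : 0 < R := (hρ i0).1
  have hR1 : R < 1 := (hρ i0).2
  have hmaps : ∀ i, ∀ x ∈ γ, φ i x ∈ γ := by
    intro i x hx
    rw [hattr]
    exact mem_iUnion.2 ⟨i, x, hx, rfl⟩
  obtain ⟨h1, h2⟩ := ssa_arc φ ρ (fun i => (hρ i).1) hsim γ hmaps hsub h hc hi him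
  have hfam := ssa_iterate φ ρ (fun i => (hρ i).1) R hi0 hsim γ _ hattr h1 h2 s hsum
  choose κ _ ψ r hr0 hrR hψ hcov hS hd using hfam
  have hDfin : Metric.ediam γ ≠ ⊤ := hcomp.isBounded.ediam_ne_top
  have hψmaps : ∀ n k, ∀ x ∈ γ, ψ n k x ∈ γ := by
    intro n k x hx
    rw [hcov n]
    exact mem_iUnion.2 ⟨k, x, hx, rfl⟩
  have hRn : Filter.Tendsto (fun n : ℕ => ENNReal.ofReal (R ^ n) * Metric.ediam γ)
      Filter.atTop (nhds 0) := by
    have := ENNReal.tendsto_ofReal (tendsto_pow_atTop_nhds_zero_of_lt_one hR0.le hR1)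
    have := ENNReal.Tendsto.mul_const (b := Metric.ediam γ) this (Or.inr hDfin)
    simpa using this
  have hdiam : ∀ n k, Metric.ediam (ψ n k '' γ) ≤ ENNReal.ofReal (R ^ n) * Metric.ediam γ := by
    intro n k
    refine (ssa_ediam_image _ _ (hr0 n k) (hψ n k) γ).trans ?_
    gcongr
    exact hrR n k
  apply le_antisymm
  · have hle : Measure.hausdorffMeasure s γ ≤ Metric.ediam γ ^ s := by
      refine (Measure.hausdorffMeasure_le_liminf_sum s γ (l := Filter.atTop) _ hRn
        (fun n k => ψ n k '' γ) (Filter.Eventually.of_forall hdiam)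
        (Filter.Eventually.of_forall fun n => (hcov n).subset)).trans ?_
      refine Filter.liminf_le_of_le (by isBoundedDefault) ?_
      intro b hb
      obtain ⟨n, hn⟩ := hb.exists
      refine hn.trans ?_
      calc ∑ k, Metric.ediam (ψ n k '' γ) ^ s
          ≤ ∑ k, ENNReal.ofReal (r n k ^ s) * Metric.ediam γ ^ s := by
            refine Finset.sum_le_sum fun k _ => ?_
            rw [← ENNReal.ofReal_rpow_of_pos (hr0 n k), ← ENNReal.mul_rpow_of_nonneg _ _ hs.le]
            exact ENNReal.rpow_le_rpow (ssa_ediam_image _ _ (hr0 n k) (hψ n k) γ) hs.le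
        _ = Metric.ediam γ ^ s := by
            rw [← Finset.sum_mul, ← ENNReal.ofReal_sum_of_nonneg
              (fun k _ => (Real.rpow_pos_of_pos (hr0 n k) s).le), hS]
            simp
    refine dimH_le_of_hausdorffMeasure_ne_top (d := s.toNNReal) ?_
    rw [Real.coe_toNNReal s hs.le]
    exact ne_top_of_le_ne_top (ENNReal.rpow_ne_top_of_nonneg hs.le hDfin) hle
  · -- a small piece inside the open arc
    have hu : ∃ n k, ∀ x ∈ γ, ψ n k x ∈ h '' Ioo 0 1 := by
      have m0 : (0:ℝ) ∈ Icc (0:ℝ) 1 := by simp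
      have m1 : (1:ℝ) ∈ Icc (0:ℝ) 1 := by simp
      have mh : (1/2:ℝ) ∈ Icc (0:ℝ) 1 := by constructor <;> norm_num
      have e0 : 0 < edist (h (1/2)) (h 0) := by
        rw [edist_pos]
        intro e
        have := hi mh m0 e
        norm_num at this
      have e1 : 0 < edist (h (1/2)) (h 1) := by
        rw [edist_pos]
        intro e
        have := hi mh m1 e
        norm_num at this
      obtain ⟨n, hn0, hn1⟩ := ((hRn.eventually (gt_mem_nhds e0)).and
        (hRn.eventually (gt_mem_nhds e1))).exists
      have hmid : h (1/2) ∈ γ := him ▸ mem_image_of_mem h mh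
      have hmid' := hmid
      rw [hcov n] at hmid'
      obtain ⟨k, hk⟩ := mem_iUnion.1 hmid'
      refine ⟨n, k, fun x hx => ?_⟩
      have hxγ := hψmaps n k x hx
      rw [← him] at hxγ
      obtain ⟨z, hz, hzx⟩ := hxγ
      have hdist : edist (h (1/2)) (ψ n k x) ≤ ENNReal.ofReal (R ^ n) * Metric.ediam γ :=
        (Metric.edist_le_ediam_of_mem hk (mem_image_of_mem _ hx)).trans (hdiam n k)
      rw [← hzx] at hdist
      refine ⟨z, ⟨lt_of_le_of_ne hz.1 ?_, lt_of_le_of_ne hz.2 ?_⟩, hzx⟩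
      · rintro rfl
        exact absurd hdist (not_le.2 hn0)
      · rintro rfl
        exact absurd hdist (not_le.2 hn1)
    obtain ⟨m, u, hu⟩ := hu
    set q := r m u with hq
    have hq0 : 0 < q := hr0 m u
    have hq1 : q ≤ 1 := (hrR m u).trans (pow_le_one₀ hR0.le hR1.le)
    refine le_of_forall_lt fun c hc => ?_
    obtain ⟨t', ht1, ht2⟩ := exists_between hc
    have ht'top : t' ≠ ⊤ := ne_top_of_lt ht2
    set t := t'.toReal with htdef
    have ht' : ENNReal.ofReal t = t' := ENNReal.ofReal_toReal ht'top
    have ht0 : 0 < t := ENNReal.toReal_pos (ne_bot_of_gt ht1) ht'top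
    have hts : t < s := by
      rw [← ht'] at ht2
      exact (ENNReal.ofReal_lt_ofReal_iff hs).1 ht2
    refine ht1.trans_le ?_
    rw [← ht']
    -- choose a large level
    have hlim : Filter.Tendsto (fun n : ℕ => (R ^ (s - t)) ^ n) Filter.atTop (nhds 0) :=
      tendsto_pow_atTop_nhds_zero_of_lt_one (Real.rpow_nonneg hR0.le _)
        (Real.rpow_lt_one hR0.le hR1 (by linarith))
    have hqt : 0 < q ^ t := Real.rpow_pos_of_pos hq0 t
    obtain ⟨n, hnlt, hn1⟩ := ((hlim.eventually (gt_mem_nhds hqt)).and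
      (Filter.eventually_ge_atTop 1)).exists
    have hbig : 1 ≤ ∑ k, (r n k * q) ^ t := by
      have hRnpos : 0 < (R ^ (s - t)) ^ n := pow_pos (Real.rpow_pos_of_pos hR0 _) n
      have hterm : ∀ k, r n k ^ s ≤ (r n k * q) ^ t := by
        intro k
        have hrk := hr0 n k
        calc r n k ^ s = r n k ^ t * r n k ^ (s - t) := by
              rw [← Real.rpow_add hrk]; congr 1; ring
          _ ≤ r n k ^ t * q ^ t := by
              have : r n k ^ (s - t) ≤ q ^ t := by
                calc r n k ^ (s - t) ≤ (R ^ n) ^ (s - t) :=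
                      Real.rpow_le_rpow hrk.le (hrR n k) (by linarith)
                  _ = (R ^ (s - t)) ^ n := by
                      rw [← Real.rpow_natCast, ← Real.rpow_natCast, ← Real.rpow_mul hR0.le,
                        ← Real.rpow_mul hR0.le, mul_comm]
                  _ ≤ q ^ t := hnlt.le
              have hp := Real.rpow_pos_of_pos hrk t
              gcongr
          _ = (r n k * q) ^ t := (Real.mul_rpow hrk.le hq0.le).symm
      calc (1:ℝ) = ∑ k, r n k ^ s := (hS n).symm
        _ ≤ _ := Finset.sum_le_sum fun k _ => hterm k
    have hlt1 : ∀ k, r n k * q < 1 := by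
      intro k
      have : r n k < 1 := (hrR n k).trans_lt (pow_lt_one₀ hR0.le hR1 (by omega))
      calc r n k * q ≤ r n k * 1 := by
            have := hr0 n k
            gcongr
        _ < 1 := by linarith
    have hpos : ∀ k, 0 < r n k * q := fun k => mul_pos (hr0 n k) hq0
    haveI : Nontrivial (κ n) := by
      by_contra hnt
      rw [not_nontrivial_iff_subsingleton] at hnt
      rcases isEmpty_or_nonempty (κ n) with he | ⟨⟨k0⟩⟩
      · simp at hbig
        linarith
      · rw [Fintype.sum_subsingleton _ k0] at hbig
        exact absurd hbig (not_le.2 (Real.rpow_lt_one (hpos k0).le (hlt1 k0) ht0))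
    have hcomp_sim : ∀ k x y, dist (ψ n k (ψ m u x)) (ψ n k (ψ m u y))
        = (r n k * q) * dist x y := by
      intro k x y
      rw [hψ, hψ, mul_assoc]
    refine ssa_lower γ hne hcomp (fun k x => ψ n k (ψ m u x))
      (fun k => ENNReal.ofReal (r n k * q)) ?_ ?_ ?_ ?_ ?_ t ht0 ?_ ?_
    · intro k
      simpa using hpos k
    · intro k
      exact ENNReal.ofReal_ne_top
    · intro k
      exact ssa_edist _ _ (hpos k) (hcomp_sim k)
    · intro k
      exact ssa_cont _ _ (hpos k) (hcomp_sim k)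
    · intro k x hx
      exact hψmaps _ _ _ (hψmaps _ _ _ hx)
    · have : ∑ k, ENNReal.ofReal (r n k * q) ^ t = ENNReal.ofReal (∑ k, (r n k * q) ^ t) := by
        rw [ENNReal.ofReal_sum_of_nonneg fun k _ => (Real.rpow_pos_of_pos (hpos k) t).le]
        exact Finset.sum_congr rfl fun k _ => ENNReal.ofReal_rpow_of_pos (hpos k)
      rw [this]
      simpa using ENNReal.ofReal_le_ofReal hbig
    · intro k k' hk
      rw [Set.disjoint_left]
      rintro _ ⟨x, hx, rfl⟩ ⟨y, hy, hxy⟩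
      exact hd n k k' hk _ (hu x hx) _ (hu y hy) hxy.symm

/-- For a self-similar arc, the Hausdorff dimension equals the similarity dimension
(no open set condition assumed). -/
theorem selfSimilarArc_dimH_eq_similarity_dimension
    (d N : ℕ)
    (φ : Fin N → EuclideanSpace ℝ (Fin d) → EuclideanSpace ℝ (Fin d))
    (ρ : Fin N → ℝ) (hρ : ∀ i, ρ i ∈ Set.Ioo (0 : ℝ) 1)
    (hsim : ∀ i x y, dist (φ i x) (φ i y) = ρ i * dist x y)
    -- γ is the attractor of {φ_1, …, φ_N}
    (γ : Set (EuclideanSpace ℝ (Fin d)))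
    (hγne : γ.Nonempty) (hγcomp : IsCompact γ)
    (hattr : γ = ⋃ i, φ i '' γ)
    -- γ is an arc
    (harc : IsArc γ)
    -- adjacent pieces meet in a single point, non-adjacent pieces are disjoint
    (hadj : ∀ i j : Fin N, (i : ℕ) + 1 = (j : ℕ) →
      ∃ x, (φ i '' γ) ∩ (φ j '' γ) = {x})
    (hfar : ∀ i j : Fin N, (i : ℕ) + 1 < (j : ℕ) →
      (φ i '' γ) ∩ (φ j '' γ) = ∅)
    -- s is the similarity dimension: the unique s > 0 with Σ ρ_i ^ s = 1
    (s : ℝ) (hs : 0 < s) (hsum : ∑ i, ρ i ^ s = 1) :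
    dimH γ = ENNReal.ofReal s := by
  obtain ⟨h, hc, hi, him⟩ := harc
  refine ssa_main φ ρ hρ hsim γ hγne hγcomp hattr ?_ h hc hi him s hs hsum
  have hlt : ∀ i j : Fin N, (i : ℕ) < (j : ℕ) → ((φ i '' γ) ∩ (φ j '' γ)).Subsingleton := by
    intro i j hij
    rcases Nat.lt_or_ge ((i : ℕ) + 1) j with h1 | h1
    · rw [hfar i j h1]
      exact Set.subsingleton_empty
    · obtain ⟨x, hx⟩ := hadj i j (by omega)
      rw [hx]
      exact Set.subsingleton_singleton
  intro i j hij
  rcases lt_or_gt_of_ne (fun h' => hij (Fin.ext h') : (i : ℕ) ≠ (j : ℕ)) with h1 | h1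
  · exact hlt i j h1
  · rw [Set.inter_comm]
    exact hlt j i h1
end
end

section
/- Let E ⊆ ℝ^d be compact and f : E → ℝ a function. Suppose that for every ε > 0 there exists δ > 0 such that for all x, y ∈ E with 0 < |x − y| < δ one has |f(x) − f(y)| / |x − y| < ε. Then there exists a C¹ function F : ℝ^d → ℝ such that F(x) = f(x) for all x ∈ E and the derivative of F vanishes at every point of E. -/
open Set

noncomputable section

open MeasureTheory Metric Filter Topology

/-- the kernel -/
def wK {d : ℕ} (E : Set (EuclideanSpace ℝ (Fin d))) (φ : EuclideanSpace ℝ (Fin d) → ℝ)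
    (x y : EuclideanSpace ℝ (Fin d)) : ℝ := φ ((infDist y E)⁻¹ • (x - y))

/-- the derivative of the kernel in `x` -/
def wK' {d : ℕ} (E : Set (EuclideanSpace ℝ (Fin d))) (φ : EuclideanSpace ℝ (Fin d) → ℝ)
    (x y : EuclideanSpace ℝ (Fin d)) : EuclideanSpace ℝ (Fin d) →L[ℝ] ℝ :=
  (infDist y E)⁻¹ • fderiv ℝ φ ((infDist y E)⁻¹ • (x - y))

/-- properties of the bump used -/
structure WBump {d : ℕ} (φ : EuclideanSpace ℝ (Fin d) → ℝ) (C : ℝ) : Prop where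
  cd : ContDiff ℝ 1 φ
  nonneg : ∀ u, 0 ≤ φ u
  le_one : ∀ u, φ u ≤ 1
  one : ∀ u, ‖u‖ ≤ 1/4 → φ u = 1
  zero : ∀ u, 1/2 ≤ ‖u‖ → φ u = 0
  dzero : ∀ u, 1/2 ≤ ‖u‖ → fderiv ℝ φ u = 0
  bd : ∀ u, ‖fderiv ℝ φ u‖ ≤ C
  Cpos : 0 < C

theorem exists_wbump (d : ℕ) : ∃ (φ : EuclideanSpace ℝ (Fin d) → ℝ) (C : ℝ), WBump φ C := by
  let φ : ContDiffBump (0 : EuclideanSpace ℝ (Fin d)) := ⟨1/4, 1/2, by norm_num, by norm_num⟩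
  have hcd : ContDiff ℝ 1 φ := φ.contDiff
  have hs : HasCompactSupport (fderiv ℝ φ) := φ.hasCompactSupport.fderiv (𝕜 := ℝ)
  obtain ⟨C, hC⟩ := hs.exists_bound_of_continuous (hcd.continuous_fderiv (by norm_num))
  have hz : ∀ u : EuclideanSpace ℝ (Fin d), 1/2 ≤ ‖u‖ → φ u = 0 := fun u hu =>
    φ.zero_of_le_dist (by simpa [φ] using hu)
  refine ⟨φ, |C| + 1, hcd, fun u => φ.nonneg, fun u => φ.le_one, fun u hu => ?_, hz,
    fun u hu => ?_, fun u => (hC u).trans (by linarith [le_abs_self C]), by positivity⟩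
  · exact φ.one_of_mem_closedBall (by simpa [φ] using hu)
  · apply IsLocalMin.fderiv_eq_zero
    refine Eventually.of_forall fun v => ?_
    rw [hz u hu]; exact φ.nonneg

section
variable {d : ℕ} {E : Set (EuclideanSpace ℝ (Fin d))} {φ : EuclideanSpace ℝ (Fin d) → ℝ} {C : ℝ}

theorem wnear (x y : EuclideanSpace ℝ (Fin d)) (hy : 0 < infDist y E)
    (h : ‖(infDist y E)⁻¹ • (x - y)‖ < 1/2) :
    dist x y < infDist x E ∧ 2/3 * infDist x E ≤ infDist y E := by
  rw [norm_smul, norm_inv, Real.norm_of_nonneg hy.le, ← dist_eq_norm, inv_mul_lt_iff₀ hy] at h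
  have h1 := infDist_le_infDist_add_dist (s := E) (x := x) (y := y)
  have h2 := infDist_le_infDist_add_dist (s := E) (x := y) (y := x)
  rw [dist_comm y x] at h2
  constructor <;> linarith

theorem wK_bound (hφ : WBump φ C) (x y : EuclideanSpace ℝ (Fin d)) (hy : 0 < infDist y E) :
    wK E φ x y ≤ (ball x (infDist x E)).indicator 1 y := by
  by_cases h : ‖(infDist y E)⁻¹ • (x - y)‖ < 1/2
  · have := (wnear x y hy h).1
    rw [Set.indicator_of_mem (by rw [mem_ball, dist_comm]; exact this)]
    exact hφ.le_one _
  · rw [wK, hφ.zero _ (not_lt.1 h)]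
    exact Set.indicator_nonneg (by simp) _

theorem wK'_bound (hφ : WBump φ C) (x y : EuclideanSpace ℝ (Fin d)) (hx : 0 < infDist x E)
    (hy : 0 < infDist y E) :
    ‖wK' E φ x y‖ ≤ (ball x (infDist x E)).indicator (fun _ => 3/2 * C / infDist x E) y := by
  have hC := hφ.Cpos
  by_cases h : ‖(infDist y E)⁻¹ • (x - y)‖ < 1/2
  · have := wnear x y hy h
    rw [Set.indicator_of_mem (by rw [mem_ball, dist_comm]; exact this.1)]
    rw [wK', norm_smul, norm_inv, Real.norm_of_nonneg hy.le]
    calc _ ≤ (2/3 * infDist x E)⁻¹ * C := by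
          gcongr
          · exact this.2
          · exact hφ.bd _
      _ = _ := by field_simp
  · rw [wK', hφ.dzero _ (not_lt.1 h), smul_zero, norm_zero]
    exact Set.indicator_nonneg (fun _ _ => by positivity) _

theorem wK_meas (hφ : WBump φ C) (x : EuclideanSpace ℝ (Fin d)) : Measurable (wK E φ x) := by
  have h1 : Measurable φ := hφ.cd.continuous.measurable
  have h2 : Measurable (fun y : EuclideanSpace ℝ (Fin d) => infDist y E) := measurable_infDist
  exact h1.comp (h2.inv.smul (measurable_const.sub measurable_id))

theorem wK'_meas (hφ : WBump φ C) (x : EuclideanSpace ℝ (Fin d)) : Measurable (wK' E φ x) := by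
  have h1 : Measurable (fderiv ℝ φ) := (hφ.cd.continuous_fderiv (by norm_num)).measurable
  have h2 : Measurable (fun y : EuclideanSpace ℝ (Fin d) => infDist y E) := measurable_infDist
  exact h2.inv.smul (h1.comp (h2.inv.smul (measurable_const.sub measurable_id)))

theorem wK_deriv (hφ : WBump φ C) (x y : EuclideanSpace ℝ (Fin d)) :
    HasFDerivAt (fun x => wK E φ x y) (wK' E φ x y) x := by
  have h1 : HasFDerivAt φ (fderiv ℝ φ ((infDist y E)⁻¹ • (x - y))) ((infDist y E)⁻¹ • (x - y)) :=
    (hφ.cd.differentiable (by norm_num) _).hasFDerivAt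
  have h2 : HasFDerivAt (fun x : EuclideanSpace ℝ (Fin d) => (infDist y E)⁻¹ • (x - y))
    ((infDist y E)⁻¹ • ContinuousLinearMap.id ℝ _) x :=
    ((hasFDerivAt_id (𝕜 := ℝ) x).sub_const y).const_smul ((infDist y E)⁻¹)
  have := h1.comp x h2
  have e : wK' E φ x y = (fderiv ℝ φ ((infDist y E)⁻¹ • (x - y))).comp
      ((infDist y E)⁻¹ • ContinuousLinearMap.id ℝ (EuclideanSpace ℝ (Fin d))) := by
    ext v; simp [wK']
  rw [e]
  exact this

theorem wpos (hE : IsClosed E) (hne : E.Nonempty) :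
    ∀ᵐ y ∂(volume.restrict Eᶜ), 0 < infDist y E := by
  filter_upwards [ae_restrict_mem hE.measurableSet.compl] with y hy
  exact (hE.notMem_iff_infDist_pos hne).1 hy

theorem wind_int (x : EuclideanSpace ℝ (Fin d)) (r c : ℝ) :
    Integrable ((ball x r).indicator (fun _ => c)) (volume.restrict Eᶜ) := by
  apply Integrable.restrict
  rw [integrable_indicator_iff measurableSet_ball]
  exact integrableOn_const (measure_ball_lt_top).ne

/-- local uniform bound for the derivative integrand -/
theorem wK'_loc (hφ : WBump φ C) (x₀ x y : EuclideanSpace ℝ (Fin d)) (hx : 0 < infDist x₀ E)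
    (hxx : x ∈ ball x₀ (infDist x₀ E / 2)) (hy : 0 < infDist y E) :
    ‖wK' E φ x y‖ ≤ (ball x₀ (2 * infDist x₀ E)).indicator (fun _ => 3 * C / infDist x₀ E) y := by
  have hC := hφ.Cpos
  rw [mem_ball] at hxx
  have h1 := infDist_le_infDist_add_dist (s := E) (x := x) (y := x₀)
  have h2 := infDist_le_infDist_add_dist (s := E) (x := x₀) (y := x)
  rw [dist_comm x₀ x] at h2
  have hx' : 0 < infDist x E := by linarith
  refine (wK'_bound hφ x y hx' hy).trans ?_
  by_cases h : y ∈ ball x (infDist x E)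
  · have h3 : y ∈ ball x₀ (2 * infDist x₀ E) := by
      rw [mem_ball] at h ⊢
      linarith [dist_triangle y x x₀]
    rw [Set.indicator_of_mem h, Set.indicator_of_mem h3, div_le_div_iff₀ hx' hx]
    nlinarith
  · rw [Set.indicator_of_notMem h]
    exact Set.indicator_nonneg (fun _ _ => by positivity) _

theorem wI_int (hE : IsClosed E) (hne : E.Nonempty) (hφ : WBump φ C)
    {h : EuclideanSpace ℝ (Fin d) → ℝ}
    (hm : Measurable h) {M : ℝ} (hM : ∀ y, |h y| ≤ M) (x : EuclideanSpace ℝ (Fin d)) :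
    Integrable (fun y => h y * wK E φ x y) (volume.restrict Eᶜ) := by
  refine (wind_int (E := E) x (infDist x E) M).mono'
    (hm.mul (wK_meas hφ x)).aestronglyMeasurable ?_
  filter_upwards [wpos hE hne] with y hy
  have h1 := wK_bound hφ x y hy
  have h0 : 0 ≤ wK E φ x y := hφ.nonneg _
  have hM0 : 0 ≤ M := (abs_nonneg _).trans (hM y)
  rw [norm_mul, Real.norm_eq_abs, Real.norm_of_nonneg h0]
  refine (mul_le_mul (hM y) h1 h0 hM0).trans (le_of_eq ?_)
  by_cases hb : y ∈ ball x (infDist x E) <;> simp [Set.indicator, hb]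

theorem wI_deriv (hE : IsClosed E) (hne : E.Nonempty) (hφ : WBump φ C)
    {h : EuclideanSpace ℝ (Fin d) → ℝ}
    (hm : Measurable h) {M : ℝ} (hM : ∀ y, |h y| ≤ M) (x₀ : EuclideanSpace ℝ (Fin d))
    (hx : x₀ ∉ E) :
    HasFDerivAt (fun x => ∫ y in Eᶜ, h y * wK E φ x y) (∫ y in Eᶜ, h y • wK' E φ x₀ y) x₀ ∧
    ContinuousAt (fun x => ∫ y in Eᶜ, h y • wK' E φ x y) x₀ := by
  have hx0 : 0 < infDist x₀ E := (hE.notMem_iff_infDist_pos hne).1 hx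
  have hnb : ball x₀ (infDist x₀ E / 2) ∈ 𝓝 x₀ := ball_mem_nhds _ (by positivity)
  have hb : ∀ᵐ y ∂(volume.restrict Eᶜ), ∀ x ∈ ball x₀ (infDist x₀ E / 2), ‖h y • wK' E φ x y‖ ≤
      M * (ball x₀ (2 * infDist x₀ E)).indicator (fun _ => 3 * C / infDist x₀ E) y := by
    filter_upwards [wpos hE hne] with y hy x hxx
    rw [norm_smul]
    exact mul_le_mul (hM y) (wK'_loc hφ x₀ x y hx0 hxx hy) (norm_nonneg _)
      ((abs_nonneg _).trans (hM y))
  have hbi := (wind_int (E := E) x₀ (2 * infDist x₀ E) (3 * C / infDist x₀ E)).const_mul M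
  constructor
  · refine hasFDerivAt_integral_of_dominated_of_fderiv_le hnb ?_ (wI_int hE hne hφ hm hM x₀)
      ?_ hb hbi ?_
    · exact Eventually.of_forall fun x => (hm.mul (wK_meas hφ x)).aestronglyMeasurable
    · exact (hm.smul (wK'_meas hφ x₀)).aestronglyMeasurable
    · exact Eventually.of_forall fun y x _ => (wK_deriv hφ x y).const_mul (h y)
  · refine continuousAt_of_dominated (Eventually.of_forall fun x =>
      (hm.smul (wK'_meas hφ x)).aestronglyMeasurable) ?_ hbi ?_
    · filter_upwards [hnb] with x hx'
      filter_upwards [hb] with y hy using hy x hx'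
    · refine Eventually.of_forall fun y => Continuous.continuousAt ?_
      have := hφ.cd.continuous_fderiv (by norm_num)
      unfold wK'
      fun_prop

theorem wI_le (hE : IsClosed E) (hne : E.Nonempty) (hφ : WBump φ C)
    {h : EuclideanSpace ℝ (Fin d) → ℝ}
    {s : ℝ} (x₀ : EuclideanSpace ℝ (Fin d))
    (hs : ∀ y ∈ ball x₀ (infDist x₀ E), y ∉ E → |h y| ≤ s) :
    |∫ y in Eᶜ, h y * wK E φ x₀ y| ≤ s * ∫ y in Eᶜ, 1 * wK E φ x₀ y := by
  rw [← integral_const_mul, ← Real.norm_eq_abs]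
  refine norm_integral_le_of_norm_le ((wI_int (h := fun _ => 1) (M := 1) hE hne hφ
    measurable_const (by simp) x₀).const_mul s) ?_
  filter_upwards [wpos hE hne] with y hy
  have h0 : 0 ≤ wK E φ x₀ y := hφ.nonneg _
  have h1 := wK_bound hφ x₀ y hy
  rw [norm_mul, Real.norm_eq_abs, Real.norm_of_nonneg h0, one_mul]
  by_cases hb : y ∈ ball x₀ (infDist x₀ E)
  · have := hs y hb ((hE.notMem_iff_infDist_pos hne).2 hy)
    gcongr
  · rw [Set.indicator_of_notMem hb] at h1
    simp [le_antisymm h1 h0]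

theorem wI'_le (hE : IsClosed E) (hne : E.Nonempty) (hφ : WBump φ C)
    {h : EuclideanSpace ℝ (Fin d) → ℝ}
    {s : ℝ} (hs0 : 0 ≤ s) (x₀ : EuclideanSpace ℝ (Fin d)) (hx : x₀ ∉ E)
    (hs : ∀ y ∈ ball x₀ (infDist x₀ E), y ∉ E → |h y| ≤ s) :
    ‖∫ y in Eᶜ, h y • wK' E φ x₀ y‖ ≤
      s * (3/2 * C / infDist x₀ E * volume.real (ball x₀ (infDist x₀ E))) := by
  have hx0 : 0 < infDist x₀ E := (hE.notMem_iff_infDist_pos hne).1 hx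
  have hC := hφ.Cpos
  have : ‖∫ y in Eᶜ, h y • wK' E φ x₀ y‖ ≤ ∫ y in Eᶜ,
      s * (ball x₀ (infDist x₀ E)).indicator (fun _ => 3/2 * C / infDist x₀ E) y := by
    refine norm_integral_le_of_norm_le ((wind_int (E := E) _ _ _).const_mul s) ?_
    filter_upwards [wpos hE hne] with y hy
    have h1 := wK'_bound hφ x₀ y hx0 hy
    rw [norm_smul]
    by_cases hb : y ∈ ball x₀ (infDist x₀ E)
    · have := hs y hb ((hE.notMem_iff_infDist_pos hne).2 hy)
      rw [Real.norm_eq_abs]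
      gcongr
    · rw [Set.indicator_of_notMem hb] at h1 ⊢
      have : ‖wK' E φ x₀ y‖ = 0 := le_antisymm h1 (norm_nonneg _)
      simp [this]
  refine this.trans ?_
  rw [integral_const_mul]
  gcongr
  calc _ ≤ ∫ y, (ball x₀ (infDist x₀ E)).indicator (fun _ => 3/2 * C / infDist x₀ E) y := by
        refine setIntegral_le_integral ?_ (Eventually.of_forall fun y =>
          Set.indicator_nonneg (fun _ _ => by positivity) _)
        rw [integrable_indicator_iff measurableSet_ball]
        exact integrableOn_const (measure_ball_lt_top).ne
    _ = _ := by
        rw [integral_indicator measurableSet_ball]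
        simp [mul_comm]

theorem wI_ge (hE : IsClosed E) (hne : E.Nonempty) (hφ : WBump φ C)
    (x₀ : EuclideanSpace ℝ (Fin d)) (hx : x₀ ∉ E) :
    ((5:ℝ)^d)⁻¹ * volume.real (ball x₀ (infDist x₀ E)) ≤ ∫ y in Eᶜ, 1 * wK E φ x₀ y := by
  have hx0 : 0 < infDist x₀ E := (hE.notMem_iff_infDist_pos hne).1 hx
  have hv : ((5:ℝ)^d)⁻¹ * volume.real (ball x₀ (infDist x₀ E)) =
      volume.real (ball x₀ (infDist x₀ E / 5)) := by
    simp only [Measure.real]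
    rw [Measure.addHaar_ball_of_pos _ _ hx0,
      Measure.addHaar_ball_of_pos _ _ (by positivity : 0 < infDist x₀ E / 5)]
    simp only [ENNReal.toReal_mul, finrank_euclideanSpace_fin]
    rw [ENNReal.toReal_ofReal (by positivity), ENNReal.toReal_ofReal (by positivity), div_pow]
    ring
  have hgood : ∀ y ∈ ball x₀ (infDist x₀ E / 5), 4/5 * infDist x₀ E ≤ infDist y E := by
    intro y hy
    rw [mem_ball, dist_comm] at hy
    linarith [infDist_le_infDist_add_dist (s := E) (x := x₀) (y := y)]
  have hsub : ball x₀ (infDist x₀ E / 5) ⊆ Eᶜ := fun y hy =>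
    (hE.notMem_iff_infDist_pos hne).2 (by linarith [hgood y hy])
  have hi := wI_int (h := fun _ => 1) (M := 1) hE hne hφ measurable_const (by simp) x₀
  rw [hv]
  calc volume.real (ball x₀ (infDist x₀ E / 5)) = ∫ y in ball x₀ (infDist x₀ E / 5), (1:ℝ) := by
        simp
    _ = ∫ y in ball x₀ (infDist x₀ E / 5), 1 * wK E φ x₀ y := by
        refine setIntegral_congr_fun measurableSet_ball fun y hy => ?_
        have h1 := hgood y hy
        have h2 : 0 < infDist y E := by linarith
        rw [mem_ball, dist_comm] at hy
        simp only [one_mul, wK]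
        rw [hφ.one]
        rw [norm_smul, norm_inv, Real.norm_of_nonneg h2.le, ← dist_eq_norm, inv_mul_le_iff₀ h2]
        linarith
    _ ≤ _ := by
        refine setIntegral_mono_set hi (Eventually.of_forall fun y => ?_) hsub.eventuallyLE
        simpa [wK] using hφ.nonneg _

/-- the measurable quasi-nearest-point extension -/
theorem exists_wh (hE : IsClosed E) (hne : E.Nonempty) (f : EuclideanSpace ℝ (Fin d) → ℝ) :
    ∃ h : EuclideanSpace ℝ (Fin d) → ℝ, Measurable h ∧ (∀ y, ∃ z ∈ E, h y = f z) ∧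
      ∀ y, y ∉ E → ∃ z ∈ E, h y = f z ∧ dist y z < 2 * infDist y E := by
  classical
  have : Nonempty E := hne.to_subtype
  let z : ℕ → E := TopologicalSpace.denseSeq E
  have hz : DenseRange z := TopologicalSpace.denseRange_denseSeq E
  let p : EuclideanSpace ℝ (Fin d) → ℕ → Prop := fun y n =>
    y ∈ E ∨ dist y (z n) < 2 * infDist y E
  have hp : ∀ y, ∃ n, p y n := by
    intro y
    by_cases hy : y ∈ E
    · exact ⟨0, Or.inl hy⟩
    have h0 := (hE.notMem_iff_infDist_pos hne).1 hy
    obtain ⟨w, hw, hd⟩ := (infDist_lt_iff hne).1 (by linarith : infDist y E < 2 * infDist y E)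
    have ho : IsOpen {w : E | dist y w < 2 * infDist y E} :=
      isOpen_lt (by fun_prop) continuous_const
    obtain ⟨n, hn⟩ := hz.exists_mem_open ho ⟨⟨w, hw⟩, hd⟩
    exact ⟨n, Or.inr hn⟩
  have hmeas : Measurable fun y => Nat.find (hp y) := by
    refine measurable_find hp fun k => ?_
    refine MeasurableSet.union hE.measurableSet ?_
    exact measurableSet_lt (measurable_id.dist measurable_const)
      (measurable_infDist.const_mul 2)
  refine ⟨fun y => f (z (Nat.find (hp y))), ?_, fun y => ⟨_, (z _).2, rfl⟩, fun y hy => ?_⟩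
  · exact (measurable_from_top (f := fun n : ℕ => f (z n))).comp hmeas
  · exact ⟨_, (z _).2, rfl, (Nat.find_spec (hp y)).resolve_left hy⟩

/-- Off `E` the quotient is differentiable with a continuous derivative, with estimates. -/
theorem wQ (hE : IsClosed E) (hne : E.Nonempty) (hφ : WBump φ C)
    {h : EuclideanSpace ℝ (Fin d) → ℝ}
    (hm : Measurable h) {M : ℝ} (hM : ∀ y, |h y| ≤ M) :
    ∃ G' : EuclideanSpace ℝ (Fin d) → EuclideanSpace ℝ (Fin d) →L[ℝ] ℝ,
      (∀ x ∉ E, HasFDerivAt (fun x => (∫ y in Eᶜ, h y * wK E φ x y) *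
        (∫ y in Eᶜ, 1 * wK E φ x y)⁻¹) (G' x) x) ∧
      (∀ x ∉ E, ContinuousAt G' x) ∧
      ∀ x ∉ E, ∀ s ≥ 0, (∀ y ∈ ball x (infDist x E), y ∉ E → |h y| ≤ s) →
        |(∫ y in Eᶜ, h y * wK E φ x y) * (∫ y in Eᶜ, 1 * wK E φ x y)⁻¹| ≤ s ∧
        ‖G' x‖ ≤ 3 * C * 5 ^ d * s / infDist x E := by
  set J := fun x => ∫ y in Eᶜ, h y * wK E φ x y with hJ
  set I := fun x => ∫ y in Eᶜ, 1 * wK E φ x y with hI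
  set J' := fun x => ∫ y in Eᶜ, h y • wK' E φ x y with hJ'
  set I' := fun x => ∫ y in Eᶜ, (1:ℝ) • wK' E φ x y with hI'
  have hC := hφ.Cpos
  have hIpos : ∀ x ∉ E, 0 < I x := by
    intro x hx
    refine lt_of_lt_of_le ?_ (wI_ge hE hne hφ x hx)
    have hx0 : 0 < infDist x E := (hE.notMem_iff_infDist_pos hne).1 hx
    have : 0 < volume.real (ball x (infDist x E)) :=
      ENNReal.toReal_pos (measure_ball_pos _ _ hx0).ne' measure_ball_lt_top.ne
    positivity
  have hJd := fun x hx => wI_deriv hE hne hφ hm hM x hx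
  have hId := fun x hx => wI_deriv (h := fun _ => 1) (M := 1) hE hne hφ
    measurable_const (by simp) x hx
  refine ⟨fun x => J x • (-(I x ^ 2)⁻¹ • I' x) + (I x)⁻¹ • J' x, fun x hx => ?_, fun x hx => ?_,
    fun x hx s hs0 hs => ?_⟩
  · have h1 : HasFDerivAt (fun x => (I x)⁻¹) (-(I x ^ 2)⁻¹ • I' x) x :=
      (hasDerivAt_inv (hIpos x hx).ne').comp_hasFDerivAt x (hId x hx).1
    exact (hJd x hx).1.mul h1
  · have a1 : ContinuousAt J x := (hJd x hx).1.continuousAt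
    have a2 : ContinuousAt I x := (hId x hx).1.continuousAt
    have a3 : ContinuousAt J' x := (hJd x hx).2
    have a4 : ContinuousAt I' x := (hId x hx).2
    have ne := (hIpos x hx).ne'
    exact (a1.smul (((a2.pow 2).inv₀ (pow_ne_zero 2 ne)).neg.smul a4)).add ((a2.inv₀ ne).smul a3)
  · have hp := hIpos x hx
    have hx0 : 0 < infDist x E := (hE.notMem_iff_infDist_pos hne).1 hx
    have b1 : |J x| ≤ s * I x := wI_le hE hne hφ x hs
    have b2 := wI_ge hE hne hφ x hx
    have b3 : ‖J' x‖ ≤ _ := wI'_le hE hne hφ hs0 x hx hs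
    have b4 : ‖I' x‖ ≤ _ := wI'_le (h := fun _ => 1) (s := 1) hE hne hφ zero_le_one x hx (by simp)
    have b5 : volume.real (ball x (infDist x E)) ≤ 5 ^ d * I x := by
      rwa [inv_mul_le_iff₀ (by positivity)] at b2
    set V := volume.real (ball x (infDist x E))
    set D := infDist x E
    have b6 : 3/2 * C / D * V ≤ 3/2 * C / D * (5 ^ d * I x) := by gcongr
    constructor
    · rw [abs_mul, abs_inv, abs_of_pos hp, ← div_eq_mul_inv, div_le_iff₀ hp]
      exact b1
    · calc _ ≤ |J x| * ((I x ^ 2)⁻¹ * ‖I' x‖) + (I x)⁻¹ * ‖J' x‖ := by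
            refine (norm_add_le _ _).trans (le_of_eq ?_)
            rw [norm_smul, norm_smul, norm_smul, norm_neg, norm_inv, norm_inv, norm_pow,
              Real.norm_of_nonneg hp.le, Real.norm_eq_abs]
        _ ≤ (s * I x) * ((I x ^ 2)⁻¹ * (3/2 * C / D * (5 ^ d * I x))) +
            (I x)⁻¹ * (s * (3/2 * C / D * (5 ^ d * I x))) := by
            gcongr
            · exact b4.trans (by rw [one_mul]; exact b6)
            · exact b3.trans (by gcongr)
        _ = _ := by field_simp; ring

end

/-- A simple version of the Whitney Extension Theorem: if `f : E → ℝ` on a compact set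
`E ⊆ ℝ^d` satisfies `|f x - f y| = o(|x - y|)` uniformly, then `f` extends to a `C¹`
function `F : ℝ^d → ℝ` whose derivative vanishes at every point of `E`. -/
theorem whitney_extension_flat
    (d : ℕ) (E : Set (EuclideanSpace ℝ (Fin d))) (hE : IsCompact E)
    (f : EuclideanSpace ℝ (Fin d) → ℝ)
    (hf : ∀ ε > (0 : ℝ), ∃ δ > (0 : ℝ), ∀ x ∈ E, ∀ y ∈ E,
      0 < ‖x - y‖ → ‖x - y‖ < δ → |f x - f y| / ‖x - y‖ < ε) :
    ∃ F : EuclideanSpace ℝ (Fin d) → ℝ,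
      ContDiff ℝ 1 F ∧ (∀ x ∈ E, F x = f x) ∧ (∀ x ∈ E, fderiv ℝ F x = 0) := by
  classical
  rcases E.eq_empty_or_nonempty with rfl | hne
  · exact ⟨fun _ => 0, contDiff_const, by simp, by simp⟩
  have hc := hE.isClosed
  have hf' : ∀ ε > (0 : ℝ), ∃ δ > (0 : ℝ), ∀ x ∈ E, ∀ y ∈ E,
      dist x y < δ → |f x - f y| ≤ ε * dist x y := by
    intro ε hε
    obtain ⟨δ, hδ, H⟩ := hf ε hε
    refine ⟨δ, hδ, fun x hx y hy hxy => ?_⟩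
    rcases eq_or_ne x y with rfl | hn
    · simp
    have hpos : 0 < ‖x - y‖ := norm_pos_iff.2 (sub_ne_zero.2 hn)
    rw [dist_eq_norm] at hxy ⊢
    exact ((div_lt_iff₀ hpos).1 (H x hx y hy hpos hxy)).le
  have hcont : ContinuousOn f E := by
    rw [Metric.continuousOn_iff]
    intro a ha ε hε
    obtain ⟨δ, hδ, H⟩ := hf' 1 one_pos
    refine ⟨min δ ε, by positivity, fun x hx hxa => ?_⟩
    have := H x hx a ha (hxa.trans_le (min_le_left _ _))
    rw [Real.dist_eq]
    linarith [hxa.trans_le (min_le_right _ _)]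
  obtain ⟨M, hM⟩ := hE.exists_bound_of_continuousOn hcont
  obtain ⟨φ, C, hφ⟩ := exists_wbump d
  have hC := hφ.Cpos
  obtain ⟨h, hm, hval, hnear⟩ := exists_wh hc hne f
  have hhM : ∀ y, |h y| ≤ M := by
    intro y
    obtain ⟨z, hz, e⟩ := hval y
    rw [e]; exact hM z hz
  let Q : EuclideanSpace ℝ (Fin d) → ℝ := fun x =>
    (∫ y in Eᶜ, h y * wK E φ x y) * (∫ y in Eᶜ, 1 * wK E φ x y)⁻¹
  obtain ⟨G', hG1, hG2, -⟩ := wQ hc hne hφ hm hhM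
  let F : EuclideanSpace ℝ (Fin d) → ℝ := fun x => if x ∈ E then f x else Q x
  have hFE : ∀ x ∈ E, F x = f x := fun x hx => if_pos hx
  have hFQ : ∀ x ∉ E, F =ᶠ[𝓝 x] Q := by
    intro x hx
    filter_upwards [hc.isOpen_compl.mem_nhds hx] with y hy
    exact if_neg hy
  have hFd : ∀ x ∉ E, HasFDerivAt F (G' x) x := fun x hx =>
    (hG1 x hx).congr_of_eventuallyEq (hFQ x hx)
  -- shifted identity
  have key : ∀ x ∉ E, ∀ c s : ℝ, 0 ≤ s → (∀ y ∈ ball x (infDist x E), y ∉ E → |h y - c| ≤ s) →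
      |F x - c| ≤ s ∧ ‖G' x‖ ≤ 3 * C * 5 ^ d * s / infDist x E := by
    intro x hx c s hs0 hs
    obtain ⟨H', hH1, -, hH3⟩ := wQ hc hne hφ (h := fun y => h y - c) (hm.sub measurable_const)
      (M := M + |c|) (fun y => (abs_sub _ _).trans (by linarith [hhM y]))
    obtain ⟨e1, e2⟩ := hH3 x hx s hs0 hs
    have heq : ∀ x ∉ E, (∫ y in Eᶜ, (h y - c) * wK E φ x y) * (∫ y in Eᶜ, 1 * wK E φ x y)⁻¹ =
        F x - c := by
      intro x hx
      have i1 := wI_int hc hne hφ hm hhM x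
      have i2 := wI_int (h := fun _ => 1) (M := 1) hc hne hφ measurable_const (by simp) x
      have hpos : 0 < ∫ y in Eᶜ, 1 * wK E φ x y := by
        refine lt_of_lt_of_le ?_ (wI_ge hc hne hφ x hx)
        have hx0 : 0 < infDist x E := (hc.notMem_iff_infDist_pos hne).1 hx
        have : 0 < volume.real (ball x (infDist x E)) :=
          ENNReal.toReal_pos (measure_ball_pos _ _ hx0).ne' measure_ball_lt_top.ne
        positivity
      have : ∫ y in Eᶜ, (h y - c) * wK E φ x y =
          (∫ y in Eᶜ, h y * wK E φ x y) - c * ∫ y in Eᶜ, 1 * wK E φ x y := by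
        rw [← integral_const_mul, ← integral_sub i1 (i2.const_mul c)]
        congr 1; ext y; ring
      rw [this, sub_mul, mul_assoc, mul_inv_cancel₀ hpos.ne', mul_one]
      simp only [F, if_neg hx, Q]
    rw [heq x hx] at e1
    refine ⟨e1, ?_⟩
    have : HasFDerivAt (fun x => F x - c) (H' x) x := by
      refine (hH1 x hx).congr_of_eventuallyEq ?_
      filter_upwards [hc.isOpen_compl.mem_nhds hx] with y hy
      exact (heq y hy).symm
    rw [((hFd x hx).sub_const c).unique this]
    exact e2
  have key2 : ∀ ε > 0, ∃ δ > 0, ∀ x ∉ E, infDist x E < δ → ∀ p ∈ E, infDist x E = dist x p →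
      |F x - f p| ≤ ε * infDist x E ∧ ‖G' x‖ ≤ 3 * C * 5 ^ d * ε := by
    intro ε hε
    obtain ⟨δ, hδ, H⟩ := hf' (ε / 6) (by positivity)
    refine ⟨δ / 6, by positivity, fun x hx hxd p hp hxp => ?_⟩
    have hx0 : 0 < infDist x E := (hc.notMem_iff_infDist_pos hne).1 hx
    obtain ⟨k1, k2⟩ := key x hx (f p) (ε * infDist x E) (by positivity) (by
      intro y hy hyE
      obtain ⟨z, hz, e, hd⟩ := hnear y hyE
      rw [mem_ball] at hy
      have t1 := infDist_le_infDist_add_dist (s := E) (x := y) (y := x)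
      have t2 := dist_triangle4 z y x p
      rw [dist_comm z y] at t2
      have t3 : dist z p ≤ 6 * infDist x E := by linarith
      rw [e]
      refine (H z hz p hp (by linarith)).trans ?_
      calc ε / 6 * dist z p ≤ ε / 6 * (6 * infDist x E) := by gcongr
        _ = _ := by ring)
    refine ⟨k1, k2.trans (le_of_eq ?_)⟩
    field_simp
  have hFd0 : ∀ a ∈ E, HasFDerivAt F (0 : EuclideanSpace ℝ (Fin d) →L[ℝ] ℝ) a := by
    intro a ha
    rw [hasFDerivAt_iff_isLittleO, Asymptotics.isLittleO_iff]
    intro ε hε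
    obtain ⟨δ₁, hδ₁, H1⟩ := hf' (ε / 3) (by positivity)
    obtain ⟨δ₂, hδ₂, H2⟩ := key2 (ε / 3) (by positivity)
    filter_upwards [ball_mem_nhds a (by positivity : 0 < min (δ₁ / 2) δ₂)] with x hx
    rw [mem_ball, lt_min_iff] at hx
    simp only [ContinuousLinearMap.zero_apply, sub_zero, Real.norm_eq_abs]
    rw [← dist_eq_norm, hFE a ha]
    have hdn : 0 ≤ dist x a := dist_nonneg
    by_cases hxE : x ∈ E
    · rw [hFE x hxE]
      refine (H1 x hxE a ha (by linarith)).trans ?_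
      gcongr; linarith
    · obtain ⟨p, hp, hxp⟩ := hE.exists_infDist_eq_dist hne x
      have hle : infDist x E ≤ dist x a := infDist_le_dist_of_mem ha
      have k := (H2 x hxE (by linarith) p hp hxp).1
      have t := dist_triangle p x a
      rw [dist_comm p x] at t
      have k' := H1 p hp a ha (by linarith)
      have t2 := abs_sub_le (F x) (f p) (f a)
      have u1 : ε / 3 * infDist x E ≤ ε / 3 * dist x a := by gcongr
      have u2 : ε / 3 * dist p a ≤ ε / 3 * (2 * dist x a) := by gcongr; linarith
      linarith
  refine ⟨F, contDiff_one_iff_fderiv.2 ⟨fun x => ?_, continuous_iff_continuousAt.2 fun x => ?_⟩,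
    hFE, fun x hx => (hFd0 x hx).fderiv⟩
  · by_cases hx : x ∈ E
    · exact (hFd0 x hx).differentiableAt
    · exact (hFd x hx).differentiableAt
  · by_cases hx : x ∈ E
    · rw [Metric.continuousAt_iff]
      intro ε hε
      have hA : 0 < 3 * C * 5 ^ d := by positivity
      obtain ⟨δ, hδ, H⟩ := key2 (ε / 2 / (3 * C * 5 ^ d)) (by positivity)
      refine ⟨δ, hδ, fun {y} hy => ?_⟩
      rw [(hFd0 x hx).fderiv, dist_zero_right]
      by_cases hyE : y ∈ E
      · rw [(hFd0 y hyE).fderiv, norm_zero]; exact hε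
      · rw [(hFd y hyE).fderiv]
        obtain ⟨p, hp, hyp⟩ := hE.exists_infDist_eq_dist hne y
        have k := (H y hyE ((infDist_le_dist_of_mem hx).trans_lt hy) p hp hyp).2
        rw [mul_div_cancel₀ _ hA.ne'] at k
        linarith
    · refine (hG2 x hx).congr_of_eventuallyEq ?_
      filter_upwards [hc.isOpen_compl.mem_nhds hx] with y hy
      exact (hFd y hy).fderiv
end
end

section
/- Let φ_1, …, φ_N be contractive similitudes on ℝ^d, let C = C_1 ∪ ⋯ ∪ C_m (m ≥ 2) be a union of pairwise disjoint nonempty compact connected sets C_j, and let K be the attractor of the IFS with condensation {C; φ_1, …, φ_N}. Suppose there exist points a, b ∈ K and a_j, b_j ∈ C_j (1 ≤ j ≤ m) such that (K,{a,b}) = A_1 + ⋯ + A_{m+N} is a zipper decomposition, where A_1, …, A_{m+N} is a rearrangement of the buttons (C_1,{a_1,b_1}), …, (C_m,{a_m,b_m}), (φ_1(K),{φ_1(a),φ_1(b)}), …, (φ_N(K),{φ_N(a),φ_N(b)}). Then K is connected. -/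
open Set MeasureTheory

noncomputable section

/-- The attractor of a linear IFS with condensation is connected. -/
theorem linear_ifs_with_condensation_attractor_connected
    (d N m : ℕ) (hm : 2 ≤ m)
    -- the contractive similitudes φ_1, …, φ_N
    (φ : Fin N → EuclideanSpace ℝ (Fin d) → EuclideanSpace ℝ (Fin d))
    (ρ : Fin N → ℝ) (hρ : ∀ i, ρ i ∈ Set.Ioo (0 : ℝ) 1)
    (hsim : ∀ i x y, dist (φ i x) (φ i y) = ρ i * dist x y)
    -- the condensation set C = C_1 ∪ ⋯ ∪ C_m, a disjoint union of nonempty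
    -- compact connected sets
    (C : Fin m → Set (EuclideanSpace ℝ (Fin d)))
    (hCcomp : ∀ j, IsCompact (C j)) (hCconn : ∀ j, IsConnected (C j))
    (hCdisj : Pairwise fun j j' => Disjoint (C j) (C j'))
    -- K is the attractor of the IFS with condensation {C; φ_1, …, φ_N}
    (K : Set (EuclideanSpace ℝ (Fin d)))
    (hKne : K.Nonempty) (hKcomp : IsCompact K)
    (hK : K = (⋃ j, C j) ∪ ⋃ i, φ i '' K)
    -- the endpoints a, b ∈ K and a_j, b_j ∈ C_j
    (a b : EuclideanSpace ℝ (Fin d)) (ha : a ∈ K) (hb : b ∈ K)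
    (ca cb : Fin m → EuclideanSpace ℝ (Fin d))
    (hca : ∀ j, ca j ∈ C j) (hcb : ∀ j, cb j ∈ C j)
    -- (K,{a,b}) = A_1 + ⋯ + A_{m+N} is a zipper decomposition, where the buttons
    -- A_ℓ are a rearrangement (via σ) of (C_j,{a_j,b_j}) and (φ_i(K),{φ_i(a),φ_i(b)})
    (A : Fin (m + N) → Set (EuclideanSpace ℝ (Fin d)))
    (p q : Fin (m + N) → EuclideanSpace ℝ (Fin d))
    (σ : Fin (m + N) ≃ (Fin m ⊕ Fin N))
    (hrearr : ∀ ℓ : Fin (m + N),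
      Sum.elim
        (fun j => A ℓ = C j ∧ ({p ℓ, q ℓ} : Set (EuclideanSpace ℝ (Fin d))) = {ca j, cb j})
        (fun i => A ℓ = φ i '' K ∧ ({p ℓ, q ℓ} : Set (EuclideanSpace ℝ (Fin d))) = {φ i a, φ i b})
        (σ ℓ))
    (hzip : IsZipperDecomp K a b A p q) :
    IsConnected K := by
  obtain ⟨r, hr0, hr1, hr⟩ : ∃ r : ℝ, 0 < r ∧ r < 1 ∧ ∀ i, ρ i ≤ r := by
    have h1 : ∀ᶠ r in nhdsWithin (1 : ℝ) (Set.Iio 1), ∀ i, ρ i ≤ r := by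
      rw [Filter.eventually_all]
      intro i
      filter_upwards [Ioo_mem_nhdsLT (hρ i).2] with r hr using hr.1.le
    have h2 : ∀ᶠ r in nhdsWithin (1 : ℝ) (Set.Iio 1), r ∈ Set.Ioo (0 : ℝ) 1 :=
      Ioo_mem_nhdsLT one_pos
    obtain ⟨r, h, h'⟩ := (h1.and h2).exists
    exact ⟨r, h'.1, h'.2, h⟩
  obtain ⟨hZ, hA, -, -, hadj, -⟩ := hzip
  -- scale induction: every function constant at scale `δ` is constant on `K`
  have key : ∀ n : ℕ, ∀ f : EuclideanSpace ℝ (Fin d) → Bool, ∀ δ : ℝ, 0 < δ →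
      Metric.diam K * r ^ n < δ → (∀ x ∈ K, ∀ y ∈ K, dist x y < δ → f x = f y) →
      ∀ x ∈ K, ∀ y ∈ K, f x = f y := by
    intro n
    induction n with
    | zero =>
      intro f δ _ hD hf x hx y hy
      apply hf x hx y hy
      have := Metric.dist_le_diam_of_mem hKcomp.isBounded hx hy
      simp at hD
      linarith
    | succ n ih =>
      intro f δ hδ hD hf
      have hpiece : ∀ ℓ, ∀ x ∈ A ℓ, ∀ y ∈ A ℓ, f x = f y := by
        intro ℓ
        have hAK := (hA ℓ).2.1
        have h := hrearr ℓ
        rcases hs : σ ℓ with j | i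
        · rw [hs] at h
          have hAC : A ℓ = C j := h.1
          have hconn : IsPreconnected (A ℓ) := hAC ▸ (hCconn j).isPreconnected
          have hcont : ContinuousOn f (A ℓ) := by
            intro x hx
            have hev : f =ᶠ[nhdsWithin x (A ℓ)] fun _ => f x := by
              filter_upwards [self_mem_nhdsWithin,
                mem_nhdsWithin_of_mem_nhds (Metric.ball_mem_nhds x hδ)] with y hy hy'
              exact hf y (hAK hy) x (hAK hx) hy'
            exact (continuousWithinAt_const (b := f x)).congr_of_eventuallyEq hev rfl
          intro x hx y hy
          exact hconn.constant hcont hx hy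
        · rw [hs] at h
          have hAi : A ℓ = φ i '' K := h.1
          have hi := hρ i
          have hg := ih (f ∘ φ i) (δ / ρ i) (div_pos hδ hi.1) (by
            rw [lt_div_iff₀ hi.1]
            refine lt_of_le_of_lt ?_ hD
            rw [pow_succ, ← mul_assoc]
            exact mul_le_mul_of_nonneg_left (hr i)
              (mul_nonneg Metric.diam_nonneg (pow_nonneg hr0.le n))) (by
            intro x hx y hy hxy
            apply hf _ (hAK (hAi ▸ mem_image_of_mem _ hx)) _ (hAK (hAi ▸ mem_image_of_mem _ hy))
            rw [hsim, mul_comm]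
            exact (lt_div_iff₀ hi.1).1 hxy)
          rw [hAi]
          rintro _ ⟨x, hx, rfl⟩ _ ⟨y, hy, rfl⟩
          exact hg x hx y hy
      have h0 : 0 < m + N := by omega
      have hall : ∀ k : ℕ, ∀ hk : k < m + N, ∀ x ∈ A ⟨k, hk⟩, f x = f (p ⟨0, h0⟩) := by
        intro k
        induction k with
        | zero => intro hk x hx; exact hpiece _ x hx _ (hA _).2.2.1
        | succ k ihk =>
          intro hk x hx
          have hk' : k < m + N := by omega
          have hq := (hadj ⟨k, hk'⟩ ⟨k + 1, hk⟩ rfl).1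
          rw [hpiece _ x hx _ (hA ⟨k + 1, hk⟩).2.2.1, ← hq]
          exact ihk hk' _ (hA ⟨k, hk'⟩).2.2.2
      intro x hx y hy
      rw [hZ] at hx hy
      obtain ⟨l, hl⟩ := mem_iUnion.1 hx
      obtain ⟨l', hl'⟩ := mem_iUnion.1 hy
      rw [hall l.1 l.2 x hl, hall l'.1 l'.2 y hl']
  refine ⟨hKne, isPreconnected_of_forall_constant ?_⟩
  intro f hf
  let g : EuclideanSpace ℝ (Fin d) → ℝ := fun x => if f x then 1 else 0
  have hg : ContinuousOn g K :=
    (continuous_of_discreteTopology (f := fun t : Bool => if t then (1 : ℝ) else 0)).comp_continuousOn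
      hf
  have hu := hKcomp.uniformContinuousOn_of_continuous hg
  obtain ⟨δ, hδ, hd⟩ := Metric.uniformContinuousOn_iff.1 hu 1 one_pos
  have hlim : Filter.Tendsto (fun n : ℕ => Metric.diam K * r ^ n) Filter.atTop (nhds 0) := by
    simpa using (tendsto_pow_atTop_nhds_zero_of_lt_one hr0.le hr1).const_mul (Metric.diam K)
  obtain ⟨n, hn⟩ := (hlim.eventually_lt_const hδ).exists
  refine key n f δ hδ hn ?_
  intro x hx y hy hxy
  have := hd x hx y hy hxy
  cases hfx : f x <;> cases hfy : f y <;> simp [g, hfx, hfy] at this ⊢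
end
end
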